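/- Let 0 < θ_1 < θ_2 < π and let f : ℝ → ℝ be the even, 2π-periodic function equal to +1 on [0, θ_1), −1 on (θ_1, θ_2), and +1 on (θ_2, π], with Fourier coefficients f_n = (1/2π)∫_0^{2π} f(θ)e^{−inθ}dθ. Then as N → ∞, det (f_{j−k−1})_{j,k=0}^{N−1} = (−1)^N · N^{−1} · 2^{1/3} e^{12ζ′(−1)} · ( √(sin θ_2 / sin θ_1) · 2cos(N θ_1) + √(sin θ_1 / sin θ_2) · 2cos(N θ_2) ) + o(N^{−1}). (This is the correlator ⟨σ^x_0 σ^x_N⟩ for a translation-invariant chain whose dispersion has exactly two Fermi points θ_1, θ_2 in (0,π).) -/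

import Mathlib

/-!
The correlator `⟨σ^x_0 σ^x_N⟩` for a translation-invariant chain whose dispersion has
exactly two Fermi points `θ_1, θ_2` in `(0,π)`:
`det(f_{j−k−1}) = (−1)^N N^{−1} 2^{1/3} e^{12ζ′(−1)}
  (√(sinθ_2/sinθ_1)·2cos(Nθ_1) + √(sinθ_1/sinθ_2)·2cos(Nθ_2)) + o(N^{−1})`.
-/

noncomputable section

/-- The `n`-th Fourier coefficient `f_n = (1/2π) ∫_0^{2π} f(θ) e^{−inθ} dθ`. -/
def fourierCoef (f : ℝ → ℝ) (n : ℤ) : ℂ :=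
  (1 / (2 * Real.pi) : ℂ) *
    ∫ t in (0 : ℝ)..(2 * Real.pi), (f t : ℂ) * Complex.exp (-Complex.I * (n : ℂ) * (t : ℂ))

/-!
The symbol of `f_{j-k-1}` is `z f(z)` with four jumps, at `e^{±iθ₁}` and `e^{±iθ₂}`. Up to sign, the
determinant is a corner minor of the matrix `A = (f_{j-k-2})` of size `N + 1`, hence the product of
`det A` and a corner entry of `A⁻¹`. Comparing `A D - D A`, with `D = diag(0, …, N)`, to the
derivative of the symbol writes this entry as a sum over the jumps `z_k` of `z_k^{-N}` times the
square of the value at `z_k` of the polynomial given by the first column of `A⁻¹`.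

When the jumps move, these values, their dual values, the diagonal values of the Christoffel–Darboux
kernel and `det A` satisfy a closed system of differential equations in which `N` occurs only
through the phases `(z_k / z_i)^{N+1}`. As `N → ∞` these average out, and the averaged system has an
explicit solution. It remains to find the limit for one position of the jumps. For jumps at the
vertices of a square, a permutation of the indices splits `A` into Cauchy matrices; the determinant
is then a product of partial Wallis products, and the derivative of the Dirichlet eta function at
`-1` gives its asymptotics, with the constant `2^{1/3} e^{12ζ′(-1)}`.
-/

/-! ### Toeplitz matrices -/

namespace FisherHartwig

open Matrix

section InverseForm

variable {R n : Type*} [CommRing R] [Fintype n] [DecidableEq n]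

/-- The bilinear form `(p, q) ↦ pᵀ A⁻¹ q` of the inverse of a matrix. -/
def invForm (A : Matrix n n R) : LinearMap.BilinForm R (n → R) := Matrix.toBilin' A⁻¹

lemma invForm_apply (A : Matrix n n R) (p q : n → R) : invForm A p q = p ⬝ᵥ (A⁻¹ *ᵥ q) :=
  Matrix.toBilin'_apply' _ _ _

lemma invForm_single_single (A : Matrix n n R) (i j : n) :
    invForm A (Pi.single i 1) (Pi.single j 1) = A⁻¹ i j :=
  Matrix.toBilin'_single _ _ _

lemma invForm_vecMul_sub_mulVec {A : Matrix n n R} (hA : IsUnit A.det) (X : Matrix n n R)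
    (p q : n → R) :
    invForm A (p ᵥ* X) q - invForm A p (X *ᵥ q) =
      p ⬝ᵥ ((A⁻¹ * (A * X - X * A) * A⁻¹) *ᵥ q) := by
  have commutator : A⁻¹ * (A * X - X * A) * A⁻¹ = X * A⁻¹ - A⁻¹ * X := by
    rw [mul_sub, sub_mul, nonsing_inv_mul_cancel_left _ _ hA, ← mul_assoc,
      mul_nonsing_inv_cancel_right _ _ hA]
  rw [commutator, sub_mulVec, dotProduct_sub, invForm_apply, invForm_apply, ← mulVec_mulVec,
    ← mulVec_mulVec, dotProduct_mulVec p X]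

lemma dotProduct_inv_mul_vecMulVec_mul_inv (A : Matrix n n R) (x y p q : n → R) :
    p ⬝ᵥ ((A⁻¹ * vecMulVec x y * A⁻¹) *ᵥ q) = invForm A p x * invForm A y q := by
  rw [← mulVec_mulVec, ← mulVec_mulVec, vecMulVec_mulVec, mulVec_smul, dotProduct_smul]
  simp [invForm_apply]

lemma dotProduct_inv_mul_sum_vecMulVec_mul_inv {ι : Type*} [Fintype ι] (A : Matrix n n R)
    (c : ι → R) (x y : ι → n → R) (p q : n → R) :
    p ⬝ᵥ ((A⁻¹ * (∑ k, c k • vecMulVec (x k) (y k)) * A⁻¹) *ᵥ q) =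
      ∑ k, c k * (invForm A p (x k) * invForm A (y k) q) := by
  simp_rw [← dotProduct_inv_mul_vecMulVec_mul_inv, Finset.mul_sum, Finset.sum_mul, sum_mulVec,
    dotProduct_sum, mul_smul_comm, smul_mul_assoc, smul_mulVec, dotProduct_smul, smul_eq_mul]

end InverseForm

section Toeplitz

variable {R : Type*} {m : ℕ}

/-- The Toeplitz matrix `(a_{j-k})` of size `m`. -/
def toeplitz (a : ℤ → R) (m : ℕ) : Matrix (Fin m) (Fin m) R :=
  Matrix.of fun j k => a ((j : ℤ) - (k : ℤ))

lemma toeplitz_submatrix_rev (a : ℤ → R) :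
    (toeplitz a m).submatrix Fin.revPerm Fin.revPerm = (toeplitz a m)ᵀ := by
  ext i j
  simp only [toeplitz, submatrix_apply, of_apply, transpose_apply, Fin.revPerm_apply, Fin.val_rev]
  congr 1
  omega

variable [CommRing R]

/-- The vector `(1, z, z², …, z^{m-1})`. -/
def powVec (m : ℕ) (z : R) : Fin m → R := fun j => z ^ (j : ℕ)

/-- The matrix of the shift `e_k ↦ e_{k+1}`, with `e_{m-1} ↦ 0`. -/
def shiftMatrix (m : ℕ) : Matrix (Fin m) (Fin m) R :=
  Matrix.of fun j k => if (j : ℕ) = k + 1 then 1 else 0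

/-- The diagonal matrix with entries `0, 1, …, m-1`; it acts on `powVec m z` as `z d/dz`. -/
def degreeMatrix (m : ℕ) : Matrix (Fin m) (Fin m) R := diagonal fun j => ((j : ℕ) : R)

lemma powVec_mul (z w : R) : powVec m (z * w) = powVec m z * powVec m w :=
  funext fun _ => mul_pow _ _ _

lemma powVec_mul_single_zero (N : ℕ) (z : R) :
    powVec (N + 1) z * Pi.single 0 1 = (Pi.single 0 1 : Fin (N + 1) → R) := by
  ext j
  rcases eq_or_ne j 0 with rfl | hj
  · simp [powVec]
  · simp [hj]

lemma invForm_toeplitz_comp_rev (a : ℤ → R) (p q : Fin m → R) :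
    invForm (toeplitz a m) (p ∘ Fin.rev) (q ∘ Fin.rev) = invForm (toeplitz a m) q p := by
  set A := toeplitz a m
  have inv_submatrix : A⁻¹.submatrix Fin.revPerm Fin.revPerm = A⁻¹ᵀ := by
    rw [← inv_submatrix_equiv, toeplitz_submatrix_rev, transpose_nonsing_inv]
  calc invForm A (p ∘ Fin.rev) (q ∘ Fin.rev)
      = p ⬝ᵥ (A⁻¹.submatrix Fin.revPerm Fin.revPerm *ᵥ q) := by
        rw [submatrix_mulVec_equiv, invForm_apply]
        exact (dotProduct_comp_equiv_symm p _ Fin.revPerm.symm).symm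
    _ = invForm A q p := by
        rw [inv_submatrix, mulVec_transpose, dotProduct_comm, ← dotProduct_mulVec, invForm_apply]

lemma single_last_eq_comp_rev (N : ℕ) :
    (Pi.single (Fin.last N) 1 : Fin (N + 1) → R) = Pi.single 0 1 ∘ Fin.rev := by
  ext j
  simp [Pi.single_apply, Fin.rev_eq_iff]

lemma vecMul_shiftMatrix (N : ℕ) (p : Fin (N + 1) → R) (k : Fin (N + 1)) :
    (p ᵥ* shiftMatrix (N + 1)) k = if h : (k : ℕ) + 1 < N + 1 then p ⟨k + 1, h⟩ else 0 := by
  simp only [vecMul, dotProduct, shiftMatrix, of_apply, mul_ite, mul_one, mul_zero]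
  split_ifs with h
  · rw [Finset.sum_eq_single ⟨k + 1, h⟩]
    · exact if_pos rfl
    · exact fun b _ hb => if_neg fun hj => hb (Fin.ext hj)
    · simp
  · exact Finset.sum_eq_zero fun b _ => if_neg (by omega)

lemma shiftMatrix_mulVec (N : ℕ) (p : Fin (N + 1) → R) (j : Fin (N + 1)) :
    (shiftMatrix (N + 1) *ᵥ p) j = if h : 0 < (j : ℕ) then p ⟨j - 1, by omega⟩ else 0 := by
  simp only [mulVec, dotProduct, shiftMatrix, of_apply, ite_mul, one_mul, zero_mul]
  split_ifs with h
  · rw [Finset.sum_eq_single ⟨j - 1, by omega⟩]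
    · exact if_pos (by simp only; omega)
    · exact fun b _ hb => if_neg fun hj => hb (Fin.ext (by simp only; omega))
    · simp
  · exact Finset.sum_eq_zero fun b _ => if_neg (by omega)

lemma powVec_vecMul_shiftMatrix (N : ℕ) (z : R) :
    powVec (N + 1) z ᵥ* shiftMatrix (N + 1) =
      z • powVec (N + 1) z - z ^ (N + 1) • Pi.single (Fin.last N) 1 := by
  ext k
  rw [vecMul_shiftMatrix]
  simp only [powVec, Pi.sub_apply, Pi.smul_apply, smul_eq_mul, Pi.single_apply, Fin.ext_iff,
    Fin.val_last]
  split_ifs with h h2 h2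
  · omega
  · ring
  · rw [h2]; ring
  · omega

lemma single_zero_vecMul_shiftMatrix (N : ℕ) :
    (Pi.single 0 1 : Fin (N + 1) → R) ᵥ* shiftMatrix (N + 1) = 0 := by
  ext k
  rw [vecMul_shiftMatrix]
  split_ifs with h
  · exact Pi.single_eq_of_ne (Fin.ne_of_val_ne (Nat.succ_ne_zero _)) _
  · rfl

lemma shiftMatrix_mulVec_single_last (N : ℕ) :
    shiftMatrix (N + 1) *ᵥ (Pi.single (Fin.last N) 1 : Fin (N + 1) → R) = 0 := by
  ext k
  rw [shiftMatrix_mulVec]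
  split_ifs with h
  · simp only [Pi.single_apply, Fin.ext_iff, Fin.val_last, Pi.zero_apply]
    exact if_neg (by omega)
  · rfl

lemma toeplitz_commutator_shiftMatrix (a : ℤ → R) (N : ℕ) :
    toeplitz a (N + 1) * shiftMatrix (N + 1) - shiftMatrix (N + 1) * toeplitz a (N + 1) =
      vecMulVec (Pi.single 0 1) (fun k : Fin (N + 1) => a (-(k : ℤ) - 1)) -
        vecMulVec (fun j : Fin (N + 1) => a ((j : ℤ) - 1 - N)) (Pi.single (Fin.last N) 1) := by
  ext j k
  have left_entry : (toeplitz a (N + 1) * shiftMatrix (N + 1) : Matrix _ _ R) j k =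
      (toeplitz a (N + 1) j ᵥ* shiftMatrix (N + 1)) k := rfl
  have right_entry : (shiftMatrix (N + 1) * toeplitz a (N + 1) : Matrix _ _ R) j k =
      (shiftMatrix (N + 1) *ᵥ fun l => toeplitz a (N + 1) l k) j := rfl
  rw [Matrix.sub_apply, left_entry, right_entry, vecMul_shiftMatrix, shiftMatrix_mulVec,
    Matrix.sub_apply, vecMulVec_apply, vecMulVec_apply]
  simp only [toeplitz, of_apply, Pi.single_apply, Fin.ext_iff, Fin.val_last, Fin.val_zero]
  split_ifs <;> first | omega | simp only [Nat.cast_add, Nat.cast_one, zero_mul, mul_zero, one_mul,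
    mul_one, sub_self, sub_zero, zero_sub, neg_inj]
  · rw [sub_eq_zero]; congr 1; omega
  · congr 1; omega
  · congr 1; omega
  · rw [eq_comm, sub_eq_zero]; congr 1; omega

lemma invForm_toeplitz_shift (a : ℤ → R) (N : ℕ) (hA : IsUnit (toeplitz a (N + 1)).det)
    (p q : Fin (N + 1) → R) :
    invForm (toeplitz a (N + 1)) (p ᵥ* shiftMatrix (N + 1)) q
        - invForm (toeplitz a (N + 1)) p (shiftMatrix (N + 1) *ᵥ q) =
      invForm (toeplitz a (N + 1)) p (Pi.single 0 1)
          * invForm (toeplitz a (N + 1)) (fun k => a (-(k : ℤ) - 1)) q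
        - invForm (toeplitz a (N + 1)) p (fun j => a ((j : ℤ) - 1 - N))
          * invForm (toeplitz a (N + 1)) (Pi.single (Fin.last N) 1) q := by
  rw [invForm_vecMul_sub_mulVec hA, toeplitz_commutator_shiftMatrix, mul_sub, sub_mul, sub_mulVec,
    dotProduct_sub, dotProduct_inv_mul_vecMulVec_mul_inv, dotProduct_inv_mul_vecMulVec_mul_inv]

lemma degreeMatrix_mulVec_apply (q : Fin m → R) (j : Fin m) :
    (degreeMatrix m *ᵥ q) j = ((j : ℕ) : R) * q j := by
  simp [degreeMatrix, mulVec_diagonal]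

lemma vecMul_degreeMatrix (p : Fin m → R) : p ᵥ* degreeMatrix m = degreeMatrix m *ᵥ p := by
  ext j
  simp [degreeMatrix, vecMul_diagonal, mulVec_diagonal, mul_comm]

lemma degreeMatrix_mulVec_single (j : Fin m) :
    degreeMatrix m *ᵥ (Pi.single j 1 : Fin m → R) = ((j : ℕ) : R) • Pi.single j 1 := by
  ext i
  by_cases h : i = j <;> simp [degreeMatrix_mulVec_apply, h]

end Toeplitz

section ToeplitzField

variable {K : Type*} [Field K] {m : ℕ}

lemma powVec_inv_eq_comp_rev (N : ℕ) {z : K} (hz : z ≠ 0) :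
    powVec (N + 1) z⁻¹ = (z ^ N)⁻¹ • (powVec (N + 1) z ∘ Fin.rev) := by
  ext j
  have split_pow : z ^ N = z ^ (N + 1 - ((j : ℕ) + 1)) * z ^ (j : ℕ) := by
    rw [← pow_add]; congr 1; omega
  simp only [powVec, Function.comp, Pi.smul_apply, smul_eq_mul, Fin.val_rev, inv_pow]
  rw [split_pow]
  field_simp

lemma shiftMatrix_mulVec_powVec_inv (N : ℕ) {z : K} (hz : z ≠ 0) :
    shiftMatrix (N + 1) *ᵥ powVec (N + 1) z⁻¹ = z • powVec (N + 1) z⁻¹ - z • Pi.single 0 1 := by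
  ext ⟨j, hj⟩
  rw [shiftMatrix_mulVec]
  cases j with
  | zero => simp [powVec]
  | succ j =>
    simp only [lt_add_iff_pos_left, Order.lt_add_one_iff, zero_le, ↓reduceDIte, powVec,
      add_tsub_cancel_right, inv_pow, Pi.sub_apply, Pi.smul_apply, pow_succ, smul_eq_mul, ne_eq,
      Fin.mk_eq_zero, Nat.add_eq_zero_iff, one_ne_zero, and_false, not_false_eq_true,
      Pi.single_eq_of_ne, mul_zero, sub_zero]
    field_simp

lemma invForm_toeplitz_last_powVec_inv (a : ℤ → K) (N : ℕ) {z : K} (hz : z ≠ 0) :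
    invForm (toeplitz a (N + 1)) (Pi.single (Fin.last N) 1) (powVec (N + 1) z⁻¹) =
      (z ^ N)⁻¹ * invForm (toeplitz a (N + 1)) (powVec (N + 1) z) (Pi.single 0 1) := by
  rw [single_last_eq_comp_rev, powVec_inv_eq_comp_rev N hz, map_smul, smul_eq_mul,
    invForm_toeplitz_comp_rev]

lemma invForm_toeplitz_powVec_last (a : ℤ → K) (N : ℕ) {z : K} (hz : z ≠ 0) :
    invForm (toeplitz a (N + 1)) (powVec (N + 1) z) (Pi.single (Fin.last N) 1) =
      z ^ N * invForm (toeplitz a (N + 1)) (Pi.single 0 1) (powVec (N + 1) z⁻¹) := by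
  have h := powVec_inv_eq_comp_rev N (inv_ne_zero hz)
  rw [inv_inv, inv_pow, inv_inv] at h
  rw [single_last_eq_comp_rev, h, map_smul, LinearMap.smul_apply, smul_eq_mul,
    invForm_toeplitz_comp_rev]

lemma christoffel_darboux (a : ℤ → K) (N : ℕ) (hA : (toeplitz a (N + 1)).det ≠ 0)
    (hb : invForm (toeplitz a (N + 1)) (Pi.single 0 1) (Pi.single 0 1) ≠ 0) {z w : K}
    (hz : z ≠ 0) (hw : w ≠ 0) :
    (z - w) * invForm (toeplitz a (N + 1)) (powVec (N + 1) z) (powVec (N + 1) w⁻¹)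
        * invForm (toeplitz a (N + 1)) (Pi.single 0 1) (Pi.single 0 1) =
      w * (z ^ (N + 1) / w ^ (N + 1)
          * invForm (toeplitz a (N + 1)) (Pi.single 0 1) (powVec (N + 1) z⁻¹)
          * invForm (toeplitz a (N + 1)) (powVec (N + 1) w) (Pi.single 0 1)
        - invForm (toeplitz a (N + 1)) (powVec (N + 1) z) (Pi.single 0 1)
          * invForm (toeplitz a (N + 1)) (Pi.single 0 1) (powVec (N + 1) w⁻¹)) := by
  have last_last : invForm (toeplitz a (N + 1)) (Pi.single (Fin.last N) 1)
      (Pi.single (Fin.last N) 1) =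
        invForm (toeplitz a (N + 1)) (Pi.single 0 1) (Pi.single 0 1) := by
    rw [single_last_eq_comp_rev, invForm_toeplitz_comp_rev]
  have shift := invForm_toeplitz_shift a N hA.isUnit
  -- The displacement identity on the four pairs of `powVec z`, `e₀` with `powVec w⁻¹`, `e_N`
  -- suffices to eliminate the two border vectors of the displacement.
  have pow_pow := shift (powVec (N + 1) z) (powVec (N + 1) w⁻¹)
  have zero_pow := shift (Pi.single 0 1) (powVec (N + 1) w⁻¹)
  have pow_last := shift (powVec (N + 1) z) (Pi.single (Fin.last N) 1)
  have zero_last := shift (Pi.single 0 1) (Pi.single (Fin.last N) 1)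
  simp only [powVec_vecMul_shiftMatrix, shiftMatrix_mulVec_powVec_inv N hw,
    single_zero_vecMul_shiftMatrix, shiftMatrix_mulVec_single_last, map_sub, map_smul, map_zero,
    LinearMap.sub_apply, LinearMap.smul_apply, LinearMap.zero_apply, smul_eq_mul,
    invForm_toeplitz_last_powVec_inv a N hw, invForm_toeplitz_powVec_last a N hz, last_last]
    at pow_pow zero_pow pow_last zero_last
  generalize invForm (toeplitz a (N + 1)) (fun k => a (-(k : ℤ) - 1)) = border at *
  have border_eq : border (Pi.single (Fin.last N) 1) =
      invForm (toeplitz a (N + 1)) (Pi.single 0 1) (fun j => a ((j : ℤ) - 1 - N)) :=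
    mul_left_cancel₀ hb (by linear_combination -zero_last)
  rw [border_eq] at pow_last
  have mul_pow_div : w * (z ^ (N + 1) / w ^ (N + 1)) = z ^ (N + 1) * (w ^ N)⁻¹ := by
    rw [pow_succ w]
    field_simp
  linear_combination
    invForm (toeplitz a (N + 1)) (Pi.single 0 1) (Pi.single 0 1) * pow_pow
      - invForm (toeplitz a (N + 1)) (powVec (N + 1) z) (Pi.single 0 1) * zero_pow
      - (w ^ N)⁻¹ * invForm (toeplitz a (N + 1)) (powVec (N + 1) w) (Pi.single 0 1) * pow_last
      - invForm (toeplitz a (N + 1)) (Pi.single 0 1) (powVec (N + 1) z⁻¹)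
        * invForm (toeplitz a (N + 1)) (powVec (N + 1) w) (Pi.single 0 1) * mul_pow_div

/-- The hypothesis `ha` says that the symbol is `z ^ ν` times a function which is constant between
its jumps at the points `z k`. -/
lemma toeplitz_commutator_degreeMatrix {ι : Type*} [Fintype ι] (a : ℤ → K) (z c : ι → K) (ν : K)
    (hz : ∀ k, z k ≠ 0) (ha : ∀ n : ℤ, ((n : K) - ν) * a n = ∑ k, c k * z k ^ (-n)) :
    toeplitz a m * degreeMatrix m - degreeMatrix m * toeplitz a m =
      -(ν • toeplitz a m + ∑ k, c k • vecMulVec (powVec m (z k)⁻¹) (powVec m (z k))) := by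
  ext j k
  have hjk : ∀ i, z i ^ (-((j : ℤ) - k)) = (z i)⁻¹ ^ (j : ℕ) * z i ^ (k : ℕ) := fun i => by
    rw [neg_sub, zpow_sub₀ (hz i), zpow_natCast, zpow_natCast, inv_pow, mul_comm, div_eq_mul_inv]
  have h := ha ((j : ℤ) - k)
  simp only [hjk] at h
  push_cast at h
  simp only [degreeMatrix, Matrix.sub_apply, mul_diagonal, diagonal_mul, Matrix.neg_apply,
    Matrix.add_apply, Matrix.smul_apply, Matrix.sum_apply, vecMulVec_apply, toeplitz, of_apply,
    powVec, smul_eq_mul]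
  rw [← h]; ring

lemma invForm_toeplitz_degreeMatrix {ι : Type*} [Fintype ι] (a : ℤ → K) (z c : ι → K) (ν : K)
    (hz : ∀ k, z k ≠ 0) (ha : ∀ n : ℤ, ((n : K) - ν) * a n = ∑ k, c k * z k ^ (-n))
    (hA : (toeplitz a m).det ≠ 0) (p q : Fin m → K) :
    invForm (toeplitz a m) p (degreeMatrix m *ᵥ q)
        - invForm (toeplitz a m) (degreeMatrix m *ᵥ p) q =
      ν * invForm (toeplitz a m) p q +
        ∑ k, c k * (invForm (toeplitz a m) p (powVec m (z k)⁻¹)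
          * invForm (toeplitz a m) (powVec m (z k)) q) := by
  have h := invForm_vecMul_sub_mulVec hA.isUnit (degreeMatrix m) p q
  rw [vecMul_degreeMatrix, toeplitz_commutator_degreeMatrix a z c ν hz ha, mul_neg, neg_mul,
    neg_mulVec, dotProduct_neg, mul_add, add_mul, add_mulVec, dotProduct_add,
    dotProduct_inv_mul_sum_vecMulVec_mul_inv, mul_smul_comm, smul_mul_assoc,
    nonsing_inv_mul _ hA.isUnit, one_mul, smul_mulVec, dotProduct_smul, ← invForm_apply,
    smul_eq_mul] at h
  linear_combination -h

lemma sum_invForm_powVec_powVec_inv {ι : Type*} [Fintype ι] (a : ℤ → K) (z c : ι → K) (ν : K)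
    (hz : ∀ k, z k ≠ 0) (ha : ∀ n : ℤ, ((n : K) - ν) * a n = ∑ k, c k * z k ^ (-n))
    (hA : (toeplitz a m).det ≠ 0) :
    ∑ k, c k * invForm (toeplitz a m) (powVec m (z k)) (powVec m (z k)⁻¹) = -(ν * m) := by
  have trace_eq : ((toeplitz a m)⁻¹ * (toeplitz a m * degreeMatrix m
      - degreeMatrix m * toeplitz a m)).trace = 0 := by
    rw [mul_sub, nonsing_inv_mul_cancel_left _ _ hA.isUnit, trace_sub, trace_mul_comm,
      mul_nonsing_inv_cancel_right _ _ hA.isUnit, sub_self]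
  simp only [toeplitz_commutator_degreeMatrix a z c ν hz ha, mul_neg, trace_neg, mul_add,
    mul_smul_comm, nonsing_inv_mul _ hA.isUnit, Finset.mul_sum, trace_add, trace_smul, trace_one,
    trace_sum, mul_vecMulVec, trace_vecMulVec, smul_eq_mul, Fintype.card_fin] at trace_eq
  simp only [invForm_apply, dotProduct_comm (powVec m (z _))]
  linear_combination -trace_eq

lemma toeplitz_mul_diagonal_powVec (a : ℤ → K) {ζ : K} (hζ : ζ ≠ 0)
    (ha : ∀ n, a n ≠ 0 → ζ ^ n = 1) :
    toeplitz a m * diagonal (powVec m ζ) = diagonal (powVec m ζ) * toeplitz a m := by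
  ext j k
  simp only [mul_diagonal, diagonal_mul, toeplitz, of_apply, powVec]
  by_cases h : a ((j : ℤ) - k) = 0
  · simp [h]
  · have hjk := ha _ h
    rw [zpow_sub₀ hζ, zpow_natCast, zpow_natCast, div_eq_one_iff_eq (pow_ne_zero _ hζ)] at hjk
    rw [hjk, mul_comm]

lemma invForm_toeplitz_rotation (a : ℤ → K) {ζ : K} (hζ : ζ ≠ 0) (ha : ∀ n, a n ≠ 0 → ζ ^ n = 1)
    (hA : (toeplitz a m).det ≠ 0) (p q : Fin m → K) :
    invForm (toeplitz a m) (powVec m ζ * p) q = invForm (toeplitz a m) p (powVec m ζ * q) := by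
  have h := invForm_vecMul_sub_mulVec hA.isUnit (diagonal (powVec m ζ)) p q
  rw [toeplitz_mul_diagonal_powVec a hζ ha, sub_self, mul_zero, zero_mul, zero_mulVec,
    dotProduct_zero, sub_eq_zero] at h
  convert h using 2
  · congr 1
    ext j
    simp [vecMul_diagonal, mul_comm]
  · ext j
    simp [mulVec_diagonal]

end ToeplitzField

end FisherHartwig

/-! ### Derivatives of determinants and inverses -/

namespace FisherHartwig

open Matrix

section Derivatives

variable {𝕜 K n : Type*} [NontriviallyNormedField 𝕜] [NontriviallyNormedField K]
  [NormedAlgebra 𝕜 K] [Fintype n] [DecidableEq n]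

/-- The determinant as a continuous multilinear function of the rows. -/
def detMultilinear (K n : Type*) [NontriviallyNormedField K] [Fintype n] [DecidableEq n] :
    ContinuousMultilinearMap K (fun _ : n => n → K) K :=
  { (detRowAlternating (R := K) (n := n)).toMultilinearMap with
    cont := (continuous_id.matrix_det : Continuous fun M : Matrix n n K => M.det) }

lemma hasDerivAt_det {A : 𝕜 → Matrix n n K} {A' : Matrix n n K} {s : 𝕜} (h : HasDerivAt A A' s) :
    HasDerivAt (fun t => (A t).det) (trace (adjugate (A s) * A')) s := by
  let rows : 𝕜 → n → n → K := fun t i j => A t i j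
  let rows' : n → n → K := fun i j => A' i j
  have rows_deriv : HasDerivAt rows rows' s := h
  have along_rows := ((detMultilinear K n).hasStrictFDerivAt (rows s)).hasFDerivAt.restrictScalars 𝕜
  refine (along_rows.comp_hasDerivAt s rows_deriv).congr_deriv ?_
  have update_row (i : n) : detMultilinear K n (Function.update (rows s) i (rows' i)) =
      ∑ j, adjugate (A s) j i * A' i j := by
    change ((A s).updateRow i (A' i)).det = _
    rw [← cramer_transpose_apply, cramer_eq_adjugate_mulVec, ← adjugate_transpose]
    rfl
  calc (detMultilinear K n).linearDeriv (rows s) rows'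
      = ∑ i, ∑ j, adjugate (A s) j i * A' i j := by
        simp only [ContinuousMultilinearMap.linearDeriv_apply, update_row]
    _ = trace (adjugate (A s) * A') := Finset.sum_comm

lemma hasDerivAt_det_of_sum_vecMulVec
    {ι : Type*} [Fintype ι] {A : 𝕜 → Matrix n n K} {c : ι → K} {x y : ι → n → K} {s : 𝕜}
    (h : HasDerivAt A (∑ k, c k • vecMulVec (x k) (y k)) s) (hA : (A s).det ≠ 0) :
    HasDerivAt (fun t => (A t).det) ((∑ k, c k * invForm (A s) (y k) (x k)) * (A s).det) s := by
  refine (hasDerivAt_det h).congr_deriv ?_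
  have adjugate_eq : adjugate (A s) = (A s).det • (A s)⁻¹ := by
    rw [inv_def, Ring.inverse_eq_inv', smul_smul, mul_inv_cancel₀ hA, one_smul]
  rw [adjugate_eq, smul_mul_assoc, trace_smul, Finset.mul_sum, trace_sum, smul_eq_mul, mul_comm]
  congr 1
  refine Finset.sum_congr rfl fun k _ => ?_
  rw [mul_smul_comm, trace_smul, mul_vecMulVec, trace_vecMulVec, dotProduct_comm, invForm_apply,
    smul_eq_mul]

variable [CompleteSpace K]

open scoped Matrix.Norms.Operator in
lemma hasDerivAt_nonsing_inv {A : 𝕜 → Matrix n n K} {A' : Matrix n n K} {s : 𝕜}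
    (h : HasDerivAt A A' s) (hA : (A s).det ≠ 0) :
    HasDerivAt (fun t => (A t)⁻¹) (-((A s)⁻¹ * A' * (A s)⁻¹)) s := by
  have : @CompleteSpace (Matrix n n K) PseudoMetricSpace.toUniformSpace :=
    FiniteDimensional.complete K _
  obtain ⟨u, hu⟩ := (isUnit_iff_isUnit_det (A s)).2 hA.isUnit
  have inverse_deriv := hasFDerivAt_ringInverse (𝕜 := 𝕜) u
  rw [hu] at inverse_deriv
  simp only [nonsing_inv_eq_ringInverse]
  refine (inverse_deriv.comp_hasDerivAt s h).congr_deriv ?_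
  simp [← hu]

lemma hasDerivAt_invForm {A : 𝕜 → Matrix n n K} {A' : Matrix n n K} {p q : 𝕜 → n → K}
    {p' q' : n → K} {s : 𝕜} (h : HasDerivAt A A' s) (hA : (A s).det ≠ 0) (hp : HasDerivAt p p' s)
    (hq : HasDerivAt q q' s) :
    HasDerivAt (fun t => invForm (A t) (p t) (q t))
      (invForm (A s) p' (q s) + invForm (A s) (p s) q'
        - p s ⬝ᵥ (((A s)⁻¹ * A' * (A s)⁻¹) *ᵥ q s)) s := by
  have inv_entry (i j : n) := hasDerivAt_pi.1 (hasDerivAt_pi.1 (hasDerivAt_nonsing_inv h hA) i) j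
  simp only [invForm_apply, dotProduct, mulVec, Finset.mul_sum]
  refine (HasDerivAt.fun_sum fun i _ => HasDerivAt.fun_sum fun j _ =>
    (hasDerivAt_pi.1 hp i).mul ((inv_entry i j).mul (hasDerivAt_pi.1 hq j))).congr_deriv ?_
  rw [← Finset.sum_add_distrib, ← Finset.sum_sub_distrib]
  refine Finset.sum_congr rfl fun i _ => ?_
  rw [← Finset.sum_add_distrib, ← Finset.sum_sub_distrib]
  refine Finset.sum_congr rfl fun j _ => ?_
  simp only [Matrix.neg_apply, Pi.mul_apply]
  ring

lemma hasDerivAt_invForm_of_sum_vecMulVec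
    {ι : Type*} [Fintype ι] {A : 𝕜 → Matrix n n K} {c : ι → K} {x y : ι → n → K} {s : 𝕜}
    (h : HasDerivAt A (∑ k, c k • vecMulVec (x k) (y k)) s) (hA : (A s).det ≠ 0)
    {p q : 𝕜 → n → K} {p' q' : n → K} (hp : HasDerivAt p p' s) (hq : HasDerivAt q q' s) :
    HasDerivAt (fun t => invForm (A t) (p t) (q t))
      (invForm (A s) p' (q s) + invForm (A s) (p s) q'
        - ∑ k, c k * (invForm (A s) (p s) (x k) * invForm (A s) (y k) (q s))) s := by
  rw [← dotProduct_inv_mul_sum_vecMulVec_mul_inv]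
  exact hasDerivAt_invForm h hA hp hq

end Derivatives

end FisherHartwig

/-! ### Symbols with jumps -/

namespace FisherHartwig

open Matrix

section JumpPoint

variable {ι : Type*}

/-- The point `exp (iθ_k)` of the unit circle at which the symbol with jumps at the angles `θ` has
its `k`-th jump. -/
def jumpPoint (θ : ι → ℝ) (k : ι) : ℂ := Complex.exp (Complex.I * θ k)

/-- The phase `(z_k / z_i) ^ (N + 1)`, with `z` the jump points: the only dependence on `N` of the
motion of the jumps. -/
def phaseRatio (N : ℕ) (θ : ι → ℝ) (k i : ι) : ℂ :=
  jumpPoint θ k ^ (N + 1) / jumpPoint θ i ^ (N + 1)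

/-- The coefficient `z_i / (z_k - z_i)` with which two jumps interact. Its junk value `0` at
`k = i` is always multiplied by zero. -/
def interaction (θ : ι → ℝ) (k i : ι) : ℂ := jumpPoint θ i / (jumpPoint θ k - jumpPoint θ i)

variable (θ : ι → ℝ) (k i : ι)

lemma jumpPoint_ne_zero : jumpPoint θ k ≠ 0 := Complex.exp_ne_zero _

lemma norm_jumpPoint : ‖jumpPoint θ k‖ = 1 := by
  rw [jumpPoint, mul_comm, Complex.norm_exp_ofReal_mul_I]

lemma norm_phaseRatio (N : ℕ) : ‖phaseRatio N θ k i‖ = 1 := by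
  simp [phaseRatio, norm_jumpPoint]

lemma phaseRatio_mul_phaseRatio_swap (N : ℕ) : phaseRatio N θ k i * phaseRatio N θ i k = 1 := by
  rw [phaseRatio, phaseRatio, div_mul_div_cancel₀ (pow_ne_zero _ (jumpPoint_ne_zero θ i)),
    div_self (pow_ne_zero _ (jumpPoint_ne_zero θ k))]

variable {θ k i} in
lemma interaction_add_interaction_swap (h : jumpPoint θ k ≠ jumpPoint θ i) :
    interaction θ k i + interaction θ i k = -1 := by
  have hki := sub_ne_zero.2 h
  rw [interaction, interaction, ← neg_sub (jumpPoint θ k) (jumpPoint θ i), div_neg,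
    ← sub_eq_add_neg, ← sub_div, ← neg_sub (jumpPoint θ k) (jumpPoint θ i), neg_div, div_self hki]

end JumpPoint

/-- The data, other than the positions of the jumps, of a symbol on the unit circle that is `z ^ ν`
times a piecewise constant function. -/
structure JumpPattern (ι : Type*) [Fintype ι] where
  /-- The piecewise constant factor jumps by `-2 * sign k` at the `k`-th discontinuity. -/
  sign : ι → ℂ
  /-- The value of the piecewise constant factor before all the jumps. -/
  baseValue : ℂ
  /-- The winding number `ν` of the factor `z ^ ν`. -/
  winding : ℤ
  sum_sign : ∑ k, sign k = 0

namespace JumpPattern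

variable {ι : Type*} [Fintype ι] (P : JumpPattern ι) (θ : ι → ℝ)

/-- The `n`-th Fourier coefficient of the piecewise constant factor. -/
def coeff (n : ℤ) : ℂ :=
  if n = 0 then P.baseValue + ∑ k, P.sign k * θ k / Real.pi
  else ∑ k, Complex.I / (Real.pi * n) * (P.sign k * jumpPoint θ k ^ (-n))

/-- The Toeplitz matrix, of size `N + 1`, of the symbol. -/
def matrix (N : ℕ) : Matrix (Fin (N + 1)) (Fin (N + 1)) ℂ :=
  toeplitz (fun n => P.coeff θ (n - P.winding)) (N + 1)

/-- The coefficient of the `k`-th jump in the derivative of the symbol. -/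
def weight (k : ι) : ℂ := P.sign k * jumpPoint θ k ^ P.winding / Real.pi

/-- The bilinear form of the inverse of the Toeplitz matrix. -/
def form (N : ℕ) : LinearMap.BilinForm ℂ (Fin (N + 1) → ℂ) := invForm (P.matrix θ N)

/-- The upper left entry of the inverse of the Toeplitz matrix: the leading coefficient of the
polynomials orthonormal with respect to the symbol, squared. -/
def leadingCoeff (N : ℕ) : ℂ := P.form θ N (Pi.single 0 1) (Pi.single 0 1)

/-- The value at the `k`-th jump of the polynomial given by the first column of the inverse of the
Toeplitz matrix. -/
def value (N : ℕ) (k : ι) : ℂ := P.form θ N (powVec (N + 1) (jumpPoint θ k)) (Pi.single 0 1)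

/-- The value at the `k`-th jump of the polynomial in `z⁻¹` given by the first row of the inverse
of the Toeplitz matrix, divided by its constant coefficient. -/
def dualValue (N : ℕ) (k : ι) : ℂ :=
  P.form θ N (Pi.single 0 1) (powVec (N + 1) (jumpPoint θ k)⁻¹) / P.leadingCoeff θ N

/-- The Christoffel–Darboux kernel at two jumps. -/
def kernel (N : ℕ) (k i : ι) : ℂ :=
  P.form θ N (powVec (N + 1) (jumpPoint θ k)) (powVec (N + 1) (jumpPoint θ i)⁻¹)

/-- The rescaled weighted square of the value at the `k`-th jump. -/
def amp (N : ℕ) (k : ι) : ℂ := P.weight θ k * P.value θ N k ^ 2 / ((N : ℂ) + 1)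

/-- The rescaled weighted square of the dual value at the `k`-th jump. -/
def dualAmp (N : ℕ) (k : ι) : ℂ := ((N : ℂ) + 1) * P.weight θ k * P.dualValue θ N k ^ 2

/-- The weighted product of the value and the dual value at the `k`-th jump. -/
def mixedAmp (N : ℕ) (k : ι) : ℂ := P.weight θ k * P.value θ N k * P.dualValue θ N k

/-- The weighted kernel at the `k`-th jump, without its leading term `i (N + 1) / 2`. -/
def diagKernel (N : ℕ) (k : ι) : ℂ :=
  P.weight θ k * P.kernel θ N k k - Complex.I * ((N : ℂ) + 1) / 2

/-- The determinant of the Toeplitz matrix, divided by its leading oscillation. -/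
def phasedDet (N : ℕ) : ℂ :=
  (P.matrix θ N).det * Complex.exp (-Complex.I * ((N : ℂ) + 1) * (∑ k, (θ k : ℂ)) / 2)

lemma weight_mul_zpow (k : ι) (n : ℤ) : P.weight θ k * jumpPoint θ k ^ (-n) =
    P.sign k * jumpPoint θ k ^ (-(n - P.winding)) / Real.pi := by
  rw [weight, show -(n - P.winding) = P.winding + -n by ring, zpow_add₀ (jumpPoint_ne_zero θ k)]
  ring

lemma sub_winding_mul_coeff (n : ℤ) : ((n : ℂ) - P.winding) * P.coeff θ (n - P.winding) =
    ∑ k, Complex.I * P.weight θ k * jumpPoint θ k ^ (-n) := by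
  simp_rw [mul_assoc, P.weight_mul_zpow]
  unfold coeff
  split_ifs with h
  · have hn : n = P.winding := sub_eq_zero.1 h
    simp [hn, ← Finset.mul_sum, ← Finset.sum_div, P.sum_sign]
  · have hn : ((n : ℂ) - P.winding) ≠ 0 := by exact_mod_cast h
    have hpi : (Real.pi : ℂ) ≠ 0 := by exact_mod_cast Real.pi_ne_zero
    rw [Finset.mul_sum]
    refine Finset.sum_congr rfl fun k _ => ?_
    push_cast
    field_simp

variable {θ} {N : ℕ}

lemma form_degreeMatrix (hA : (P.matrix θ N).det ≠ 0) (p q : Fin (N + 1) → ℂ) :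
    P.form θ N p (degreeMatrix (N + 1) *ᵥ q) - P.form θ N (degreeMatrix (N + 1) *ᵥ p) q =
      P.winding * P.form θ N p q + ∑ k, Complex.I * P.weight θ k *
        (P.form θ N p (powVec (N + 1) (jumpPoint θ k)⁻¹)
          * P.form θ N (powVec (N + 1) (jumpPoint θ k)) q) :=
  invForm_toeplitz_degreeMatrix _ (jumpPoint θ) _ _ (jumpPoint_ne_zero θ)
    (P.sub_winding_mul_coeff θ) hA p q

lemma sum_mixedAmp (hA : (P.matrix θ N).det ≠ 0) (hb : P.leadingCoeff θ N ≠ 0) :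
    ∑ k, P.mixedAmp θ N k = Complex.I * P.winding := by
  have h := P.form_degreeMatrix hA (Pi.single 0 1) (Pi.single 0 1)
  have mixed_eq (k : ι) : P.mixedAmp θ N k * P.leadingCoeff θ N =
      P.weight θ k * (P.form θ N (Pi.single 0 1) (powVec (N + 1) (jumpPoint θ k)⁻¹)
        * P.form θ N (powVec (N + 1) (jumpPoint θ k)) (Pi.single 0 1)) := by
    rw [mixedAmp, dualValue, value]
    field_simp
  refine mul_right_cancel₀ hb ?_
  simp only [degreeMatrix_mulVec_single, Fin.val_zero, Nat.cast_zero, zero_smul, map_zero,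
    LinearMap.zero_apply, sub_zero, mul_assoc, ← mixed_eq, ← Finset.mul_sum, ← Finset.sum_mul]
    at h
  rw [leadingCoeff] at h ⊢
  linear_combination Complex.I * h + (∑ k, P.mixedAmp θ N k)
    * P.form θ N (Pi.single 0 1) (Pi.single 0 1) * Complex.I_sq

lemma add_winding_mul_inv_last_zero (hA : (P.matrix θ N).det ≠ 0) :
    ((N : ℂ) + P.winding) * (P.matrix θ N)⁻¹ (Fin.last N) 0 =
      -Complex.I * ∑ k, P.weight θ k * (jumpPoint θ k ^ N)⁻¹ * P.value θ N k ^ 2 := by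
  have h := P.form_degreeMatrix hA (Pi.single (Fin.last N) 1) (Pi.single 0 1)
  have last_powVec (k : ι) : P.form θ N (Pi.single (Fin.last N) 1)
      (powVec (N + 1) (jumpPoint θ k)⁻¹) = (jumpPoint θ k ^ N)⁻¹ * P.value θ N k :=
    invForm_toeplitz_last_powVec_inv _ N (jumpPoint_ne_zero θ k)
  have summand_eq (k : ι) : Complex.I * P.weight θ k * ((jumpPoint θ k ^ N)⁻¹ * P.value θ N k *
      P.form θ N (powVec (N + 1) (jumpPoint θ k)) (Pi.single 0 1)) =
        Complex.I * (P.weight θ k * (jumpPoint θ k ^ N)⁻¹ * P.value θ N k ^ 2) := by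
    rw [value]
    ring
  simp only [degreeMatrix_mulVec_single, Fin.val_zero, Nat.cast_zero, zero_smul, map_zero,
    Fin.val_last, map_smul, LinearMap.smul_apply, smul_eq_mul, last_powVec, summand_eq,
    ← Finset.mul_sum] at h
  rw [form, invForm_single_single] at h
  linear_combination -h

lemma kernel_eq (hA : (P.matrix θ N).det ≠ 0) (hb : P.leadingCoeff θ N ≠ 0) {k i : ι}
    (hki : jumpPoint θ k ≠ jumpPoint θ i) :
    P.kernel θ N k i = interaction θ k i *
      (phaseRatio N θ k i * P.dualValue θ N k * P.value θ N i
        - P.value θ N k * P.dualValue θ N i) := by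
  let dual (j : ι) : ℂ := P.form θ N (Pi.single 0 1) (powVec (N + 1) (jumpPoint θ j)⁻¹)
  have darboux : (jumpPoint θ k - jumpPoint θ i) * P.kernel θ N k i * P.leadingCoeff θ N =
      jumpPoint θ i * (phaseRatio N θ k i * dual k * P.value θ N i - P.value θ N k * dual i) :=
    christoffel_darboux _ N hA hb (jumpPoint_ne_zero θ k) (jumpPoint_ne_zero θ i)
  have dualValue_eq (j : ι) : P.dualValue θ N j = dual j / P.leadingCoeff θ N := rfl
  have hsub := sub_ne_zero.2 hki
  rw [interaction, dualValue_eq, dualValue_eq]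
  field_simp
  linear_combination darboux

end JumpPattern

end FisherHartwig

/-! ### Moving the jumps -/

namespace FisherHartwig

open Matrix

section MovingJumps

variable {ι : Type*} {θ : ℝ → ι → ℝ} {δ : ι → ℝ} {s : ℝ}

/-- The oscillating coefficient `(δ_i - δ_k) (z_k / z_i) ^ (N + 1)` by which a jump `i` acts on a
jump `k` when the jumps move with speeds `δ`. -/
def phaseRate (N : ℕ) (θ : ι → ℝ) (δ : ι → ℝ) (k i : ι) : ℂ := (δ i - δ k) * phaseRatio N θ k i

lemma hasDerivAt_jumpPoint_zpow {k : ι} (hθ : HasDerivAt (fun t => θ t k) (δ k) s) (n : ℤ) :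
    HasDerivAt (fun t => jumpPoint (θ t) k ^ n)
      (Complex.I * n * δ k * jumpPoint (θ s) k ^ n) s := by
  have zpow_eq (t : ℝ) : jumpPoint (θ t) k ^ n = Complex.exp (Complex.I * n * θ t k) := by
    rw [jumpPoint, ← Complex.exp_int_mul]
    ring_nf
  simp only [zpow_eq]
  exact (hθ.ofReal_comp.const_mul (Complex.I * n)).cexp.congr_deriv (by ring)

/-- This is why `phaseRate` averages out: although not small, it is the derivative of a small
function. -/
lemma hasDerivAt_I_div_mul_phaseRatio (hθ : ∀ k, HasDerivAt (fun t => θ t k) (δ k) s) (N : ℕ)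
    (k i : ι) : HasDerivAt (fun t => Complex.I / ((N : ℂ) + 1) * phaseRatio N (θ t) k i)
      (phaseRate N (θ s) δ k i) s := by
  have hpow (j : ι) := hasDerivAt_jumpPoint_zpow (hθ j) ((N + 1 : ℕ) : ℤ)
  simp only [zpow_natCast] at hpow
  have hi := jumpPoint_ne_zero (θ s) i
  have hN : (N : ℂ) + 1 ≠ 0 := by exact_mod_cast N.succ_ne_zero
  refine (((hpow k).div (hpow i) (pow_ne_zero _ hi)).const_mul _).congr_deriv ?_
  rw [phaseRate, phaseRatio]
  push_cast
  field_simp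
  linear_combination
    (δ k - δ i) * jumpPoint (θ s) k * jumpPoint (θ s) k ^ N * Complex.I_sq

lemma hasDerivAt_powVec_jumpPoint {k : ι} (hθ : HasDerivAt (fun t => θ t k) (δ k) s)
    (m : ℕ) :
    HasDerivAt (fun t => powVec m (jumpPoint (θ t) k))
      ((Complex.I * δ k) • (degreeMatrix m *ᵥ powVec m (jumpPoint (θ s) k))) s := by
  refine hasDerivAt_pi.2 fun j => ?_
  have hpow := hasDerivAt_jumpPoint_zpow hθ (j : ℕ)
  simp only [zpow_natCast] at hpow
  refine hpow.congr_deriv ?_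
  rw [Pi.smul_apply, degreeMatrix_mulVec_apply, powVec, smul_eq_mul]
  push_cast
  ring

lemma hasDerivAt_powVec_jumpPoint_inv {k : ι} (hθ : HasDerivAt (fun t => θ t k) (δ k) s)
    (m : ℕ) :
    HasDerivAt (fun t => powVec m (jumpPoint (θ t) k)⁻¹)
      (-(Complex.I * δ k) • (degreeMatrix m *ᵥ powVec m (jumpPoint (θ s) k)⁻¹)) s := by
  refine hasDerivAt_pi.2 fun j => ?_
  have hpow := hasDerivAt_jumpPoint_zpow hθ (-(j : ℕ))
  simp only [_root_.zpow_neg, zpow_natCast, ← inv_pow] at hpow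
  refine hpow.congr_deriv ?_
  rw [Pi.smul_apply, degreeMatrix_mulVec_apply, powVec, smul_eq_mul]
  push_cast
  ring

lemma hasDerivAt_single_zero (N : ℕ) (c : ℂ) :
    HasDerivAt (fun _ : ℝ => (Pi.single 0 1 : Fin (N + 1) → ℂ))
      (c • (degreeMatrix (N + 1) *ᵥ Pi.single 0 1)) s := by
  rw [degreeMatrix_mulVec_single, Fin.val_zero, Nat.cast_zero, zero_smul, smul_zero]
  exact hasDerivAt_const _ _

variable [Fintype ι] (P : JumpPattern ι) {N : ℕ}

namespace JumpPattern

lemma hasDerivAt_weight {k : ι} (hθ : HasDerivAt (fun t => θ t k) (δ k) s) :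
    HasDerivAt (fun t => P.weight (θ t) k)
      (Complex.I * P.winding * δ k * P.weight (θ s) k) s :=
  (((hasDerivAt_jumpPoint_zpow hθ P.winding).const_mul (P.sign k)).div_const _).congr_deriv
    (by rw [weight]; ring)

variable (hθ : ∀ k, HasDerivAt (fun t => θ t k) (δ k) s)
include hθ

lemma hasDerivAt_coeff (n : ℤ) : HasDerivAt (fun t => P.coeff (θ t) (n - P.winding))
    (∑ k, δ k * P.weight (θ s) k * jumpPoint (θ s) k ^ (-n)) s := by
  simp_rw [mul_assoc, P.weight_mul_zpow]
  unfold coeff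
  split_ifs with h
  · refine ((HasDerivAt.fun_sum fun k _ =>
      ((hθ k).ofReal_comp.const_mul (P.sign k)).div_const _).const_add _).congr_deriv ?_
    refine Finset.sum_congr rfl fun k _ => ?_
    rw [h, neg_zero, zpow_zero]
    ring
  · refine (HasDerivAt.fun_sum fun k _ => ((hasDerivAt_jumpPoint_zpow (hθ k) _).const_mul
      (P.sign k)).const_mul _).congr_deriv (Finset.sum_congr rfl fun k _ => ?_)
    have hn : ((n - P.winding : ℤ) : ℂ) ≠ 0 := by exact_mod_cast h
    have hpi : (Real.pi : ℂ) ≠ 0 := by exact_mod_cast Real.pi_ne_zero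
    rw [Int.cast_neg]
    field_simp
    linear_combination
      -(P.sign k * δ k * jumpPoint (θ s) k ^ (-(n - P.winding))) * Complex.I_sq

lemma hasDerivAt_matrix : HasDerivAt (fun t => P.matrix (θ t) N)
    (∑ k, (δ k * P.weight (θ s) k) •
      vecMulVec (powVec (N + 1) (jumpPoint (θ s) k)⁻¹) (powVec (N + 1) (jumpPoint (θ s) k))) s := by
  refine hasDerivAt_pi.2 fun i => hasDerivAt_pi.2 fun j =>
    (P.hasDerivAt_coeff hθ ((i : ℤ) - j)).congr_deriv ?_
  rw [Matrix.sum_apply]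
  refine Finset.sum_congr rfl fun k _ => ?_
  rw [Matrix.smul_apply, vecMulVec_apply, powVec, powVec, neg_sub,
    zpow_sub₀ (jumpPoint_ne_zero _ k), zpow_natCast, zpow_natCast, inv_pow, smul_eq_mul]
  ring

variable (hA : (P.matrix (θ s) N).det ≠ 0)
include hA

/-- If the two arguments rotate with speed `α`, then only the motion of the jumps relative to
them contributes. -/
lemma hasDerivAt_form {p q : ℝ → Fin (N + 1) → ℂ} {α : ℂ}
    (hp : HasDerivAt p ((Complex.I * α) • (degreeMatrix (N + 1) *ᵥ p s)) s)
    (hq : HasDerivAt q (-(Complex.I * α) • (degreeMatrix (N + 1) *ᵥ q s)) s) :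
    HasDerivAt (fun t => P.form (θ t) N (p t) (q t))
      (-(Complex.I * P.winding * α) * P.form (θ s) N (p s) (q s)
        + ∑ i, (α - δ i) * P.weight (θ s) i *
          (P.form (θ s) N (p s) (powVec (N + 1) (jumpPoint (θ s) i)⁻¹)
            * P.form (θ s) N (powVec (N + 1) (jumpPoint (θ s) i)) (q s))) s := by
  refine (hasDerivAt_invForm_of_sum_vecMulVec (P.hasDerivAt_matrix hθ) hA hp hq).congr_deriv ?_
  have h := P.form_degreeMatrix hA (p s) (q s)
  rw [form] at h ⊢
  simp only [map_smul, LinearMap.smul_apply, smul_eq_mul, mul_assoc, sub_mul,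
    Finset.sum_sub_distrib, ← Finset.mul_sum] at h ⊢
  linear_combination (-Complex.I * α) * h - α * (∑ i, P.weight (θ s) i *
    (invForm (P.matrix (θ s) N) (p s) (powVec (N + 1) (jumpPoint (θ s) i)⁻¹)
      * invForm (P.matrix (θ s) N) (powVec (N + 1) (jumpPoint (θ s) i)) (q s))) * Complex.I_sq

lemma hasDerivAt_value (k : ι) : HasDerivAt (fun t => P.value (θ t) N k)
    (-(Complex.I * P.winding * δ k) * P.value (θ s) N k + ∑ i, (δ k - δ i) * P.weight (θ s) i *
      (P.kernel (θ s) N k i * P.value (θ s) N i)) s :=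
  P.hasDerivAt_form hθ hA (hasDerivAt_powVec_jumpPoint (hθ k) _) (hasDerivAt_single_zero N _)

lemma hasDerivAt_kernel_self (k : ι) : HasDerivAt (fun t => P.kernel (θ t) N k k)
    (-(Complex.I * P.winding * δ k) * P.kernel (θ s) N k k
      + ∑ i, (δ k - δ i) * P.weight (θ s) i * (P.kernel (θ s) N k i * P.kernel (θ s) N i k)) s :=
  P.hasDerivAt_form hθ hA (hasDerivAt_powVec_jumpPoint (hθ k) _)
    (hasDerivAt_powVec_jumpPoint_inv (hθ k) _)

lemma hasDerivAt_phasedDet : HasDerivAt (fun t => P.phasedDet (θ t) N)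
    ((∑ i, δ i * P.diagKernel (θ s) N i) * P.phasedDet (θ s) N) s := by
  have hdet := hasDerivAt_det_of_sum_vecMulVec (P.hasDerivAt_matrix (N := N) hθ) hA
  have hsum := HasDerivAt.fun_sum (u := Finset.univ) fun k _ => (hθ k).ofReal_comp
  refine (hdet.mul ((hsum.const_mul (-Complex.I * ((N : ℂ) + 1))).div_const
    2).cexp).congr_deriv ?_
  simp only [phasedDet, diagKernel, kernel, form, mul_sub, Finset.sum_sub_distrib, mul_assoc,
    ← Finset.sum_mul]
  ring

variable (hb : P.leadingCoeff (θ s) N ≠ 0)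
include hb

lemma hasDerivAt_leadingCoeff : HasDerivAt (fun t => P.leadingCoeff (θ t) N)
    (-(∑ i, δ i * P.mixedAmp (θ s) N i) * P.leadingCoeff (θ s) N) s := by
  refine (P.hasDerivAt_form hθ hA (α := 0) (hasDerivAt_single_zero N _)
    (hasDerivAt_single_zero N _)).congr_deriv ?_
  rw [mul_zero, neg_zero, zero_mul, zero_add, neg_mul, Finset.sum_mul, ← Finset.sum_neg_distrib]
  refine Finset.sum_congr rfl fun i _ => ?_
  rw [mixedAmp, dualValue, value]
  field_simp
  ring

lemma hasDerivAt_dualValue (k : ι) : HasDerivAt (fun t => P.dualValue (θ t) N k)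
    ((-(Complex.I * P.winding * δ k) + ∑ i, δ i * P.mixedAmp (θ s) N i) * P.dualValue (θ s) N k
      + ∑ i, (δ k - δ i) * P.weight (θ s) i *
        (P.dualValue (θ s) N i * P.kernel (θ s) N i k)) s := by
  have hdual := P.hasDerivAt_form hθ hA (hasDerivAt_single_zero N _)
    (hasDerivAt_powVec_jumpPoint_inv (hθ k) (N + 1))
  refine (hdual.div (P.hasDerivAt_leadingCoeff hθ hA hb) hb).congr_deriv ?_
  simp only [dualValue, div_mul_eq_mul_div, mul_div_assoc', ← Finset.sum_div, kernel]
  field_simp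
  ring

variable (hz : Function.Injective (jumpPoint (θ s)))
include hz

lemma hasDerivAt_amp (k : ι) : HasDerivAt (fun t => P.amp (θ t) N k)
    ((-(Complex.I * P.winding * δ k) + ∑ i, (δ i - δ k) *
        (2 * interaction (θ s) k i * P.mixedAmp (θ s) N i)) * P.amp (θ s) N k
      - ∑ i, phaseRate N (θ s) δ k i *
        (2 * interaction (θ s) k i * (P.mixedAmp (θ s) N k * P.amp (θ s) N i))) s := by
  refine (((P.hasDerivAt_weight (hθ k)).mul
    ((P.hasDerivAt_value hθ hA k).pow 2)).div_const ((N : ℂ) + 1)).congr_deriv ?_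
  have hN : (N : ℂ) + 1 ≠ 0 := by exact_mod_cast N.succ_ne_zero
  have summand_eq (i : ι) : (δ i - δ k) *
        (2 * interaction (θ s) k i * P.mixedAmp (θ s) N i) * P.amp (θ s) N k
      - phaseRate N (θ s) δ k i *
        (2 * interaction (θ s) k i * (P.mixedAmp (θ s) N k * P.amp (θ s) N i)) =
      2 * P.weight (θ s) k * P.value (θ s) N k / ((N : ℂ) + 1) * ((δ k - δ i) *
        P.weight (θ s) i * (P.kernel (θ s) N k i * P.value (θ s) N i)) := by
    rcases eq_or_ne k i with rfl | hki
    · simp [phaseRate]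
    · rw [P.kernel_eq hA hb (hz.ne hki), phaseRate, mixedAmp, mixedAmp, amp, amp]
      field_simp
      ring
  rw [add_mul, Finset.sum_mul, add_sub_assoc, ← Finset.sum_sub_distrib,
    Finset.sum_congr rfl fun i _ => summand_eq i, ← Finset.mul_sum, amp]
  simp only [Pi.pow_apply]
  field_simp
  ring

lemma hasDerivAt_dualAmp (k : ι) : HasDerivAt (fun t => P.dualAmp (θ t) N k)
    ((-(Complex.I * P.winding * δ k) + 2 * ∑ i, δ i * P.mixedAmp (θ s) N i + ∑ i, (δ i - δ k) *
        (2 * interaction (θ s) i k * P.mixedAmp (θ s) N i)) * P.dualAmp (θ s) N k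
      + ∑ i, phaseRate N (θ s) δ i k *
        (2 * interaction (θ s) i k * (P.mixedAmp (θ s) N k * P.dualAmp (θ s) N i))) s := by
  refine (((P.hasDerivAt_weight (hθ k)).const_mul ((N : ℂ) + 1)).mul
    ((P.hasDerivAt_dualValue hθ hA hb k).pow 2)).congr_deriv ?_
  have summand_eq (i : ι) : (δ i - δ k) *
        (2 * interaction (θ s) i k * P.mixedAmp (θ s) N i) * P.dualAmp (θ s) N k
      + phaseRate N (θ s) δ i k *
        (2 * interaction (θ s) i k * (P.mixedAmp (θ s) N k * P.dualAmp (θ s) N i)) =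
      2 * ((N : ℂ) + 1) * P.weight (θ s) k * P.dualValue (θ s) N k * ((δ k - δ i) *
        P.weight (θ s) i * (P.dualValue (θ s) N i * P.kernel (θ s) N i k)) := by
    rcases eq_or_ne i k with rfl | hki
    · simp [phaseRate]
    · rw [P.kernel_eq hA hb (hz.ne hki), phaseRate, mixedAmp, mixedAmp, dualAmp, dualAmp]
      ring
  rw [add_mul _ (∑ i, (δ i - δ k : ℂ) * _), Finset.sum_mul, add_assoc, ← Finset.sum_add_distrib,
    Finset.sum_congr rfl fun i _ => summand_eq i, ← Finset.mul_sum, dualAmp]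
  simp only [Pi.pow_apply]
  ring

lemma hasDerivAt_mixedAmp (k : ι) : HasDerivAt (fun t => P.mixedAmp (θ t) N k)
    (∑ i, (phaseRate N (θ s) δ i k *
        (interaction (θ s) i k * (P.dualAmp (θ s) N i * P.amp (θ s) N k))
      - phaseRate N (θ s) δ k i *
        (interaction (θ s) k i * (P.dualAmp (θ s) N k * P.amp (θ s) N i)))) s := by
  refine (((P.hasDerivAt_weight (hθ k)).mul (P.hasDerivAt_value hθ hA k)).mul
    (P.hasDerivAt_dualValue hθ hA hb k)).congr_deriv ?_
  have hN : (N : ℂ) + 1 ≠ 0 := by exact_mod_cast N.succ_ne_zero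
  have summand_eq (i : ι) : phaseRate N (θ s) δ i k *
        (interaction (θ s) i k * (P.dualAmp (θ s) N i * P.amp (θ s) N k))
      - phaseRate N (θ s) δ k i *
        (interaction (θ s) k i * (P.dualAmp (θ s) N k * P.amp (θ s) N i)) =
      P.weight (θ s) k * P.dualValue (θ s) N k * ((δ k - δ i) * P.weight (θ s) i *
        (P.kernel (θ s) N k i * P.value (θ s) N i))
      + P.weight (θ s) k * P.value (θ s) N k * ((δ k - δ i) * P.weight (θ s) i *
        (P.dualValue (θ s) N i * P.kernel (θ s) N i k))
      + (δ i * P.mixedAmp (θ s) N i - δ k * P.mixedAmp (θ s) N i) * P.mixedAmp (θ s) N k := by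
    rcases eq_or_ne i k with rfl | hki
    · simp
    · rw [P.kernel_eq hA hb (hz.ne hki), P.kernel_eq hA hb (hz.ne hki.symm), phaseRate, phaseRate,
        mixedAmp, mixedAmp, dualAmp, dualAmp, amp, amp]
      field_simp
      linear_combination P.weight (θ s) i * P.weight (θ s) k * P.value (θ s) N k *
        P.value (θ s) N i * P.dualValue (θ s) N i * P.dualValue (θ s) N k * (δ k - δ i) *
        interaction_add_interaction_swap (hz.ne hki)
  rw [Finset.sum_congr rfl fun i _ => summand_eq i, Finset.sum_add_distrib, Finset.sum_add_distrib,
    ← Finset.mul_sum, ← Finset.mul_sum, ← Finset.sum_mul, Finset.sum_sub_distrib,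
    ← Finset.mul_sum _ _ (δ k : ℂ), P.sum_mixedAmp hA hb]
  simp only [mixedAmp, Pi.mul_apply]
  ring

lemma hasDerivAt_diagKernel (k : ι) : HasDerivAt (fun t => P.diagKernel (θ t) N k)
    (-∑ i, (δ i - δ k) * (interaction (θ s) k i * interaction (θ s) i k *
        (2 * P.mixedAmp (θ s) N i * P.mixedAmp (θ s) N k))
      + ∑ i, (interaction (θ s) k i * interaction (θ s) i k) *
        (phaseRate N (θ s) δ k i * (P.dualAmp (θ s) N k * P.amp (θ s) N i)
          - phaseRate N (θ s) δ i k * (P.dualAmp (θ s) N i * P.amp (θ s) N k))) s := by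
  refine (((P.hasDerivAt_weight (hθ k)).mul
    (P.hasDerivAt_kernel_self hθ hA k)).sub_const (Complex.I * ((N : ℂ) + 1) / 2)).congr_deriv ?_
  have hN : (N : ℂ) + 1 ≠ 0 := by exact_mod_cast N.succ_ne_zero
  have summand_eq (i : ι) : -((δ i - δ k) * (interaction (θ s) k i * interaction (θ s) i k *
        (2 * P.mixedAmp (θ s) N i * P.mixedAmp (θ s) N k)))
      + (interaction (θ s) k i * interaction (θ s) i k) *
        (phaseRate N (θ s) δ k i * (P.dualAmp (θ s) N k * P.amp (θ s) N i)
          - phaseRate N (θ s) δ i k * (P.dualAmp (θ s) N i * P.amp (θ s) N k)) =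
      P.weight (θ s) k * ((δ k - δ i) * P.weight (θ s) i *
        (P.kernel (θ s) N k i * P.kernel (θ s) N i k)) := by
    rcases eq_or_ne i k with rfl | hki
    · simp
    · rw [P.kernel_eq hA hb (hz.ne hki), P.kernel_eq hA hb (hz.ne hki.symm), phaseRate, phaseRate,
        mixedAmp, mixedAmp, dualAmp, dualAmp, amp, amp]
      field_simp
      linear_combination (δ i - δ k) * P.weight (θ s) i * P.weight (θ s) k * P.value (θ s) N k *
        P.value (θ s) N i * P.dualValue (θ s) N i * P.dualValue (θ s) N k *
        interaction (θ s) k i * interaction (θ s) i k *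
        phaseRatio_mul_phaseRatio_swap (θ s) k i N
  rw [← Finset.sum_neg_distrib, ← Finset.sum_add_distrib,
    Finset.sum_congr rfl fun i _ => summand_eq i, ← Finset.mul_sum]
  ring

end JumpPattern

end MovingJumps

end FisherHartwig

/-! ### Averaging -/

namespace FisherHartwig

section Averaging

open Set Filter Topology

variable {V W : Type*} [NormedAddCommGroup V] [NormedSpace ℝ V] [NormedAddCommGroup W]
  [NormedSpace ℝ W] {A : ℝ × V → V} {B : ℝ × V → W →L[ℝ] V} {ub : ℝ → V} {K : ℝ}

/-- `K` bounds the averaged field `A`, the oscillating field `B` and their derivatives on the tube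
of radius `1` around the curve `ub` over the unit time interval. -/
def IsTubeBound (A : ℝ × V → V) (B : ℝ × V → W →L[ℝ] V) (ub : ℝ → V) (K : ℝ) : Prop :=
  ∀ s ∈ Icc (0 : ℝ) 1, ∀ v, ‖v - ub s‖ ≤ 1 →
    ‖A (s, v)‖ ≤ K ∧ ‖fderiv ℝ A (s, v)‖ ≤ K ∧ ‖B (s, v)‖ ≤ K ∧ ‖fderiv ℝ B (s, v)‖ ≤ K

lemma exists_isTubeBound [ProperSpace V] (hA : ContDiff ℝ 1 A) (hB : ContDiff ℝ 1 B)
    (hub : Continuous ub) : ∃ K, 1 ≤ K ∧ IsTubeBound A B ub K := by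
  let total : ℝ × V → ℝ := fun x => ‖A x‖ + ‖fderiv ℝ A x‖ + (‖B x‖ + ‖fderiv ℝ B x‖)
  have htotal : Continuous total :=
    (hA.continuous.norm.add (hA.continuous_fderiv one_ne_zero).norm).add
      (hB.continuous.norm.add (hB.continuous_fderiv one_ne_zero).norm)
  let shift : ℝ × V → ℝ × V := fun x => (x.1, ub x.1 + x.2)
  have hshift : Continuous shift := by fun_prop
  have htube : IsCompact (shift '' (Icc (0 : ℝ) 1 ×ˢ Metric.closedBall (0 : V) 1)) :=
    (isCompact_Icc.prod (isCompact_closedBall _ _)).image hshift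
  obtain ⟨K, hK⟩ := htube.bddAbove_image htotal.continuousOn
  refine ⟨max K 1, le_max_right _ _, fun s hs v hv => ?_⟩
  have h : ‖A (s, v)‖ + ‖fderiv ℝ A (s, v)‖ + (‖B (s, v)‖ + ‖fderiv ℝ B (s, v)‖) ≤ K :=
    hK ⟨(s, v), ⟨(s, v - ub s), ⟨hs, by simpa using hv⟩, by simp [shift]⟩, rfl⟩
  have hA₀ := norm_nonneg (A (s, v))
  have hA₁ := norm_nonneg (fderiv ℝ A (s, v))
  have hB₀ := norm_nonneg (B (s, v))
  have hB₁ := norm_nonneg (fderiv ℝ B (s, v))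
  refine ⟨?_, ?_, ?_, ?_⟩ <;> exact le_max_of_le_left (by linarith)

lemma IsTubeBound.norm_sub_le (hK : IsTubeBound A B ub K) (hA : ContDiff ℝ 1 A) {s : ℝ}
    (hs : s ∈ Icc (0 : ℝ) 1) {v : V} (hv : ‖v - ub s‖ ≤ 1) :
    ‖A (s, v) - A (s, ub s)‖ ≤ K * ‖v - ub s‖ := by
  refine (convex_closedBall (ub s) 1).norm_image_sub_le_of_norm_hasFDerivWithin_le
    (f := fun v => A (s, v)) (f' := fun v => (fderiv ℝ A (s, v)).comp (.inr ℝ ℝ V))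
    (fun x _ => ?_) (fun x hx => ?_) (Metric.mem_closedBall_self zero_le_one)
    (by simpa [dist_eq_norm] using hv)
  · exact ((hA.differentiable one_ne_zero (s, x)).hasFDerivAt.comp x
      (hasFDerivAt_prodMk_right s x)).hasFDerivWithinAt
  · refine ((fderiv ℝ A (s, x)).opNorm_comp_le _).trans ?_
    have hx' := (hK s hs x (by simpa [dist_eq_norm] using hx)).2.1
    exact (mul_le_mul hx' (ContinuousLinearMap.norm_inr_le_one ℝ ℝ V) (norm_nonneg _)
      ((norm_nonneg _).trans hx')).trans_eq (mul_one K)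

/-- The deviation of `u` from the averaged trajectory `ub`, corrected by the first order effect
`B (s, u s) (Ω s)` of the oscillation. The derivative of `Ω` is not small although `Ω` is: this
correction removes it from the equation of motion. -/
def correctedError (B : ℝ × V → W →L[ℝ] V) (ub : ℝ → V) (Ω : ℝ → W) (u : ℝ → V) (s : ℝ) : V :=
  u s - ub s - B (s, u s) (Ω s)

variable {Ω Ω' : ℝ → W} {u : ℝ → V} {s : ℝ}

lemma hasDerivAt_correctedError (hB : ContDiff ℝ 1 B) (hub : HasDerivAt ub (A (s, ub s)) s)
    (hΩ : HasDerivAt Ω (Ω' s) s)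
    (hu : HasDerivAt u (A (s, u s) + B (s, u s) (Ω' s)) s) :
    HasDerivAt (correctedError B ub Ω u) (A (s, u s) - A (s, ub s) -
      fderiv ℝ B (s, u s) (1, A (s, u s) + B (s, u s) (Ω' s)) (Ω s)) s := by
  have hBu := (hB.differentiable one_ne_zero (s, u s)).hasFDerivAt.comp_hasDerivAt s
    ((hasDerivAt_id s).prodMk hu)
  refine ((hu.sub hub).sub (hBu.clm_apply hΩ)).congr_deriv ?_
  simp only [Function.comp_apply, id_eq]
  abel

variable {C η : ℝ}

lemma norm_deriv_correctedError_le (hK : IsTubeBound A B ub K) (hA : ContDiff ℝ 1 A)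
    (hs : s ∈ Icc (0 : ℝ) 1) (hus : ‖u s - ub s‖ ≤ 1) (hΩ : ‖Ω s‖ ≤ η) (hΩ' : ‖Ω' s‖ ≤ C) :
    ‖A (s, u s) - A (s, ub s) -
        fderiv ℝ B (s, u s) (1, A (s, u s) + B (s, u s) (Ω' s)) (Ω s)‖ ≤
      K * ‖correctedError B ub Ω u s‖ + K * (K + (1 + (K + K * C))) * η := by
  obtain ⟨hA₀, -, hB₀, hB₁⟩ := hK s hs _ hus
  have hK₀ := (norm_nonneg _).trans hA₀
  have hC₀ := (norm_nonneg _).trans hΩ'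
  have hBΩ : ‖B (s, u s) (Ω s)‖ ≤ K * η := (B (s, u s)).le_of_opNorm_le_of_le hB₀ hΩ
  have hdev : ‖u s - ub s‖ ≤ ‖correctedError B ub Ω u s‖ + K * η := by
    have := norm_add_le (correctedError B ub Ω u s) (B (s, u s) (Ω s))
    rw [correctedError, sub_add_cancel] at this
    exact this.trans (add_le_add le_rfl hBΩ)
  have hvel : ‖((1 : ℝ), A (s, u s) + B (s, u s) (Ω' s))‖ ≤ 1 + (K + K * C) := by
    have hu' : ‖A (s, u s) + B (s, u s) (Ω' s)‖ ≤ K + K * C :=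
      norm_add_le_of_le hA₀ ((B (s, u s)).le_of_opNorm_le_of_le hB₀ hΩ')
    rw [Prod.norm_mk, norm_one]
    exact max_le (le_add_of_nonneg_right (by positivity)) (hu'.trans (by linarith))
  have hDB : ‖fderiv ℝ B (s, u s) (1, A (s, u s) + B (s, u s) (Ω' s)) (Ω s)‖ ≤
      K * (1 + (K + K * C)) * η :=
    ContinuousLinearMap.le_of_opNorm_le_of_le _
      ((fderiv ℝ B (s, u s)).le_of_opNorm_le_of_le hB₁ hvel) hΩ
  calc _ ≤ K * ‖u s - ub s‖ + K * (1 + (K + K * C)) * η :=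
        norm_sub_le_of_le (hK.norm_sub_le hA hs hus) hDB
    _ ≤ K * (‖correctedError B ub Ω u s‖ + K * η) + K * (1 + (K + K * C)) * η := by gcongr
    _ = _ := by ring

/-- The a priori bound for the deviation from the averaged trajectory at times in `[0, 1]`, given a
tube bound `K`, a bound `C` for the derivative of the oscillation, the initial deviation `d` and the
size `η` of the oscillation. -/
def averagingError (K C d η : ℝ) : ℝ :=
  gronwallBound (d + K * η) K (K * (K + (1 + (K + K * C))) * η) 1 + K * η

lemma tendsto_averagingError (hK : K ≠ 0) (C : ℝ) {d η : ℕ → ℝ} (hd : Tendsto d atTop (𝓝 0))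
    (hη : Tendsto η atTop (𝓝 0)) :
    Tendsto (fun n => averagingError K C (d n) (η n)) atTop (𝓝 0) := by
  simp only [averagingError, gronwallBound_of_K_ne_0 hK]
  have hKη := hη.const_mul K
  have hε := (((hη.const_mul (K * (K + (1 + (K + K * C))))).div_const K).mul_const
    (Real.exp (K * 1) - 1))
  simpa using (((hd.add hKη).mul_const (Real.exp (K * 1))).add hε).add hKη

lemma norm_sub_le_averagingError (hK : IsTubeBound A B ub K) (hA : ContDiff ℝ 1 A)
    (hB : ContDiff ℝ 1 B) (hub : ∀ s, HasDerivAt ub (A (s, ub s)) s)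
    (hΩ : ∀ s, HasDerivAt Ω (Ω' s) s) (hΩη : ∀ s ∈ Icc (0 : ℝ) 1, ‖Ω s‖ ≤ η)
    (hΩC : ∀ s ∈ Icc (0 : ℝ) 1, ‖Ω' s‖ ≤ C) {τ : ℝ} (hτ : τ ∈ Icc (0 : ℝ) 1)
    (hu : ∀ s ∈ Icc 0 τ, HasDerivAt u (A (s, u s) + B (s, u s) (Ω' s)) s)
    (htube : ∀ s ∈ Icc 0 τ, ‖u s - ub s‖ ≤ 1) :
    ‖u τ - ub τ‖ ≤ averagingError K C ‖u 0 - ub 0‖ η := by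
  have hsub : Icc 0 τ ⊆ Icc (0 : ℝ) 1 := Icc_subset_Icc_right hτ.2
  have h0 : (0 : ℝ) ∈ Icc 0 τ := ⟨le_rfl, hτ.1⟩
  have hKpos : 0 ≤ K := (norm_nonneg _).trans (hK 0 (hsub h0) _ (htube 0 h0)).1
  have hη : 0 ≤ η := (norm_nonneg _).trans (hΩη 0 (hsub h0))
  have hC : 0 ≤ C := (norm_nonneg _).trans (hΩC 0 (hsub h0))
  have hBΩ : ∀ s ∈ Icc 0 τ, ‖B (s, u s) (Ω s)‖ ≤ K * η := fun s hs =>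
    (B (s, u s)).le_of_opNorm_le_of_le (hK s (hsub hs) _ (htube s hs)).2.2.1 (hΩη s (hsub hs))
  have hderiv := fun s hs => hasDerivAt_correctedError hB (hub s) (hΩ s) (hu s hs)
  have hgronwall := norm_le_gronwallBound_of_norm_deriv_right_le
    (fun s hs => (hderiv s hs).continuousAt.continuousWithinAt)
    (fun s hs => (hderiv s (Ico_subset_Icc_self hs)).hasDerivWithinAt)
    (norm_sub_le_of_le le_rfl (hBΩ 0 h0))
    (fun s hs => norm_deriv_correctedError_le hK hA (hsub (Ico_subset_Icc_self hs))
      (htube s (Ico_subset_Icc_self hs)) (hΩη s (hsub (Ico_subset_Icc_self hs)))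
      (hΩC s (hsub (Ico_subset_Icc_self hs)))) τ ⟨hτ.1, le_rfl⟩
  have hmono := gronwallBound_mono (δ := ‖u 0 - ub 0‖ + K * η)
    (ε := K * (K + (1 + (K + K * C))) * η) (by positivity) (by positivity) hKpos
    (show τ - 0 ≤ 1 by simpa using hτ.2)
  have hsplit := norm_add_le_of_le (hgronwall.trans hmono) (hBΩ τ ⟨hτ.1, le_rfl⟩)
  rwa [correctedError, sub_add_cancel] at hsplit

omit [NormedSpace ℝ V] in
/-- The continuity method: the solution cannot leave the tube, because as long as it stays inside,
`g` stays away from zero and the a priori bound puts the solution strictly inside. -/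
lemma forall_mem_Icc_of_bootstrap {c ρ : ℝ} {g : ℝ → ℂ} (hg : Continuous g) (hub : Continuous ub)
    (hu : ∀ s, g s ≠ 0 → ContinuousAt u s) (hc : 0 < c)
    (hlow : ∀ s ∈ Icc (0 : ℝ) 1, g s ≠ 0 → ‖u s - ub s‖ ≤ ρ → c ≤ ‖g s‖) (hg0 : g 0 ≠ 0)
    (h0 : ‖u 0 - ub 0‖ ≤ ρ)
    (hstep : ∀ τ ∈ Icc (0 : ℝ) 1, (∀ s ∈ Icc 0 τ, g s ≠ 0 ∧ ‖u s - ub s‖ ≤ ρ) →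
      ‖u τ - ub τ‖ < ρ) :
    ∀ s ∈ Icc (0 : ℝ) 1, g s ≠ 0 ∧ ‖u s - ub s‖ ≤ ρ := by
  have hne : ∀ s, c ≤ ‖g s‖ → g s ≠ 0 := fun s hs => norm_pos_iff.1 (hc.trans_le hs)
  suffices Icc (0 : ℝ) 1 ⊆ {s | c ≤ ‖g s‖} ∩ (fun s => ‖u s - ub s‖) ⁻¹' Iic ρ from
    fun s hs => ⟨hne s (this hs).1, (this hs).2⟩
  have hclosed : IsClosed ({s | c ≤ ‖g s‖} ∩ (fun s => ‖u s - ub s‖) ⁻¹' Iic ρ) :=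
    ContinuousOn.preimage_isClosed_of_isClosed
      (fun s hs => ((hu s (hne s hs)).sub hub.continuousAt).norm.continuousWithinAt)
      (isClosed_le continuous_const hg.norm) isClosed_Iic
  refine (hclosed.inter isClosed_Icc).Icc_subset_of_forall_mem_nhdsGT_of_Icc_subset
    ⟨hlow 0 ⟨le_rfl, zero_le_one⟩ hg0 h0, h0⟩ fun τ hτ hsub => ?_
  have hgτ := hne τ (hsub ⟨hτ.1, le_rfl⟩).1
  have hlt := hstep τ (Ico_subset_Icc_self hτ) fun s hs => ⟨hne s (hsub hs).1, (hsub hs).2⟩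
  filter_upwards [nhdsWithin_le_nhds (hg.continuousAt.eventually_ne hgτ),
    nhdsWithin_le_nhds (((hu τ hgτ).sub hub.continuousAt).norm.eventually_lt_const hlt),
    Ioo_mem_nhdsGT hτ.2] with s hgs hus hs
  exact ⟨hlow s ⟨hτ.1.trans hs.1.le, hs.2.le⟩ hgs hus.le, hus.le⟩

/-- The averaging principle. The bound `hlow` keeps the solution away from the zeros of `g n`, where
the equation of motion may fail. -/
theorem tendsto_of_averaging [ProperSpace V] (hA : ContDiff ℝ 1 A) (hB : ContDiff ℝ 1 B)
    (hub : ∀ s, HasDerivAt ub (A (s, ub s)) s) {η : ℕ → ℝ} (hη : Tendsto η atTop (𝓝 0))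
    {Ω Ω' : ℕ → ℝ → W} (hΩ : ∀ n s, HasDerivAt (Ω n) (Ω' n s) s)
    (hΩη : ∀ n, ∀ s ∈ Icc (0 : ℝ) 1, ‖Ω n s‖ ≤ η n)
    (hΩC : ∀ n, ∀ s ∈ Icc (0 : ℝ) 1, ‖Ω' n s‖ ≤ C) {u : ℕ → ℝ → V} {g : ℕ → ℝ → ℂ}
    (hg : ∀ n, Continuous (g n))
    (hu : ∀ n s, g n s ≠ 0 → HasDerivAt (u n) (A (s, u n s) + B (s, u n s) (Ω' n s)) s)
    {ρ : ℝ} (hρ : 0 < ρ) (hρ1 : ρ ≤ 1)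
    (hlow : ∀ n, ∃ c > 0, ∀ s ∈ Icc (0 : ℝ) 1, g n s ≠ 0 → ‖u n s - ub s‖ ≤ ρ → c ≤ ‖g n s‖)
    (h0 : Tendsto (fun n => u n 0) atTop (𝓝 (ub 0))) (hg0 : ∀ᶠ n in atTop, g n 0 ≠ 0) :
    Tendsto (fun n => u n 1) atTop (𝓝 (ub 1)) := by
  have hubc : Continuous ub := continuous_iff_continuousAt.2 fun s => (hub s).continuousAt
  obtain ⟨K, hK1, hK⟩ := exists_isTubeBound hA hB hubc
  have hd := tendsto_iff_norm_sub_tendsto_zero.1 h0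
  have herr := tendsto_averagingError (zero_lt_one.trans_le hK1).ne' C hd hη
  have h1 : (1 : ℝ) ∈ Icc (0 : ℝ) 1 := right_mem_Icc.2 zero_le_one
  have hend : ∀ᶠ n in atTop, ‖u n 1 - ub 1‖ ≤ averagingError K C ‖u n 0 - ub 0‖ (η n) := by
    filter_upwards [herr.eventually_lt_const hρ, hd.eventually_lt_const hρ, hg0] with n hr hd0 hgn
    obtain ⟨c, hc, hlow⟩ := hlow n
    have hapriori : ∀ τ ∈ Icc (0 : ℝ) 1, (∀ s ∈ Icc 0 τ, g n s ≠ 0 ∧ ‖u n s - ub s‖ ≤ ρ) →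
        ‖u n τ - ub τ‖ ≤ averagingError K C ‖u n 0 - ub 0‖ (η n) := fun τ hτ hs =>
      norm_sub_le_averagingError hK hA hB hub (hΩ n) (hΩη n) (hΩC n) hτ
        (fun s h => hu n s (hs s h).1) fun s h => (hs s h).2.trans hρ1
    have hstay := forall_mem_Icc_of_bootstrap (hg n) hubc (fun s h => (hu n s h).continuousAt) hc
      hlow hgn hd0.le fun τ hτ hs => (hapriori τ hτ hs).trans_lt hr
    exact hapriori 1 h1 hstay
  exact tendsto_iff_norm_sub_tendsto_zero.2
    (squeeze_zero' (.of_forall fun n => norm_nonneg _) hend herr)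

end Averaging

end FisherHartwig

/-! ### Averaging along a motion of the jumps -/

namespace FisherHartwig

open Filter Topology Set

/-- The space of the quantities followed along a motion of the jumps: the three families of
amplitudes, the diagonal of the kernel, the determinant and the leading coefficient. -/
abbrev JumpState (ι : Type*) : Type _ :=
  (ι → ℂ) × (ι → ℂ) × (ι → ℂ) × (ι → ℂ) × ℂ × ℂ

namespace JumpState

variable {ι : Type*} (v : JumpState ι)

/-- The component of a state that stands for `JumpPattern.amp`. -/
abbrev amp : ι → ℂ := v.1

/-- The component of a state that stands for `JumpPattern.dualAmp`. -/
abbrev dualAmp : ι → ℂ := v.2.1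

/-- The component of a state that stands for `JumpPattern.mixedAmp`. -/
abbrev mixedAmp : ι → ℂ := v.2.2.1

/-- The component of a state that stands for `JumpPattern.diagKernel`. -/
abbrev diagKernel : ι → ℂ := v.2.2.2.1

/-- The component of a state that stands for a multiple of `JumpPattern.phasedDet`. -/
abbrev det : ℂ := v.2.2.2.2.1

/-- The component of a state that stands for `JumpPattern.leadingCoeff`. -/
abbrev leadingCoeff : ℂ := v.2.2.2.2.2

variable [Fintype ι]

lemma norm_det_le : ‖v.det‖ ≤ ‖v‖ :=
  (norm_fst_le v.2.2.2.2).trans <| (norm_snd_le v.2.2.2).trans <| (norm_snd_le v.2.2).trans <|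
    (norm_snd_le v.2).trans (norm_snd_le v)

lemma norm_leadingCoeff_le : ‖v.leadingCoeff‖ ≤ ‖v‖ :=
  (norm_snd_le v.2.2.2.2).trans <| (norm_snd_le v.2.2.2).trans <| (norm_snd_le v.2.2).trans <|
    (norm_snd_le v.2).trans (norm_snd_le v)

end JumpState

section Fields

variable {ι : Type*} [Fintype ι]

/-- The non-oscillating part of the velocity of the state `v` when jumps at the angles `θ` move with
speeds `δ`, for a symbol with winding number `ν`. -/
def averagedVelocity (ν : ℤ) (θ δ : ι → ℝ) (v : JumpState ι) : JumpState ι :=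
  (fun k => (-(Complex.I * ν * δ k) + ∑ i, (δ i - δ k) *
      (2 * interaction θ k i * v.mixedAmp i)) * v.amp k,
    fun k => (-(Complex.I * ν * δ k) + 2 * ∑ i, δ i * v.mixedAmp i + ∑ i, (δ i - δ k) *
      (2 * interaction θ i k * v.mixedAmp i)) * v.dualAmp k,
    0,
    fun k => -∑ i, (δ i - δ k) * (interaction θ k i * interaction θ i k *
      (2 * v.mixedAmp i * v.mixedAmp k)),
    (∑ i, δ i * v.diagKernel i) * v.det,
    -(∑ i, δ i * v.mixedAmp i) * v.leadingCoeff)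

/-- The oscillating part of the velocity of the state `v`, as a linear function of the family `ω` of
the oscillating coefficients `phaseRate N θ δ`. -/
def oscillatingVelocity (θ : ι → ℝ) (v : JumpState ι) : (ι → ι → ℂ) →L[ℝ] JumpState ι :=
  let entry (k i : ι) : (ι → ι → ℂ) →L[ℝ] ℂ :=
    ContinuousLinearMap.proj (R := ℝ) (φ := fun _ : ι => ℂ) i ∘L .proj k
  .prod (.pi fun k => -∑ i, (2 * interaction θ k i * (v.mixedAmp k * v.amp i)) • entry k i) <|
  .prod (.pi fun k => ∑ i, (2 * interaction θ i k * (v.mixedAmp k * v.dualAmp i)) • entry i k) <|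
  .prod (.pi fun k => ∑ i, ((interaction θ i k * (v.dualAmp i * v.amp k)) • entry i k -
    (interaction θ k i * (v.dualAmp k * v.amp i)) • entry k i)) <|
  .prod (.pi fun k => ∑ i, (interaction θ k i * interaction θ i k) •
    ((v.dualAmp k * v.amp i) • entry k i - (v.dualAmp i * v.amp k) • entry i k)) 0

lemma oscillatingVelocity_apply (θ : ι → ℝ) (v : JumpState ι) (ω : ι → ι → ℂ) :
    oscillatingVelocity θ v ω =
      (fun k => -∑ i, ω k i * (2 * interaction θ k i * (v.mixedAmp k * v.amp i)),
        fun k => ∑ i, ω i k * (2 * interaction θ i k * (v.mixedAmp k * v.dualAmp i)),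
        fun k => ∑ i, (ω i k * (interaction θ i k * (v.dualAmp i * v.amp k)) -
          ω k i * (interaction θ k i * (v.dualAmp k * v.amp i))),
        fun k => ∑ i, (interaction θ k i * interaction θ i k) *
          (ω k i * (v.dualAmp k * v.amp i) - ω i k * (v.dualAmp i * v.amp k)),
        0, 0) := by
  simp only [oscillatingVelocity, ContinuousLinearMap.prod_apply, ContinuousLinearMap.coe_pi',
    neg_apply, sum_apply, sub_apply, smul_apply, ContinuousLinearMap.comp_apply,
    ContinuousLinearMap.proj_apply, smul_eq_mul, mul_comm (ω _ _)]
  rfl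

lemma contDiff_of_hasDerivAt {E : Type*} [NormedAddCommGroup E] [NormedSpace ℝ E] {f f' : ℝ → E}
    (hf : ∀ s, HasDerivAt f (f' s) s) (hf' : Continuous f') : ContDiff ℝ 1 f := by
  rw [contDiff_one_iff_deriv, funext fun s => (hf s).deriv]
  exact ⟨fun s => (hf s).differentiableAt, hf'⟩

variable {θ δ : ℝ → ι → ℝ} (hθ : ∀ s k, HasDerivAt (fun t => θ t k) (δ s k) s)
  (hδ : ∀ k, ContDiff ℝ 1 (fun s => δ s k)) (hz : ∀ s, Function.Injective (jumpPoint (θ s)))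
include hθ hδ

omit [Fintype ι] in
lemma contDiff_jumpPoint (k : ι) : ContDiff ℝ 1 (fun s => jumpPoint (θ s) k) :=
  (contDiff_const.mul (Complex.ofRealCLM.contDiff.comp
    (contDiff_of_hasDerivAt (fun s => hθ s k) (hδ k).continuous))).cexp

include hz

omit [Fintype ι] in
lemma contDiff_interaction (k i : ι) : ContDiff ℝ 1 (fun s => interaction (θ s) k i) := by
  unfold interaction
  rcases eq_or_ne k i with rfl | hki
  · simpa using contDiff_const
  · simp only [div_eq_mul_inv]
    exact (contDiff_jumpPoint hθ hδ i).mul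
      (((contDiff_jumpPoint hθ hδ k).sub (contDiff_jumpPoint hθ hδ i)).inv
        fun s => sub_ne_zero.2 ((hz s).ne hki))

lemma contDiff_averagedVelocity (ν : ℤ) :
    ContDiff ℝ 1 (fun p : ℝ × JumpState ι => averagedVelocity ν (θ p.1) (δ p.1) p.2) := by
  have hW (k i : ι) : ContDiff ℝ 1 (fun p : ℝ × JumpState ι => interaction (θ p.1) k i) :=
    (contDiff_interaction hθ hδ hz k i).comp contDiff_fst
  have hδ' (k : ι) : ContDiff ℝ 1 (fun p : ℝ × JumpState ι => (δ p.1 k : ℂ)) :=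
    Complex.ofRealCLM.contDiff.comp ((hδ k).comp contDiff_fst)
  unfold averagedVelocity
  refine .prodMk ?_ (.prodMk ?_ (.prodMk ?_ (.prodMk ?_ (.prodMk ?_ ?_))))
  all_goals fun_prop

lemma contDiff_oscillatingVelocity :
    ContDiff ℝ 1 (fun p : ℝ × JumpState ι => oscillatingVelocity (θ p.1) p.2) := by
  have hW (k i : ι) : ContDiff ℝ 1 (fun p : ℝ × JumpState ι => interaction (θ p.1) k i) :=
    (contDiff_interaction hθ hδ hz k i).comp contDiff_fst
  refine contDiff_clm_apply_iff.2 fun ω => ?_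
  simp only [oscillatingVelocity_apply]
  refine .prodMk ?_ (.prodMk ?_ (.prodMk ?_ (.prodMk ?_ (.prodMk ?_ ?_))))
  all_goals fun_prop

end Fields

lemma exists_pos_le_norm_of_ne_zero {f : ℝ → ℂ} (hf : Continuous f) (h0 : ∀ s, f s ≠ 0) :
    ∃ m > 0, ∀ s ∈ Icc (0 : ℝ) 1, m ≤ ‖f s‖ := by
  obtain ⟨x, -, hmin⟩ := (isCompact_Icc (a := (0 : ℝ)) (b := 1)).exists_isMinOn
    ⟨0, left_mem_Icc.2 zero_le_one⟩ hf.norm.continuousOn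
  exact ⟨‖f x‖, norm_pos_iff.2 (h0 x), fun s hs => hmin hs⟩

lemma half_le_norm_of_norm_sub_le {E : Type*} [SeminormedAddCommGroup E] {x y : E} {m : ℝ}
    (hy : m ≤ ‖y‖) (h : ‖x - y‖ ≤ m / 2) : m / 2 ≤ ‖x‖ := by
  linarith [norm_sub_norm_le y x, norm_sub_rev x y]

section PhaseRate

variable {ι : Type*}

lemma norm_I_div_mul_phaseRatio (N : ℕ) (θ : ι → ℝ) (k i : ι) :
    ‖Complex.I / ((N : ℂ) + 1) * phaseRatio N θ k i‖ = 1 / ((N : ℝ) + 1) := by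
  rw [norm_mul, norm_phaseRatio, mul_one, norm_div, Complex.norm_I]
  exact_mod_cast congrArg (1 / ·) (Complex.norm_natCast (N + 1))

lemma exists_norm_phaseRate_le [Fintype ι] {θ δ : ℝ → ι → ℝ}
    (hδ : ∀ k, Continuous (fun s => δ s k)) :
    ∃ C, ∀ N, ∀ s ∈ Icc (0 : ℝ) 1, ‖phaseRate N (θ s) (δ s)‖ ≤ C := by
  obtain ⟨C, hC⟩ := (isCompact_Icc (a := (0 : ℝ)) (b := 1)).bddAbove_image
    (f := fun s => ‖δ s‖) (continuous_pi hδ).norm.continuousOn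
  have hδC (s : ℝ) (hs : s ∈ Icc (0 : ℝ) 1) (k : ι) : |δ s k| ≤ C :=
    (norm_le_pi_norm (δ s) k).trans (hC (mem_image_of_mem _ hs))
  have h0 : (0 : ℝ) ∈ Icc (0 : ℝ) 1 := left_mem_Icc.2 zero_le_one
  have hC0 : 0 ≤ C := (norm_nonneg _).trans (hC (mem_image_of_mem _ h0))
  refine ⟨C + C, fun N s hs => ?_⟩
  refine (pi_norm_le_iff_of_nonneg (by positivity)).2 fun k =>
    (pi_norm_le_iff_of_nonneg (by positivity)).2 fun i => ?_
  rw [phaseRate, norm_mul, norm_phaseRatio, mul_one, ← Complex.ofReal_sub, Complex.norm_real]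
  exact norm_sub_le_of_le (hδC s hs i) (hδC s hs k)

end PhaseRate

namespace JumpPattern

variable {ι : Type*} [Fintype ι] (P : JumpPattern ι)

/-- The state of a Toeplitz matrix of size `N + 1`, with its determinant rescaled by `κ N`. -/
def state (κ : ℕ → ℂ) (N : ℕ) (θ : ι → ℝ) : JumpState ι :=
  (P.amp θ N, P.dualAmp θ N, P.mixedAmp θ N, P.diagKernel θ N, κ N * P.phasedDet θ N,
    P.leadingCoeff θ N)

lemma norm_phasedDet (θ : ι → ℝ) (N : ℕ) : ‖P.phasedDet θ N‖ = ‖(P.matrix θ N).det‖ := by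
  have phase_eq : -Complex.I * ((N : ℂ) + 1) * (∑ k, (θ k : ℂ)) / 2 =
      ((-((N : ℝ) + 1) * (∑ k, θ k) / 2 : ℝ) : ℂ) * Complex.I := by
    push_cast
    ring
  rw [phasedDet, norm_mul, phase_eq, Complex.norm_exp_ofReal_mul_I, mul_one]

lemma adjugate_zero_zero {θ : ι → ℝ} {N : ℕ} (hA : (P.matrix θ N).det ≠ 0) :
    (P.matrix θ N).adjugate 0 0 = P.leadingCoeff θ N * (P.matrix θ N).det := by
  rw [leadingCoeff, form, invForm_single_single, Matrix.inv_def, Matrix.smul_apply,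
    Ring.inverse_eq_inv', smul_eq_mul]
  field_simp

lemma det_mul_adjugate_ne_zero_iff {θ : ι → ℝ} {N : ℕ} :
    (P.matrix θ N).det * (P.matrix θ N).adjugate 0 0 ≠ 0 ↔
      (P.matrix θ N).det ≠ 0 ∧ P.leadingCoeff θ N ≠ 0 := by
  rw [mul_ne_zero_iff]
  refine and_congr_right fun hA => ?_
  rw [P.adjugate_zero_zero hA, mul_ne_zero_iff, and_iff_left hA]

variable (κ : ℕ → ℂ)

lemma exists_pos_le_norm_det_mul_adjugate {N : ℕ} (hκ : κ N ≠ 0) {m : ℝ} (hm : 0 < m) :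
    ∃ c > 0, ∀ θ : ι → ℝ, (P.matrix θ N).det ≠ 0 → m ≤ ‖(P.state κ N θ).det‖ →
      m ≤ ‖(P.state κ N θ).leadingCoeff‖ →
      c ≤ ‖(P.matrix θ N).det * (P.matrix θ N).adjugate 0 0‖ := by
  have hκ' := norm_pos_iff.2 hκ
  refine ⟨(m / ‖κ N‖) ^ 2 * m, by positivity, fun θ hA hdet hlead => ?_⟩
  have hdet' : m / ‖κ N‖ ≤ ‖(P.matrix θ N).det‖ := by
    rw [div_le_iff₀' hκ', ← P.norm_phasedDet, ← norm_mul]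
    exact hdet
  calc (m / ‖κ N‖) ^ 2 * m ≤ ‖(P.matrix θ N).det‖ ^ 2 * ‖P.leadingCoeff θ N‖ := by
        gcongr
        exact hlead
    _ = ‖(P.matrix θ N).det * (P.matrix θ N).adjugate 0 0‖ := by
        rw [P.adjugate_zero_zero hA, norm_mul, norm_mul]
        ring

variable {κ} in
lemma eventually_det_mul_adjugate_ne_zero {θ : ι → ℝ} {v : JumpState ι}
    (h : Tendsto (fun N => P.state κ N θ) atTop (𝓝 v)) (hdet : v.det ≠ 0)
    (hlead : v.leadingCoeff ≠ 0) :
    ∀ᶠ N in atTop, (P.matrix θ N).det * (P.matrix θ N).adjugate 0 0 ≠ 0 := by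
  have hdet' := h.snd_nhds.snd_nhds.snd_nhds.snd_nhds.fst_nhds.eventually_ne hdet
  have hlead' := h.snd_nhds.snd_nhds.snd_nhds.snd_nhds.snd_nhds.eventually_ne hlead
  filter_upwards [hdet', hlead'] with N hd hl
  exact P.det_mul_adjugate_ne_zero_iff.2 ⟨left_ne_zero_of_mul (right_ne_zero_of_mul hd), hl⟩

variable {θ δ : ℝ → ι → ℝ} (hθ : ∀ s k, HasDerivAt (fun t => θ t k) (δ s k) s)
include hθ

lemma continuous_matrix (N : ℕ) : Continuous (fun s => P.matrix (θ s) N) :=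
  _root_.continuous_matrix fun _ _ => continuous_iff_continuousAt.2 fun s =>
    (P.hasDerivAt_coeff (hθ s) _).continuousAt

variable (hz : ∀ s, Function.Injective (jumpPoint (θ s)))
include hz

lemma hasDerivAt_state {N : ℕ} {s : ℝ} (hA : (P.matrix (θ s) N).det ≠ 0)
    (hb : P.leadingCoeff (θ s) N ≠ 0) : HasDerivAt (fun t => P.state κ N (θ t))
      (averagedVelocity P.winding (θ s) (δ s) (P.state κ N (θ s)) +
        oscillatingVelocity (θ s) (P.state κ N (θ s)) (phaseRate N (θ s) (δ s))) s := by
  have hamp := hasDerivAt_pi.2 fun k => P.hasDerivAt_amp (hθ s) hA hb (hz s) k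
  have hdual := hasDerivAt_pi.2 fun k => P.hasDerivAt_dualAmp (hθ s) hA hb (hz s) k
  have hmixed := hasDerivAt_pi.2 fun k => P.hasDerivAt_mixedAmp (hθ s) hA hb (hz s) k
  have hdiag := hasDerivAt_pi.2 fun k => P.hasDerivAt_diagKernel (hθ s) hA hb (hz s) k
  have hdet := (P.hasDerivAt_phasedDet (hθ s) hA).const_mul (κ N)
  have hlead := P.hasDerivAt_leadingCoeff (hθ s) hA hb
  refine (hamp.prodMk (hdual.prodMk (hmixed.prodMk (hdiag.prodMk
    (hdet.prodMk hlead))))).congr_deriv ?_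
  simp only [oscillatingVelocity_apply, averagedVelocity, state, Prod.mk_add_mk,
    zero_add, add_zero, sub_eq_add_neg]
  refine Prod.ext rfl (Prod.ext rfl (Prod.ext rfl (Prod.ext rfl (Prod.ext ?_ rfl))))
  ring

theorem tendsto_state (hκ : ∀ N, κ N ≠ 0) (hδ : ∀ k, ContDiff ℝ 1 (fun s => δ s k))
    {ub : ℝ → JumpState ι}
    (hub : ∀ s, HasDerivAt ub (averagedVelocity P.winding (θ s) (δ s) (ub s)) s)
    (hdet : ∀ s, (ub s).det ≠ 0) (hlead : ∀ s, (ub s).leadingCoeff ≠ 0)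
    (h0 : Tendsto (fun N => P.state κ N (θ 0)) atTop (𝓝 (ub 0))) :
    Tendsto (fun N => P.state κ N (θ 1)) atTop (𝓝 (ub 1)) := by
  have hubc : Continuous ub := continuous_iff_continuousAt.2 fun s => (hub s).continuousAt
  obtain ⟨C, hC⟩ := exists_norm_phaseRate_le (θ := θ) fun k => (hδ k).continuous
  obtain ⟨m₁, hm₁, hdet_le⟩ := exists_pos_le_norm_of_ne_zero
    (f := fun s => (ub s).det) (by fun_prop) hdet
  obtain ⟨m₂, hm₂, hlead_le⟩ := exists_pos_le_norm_of_ne_zero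
    (f := fun s => (ub s).leadingCoeff) (by fun_prop) hlead
  set m := min m₁ m₂
  have hm : 0 < m := lt_min hm₁ hm₂
  refine tendsto_of_averaging (contDiff_averagedVelocity hθ hδ hz P.winding)
    (contDiff_oscillatingVelocity hθ hδ hz) hub tendsto_one_div_add_atTop_nhds_zero_nat
    (Ω := fun N s k i => Complex.I / ((N : ℂ) + 1) * phaseRatio N (θ s) k i)
    (Ω' := fun N s => phaseRate N (θ s) (δ s))
    (fun N s => hasDerivAt_pi.2 fun k => hasDerivAt_pi.2 fun i =>
      hasDerivAt_I_div_mul_phaseRatio (hθ s) N k i)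
    (fun N s _ => (pi_norm_le_iff_of_nonneg (by positivity)).2 fun k =>
      (pi_norm_le_iff_of_nonneg (by positivity)).2 fun i =>
        (norm_I_div_mul_phaseRatio N (θ s) k i).le) hC
    (fun N => (P.continuous_matrix hθ N).matrix_det.mul
      ((P.continuous_matrix hθ N).matrix_adjugate.matrix_elem 0 0))
    (fun N s h => P.hasDerivAt_state κ hθ hz (P.det_mul_adjugate_ne_zero_iff.1 h).1
      (P.det_mul_adjugate_ne_zero_iff.1 h).2)
    (ρ := min 1 (m / 2)) (by positivity) (min_le_left _ _) (fun N => ?_) h0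
    (P.eventually_det_mul_adjugate_ne_zero h0 (hdet 0) (hlead 0))
  obtain ⟨c, hc, hle⟩ := P.exists_pos_le_norm_det_mul_adjugate κ (hκ N) (half_pos hm)
  refine ⟨c, hc, fun s hs hg hρ => ?_⟩
  have hρ' := hρ.trans (min_le_right _ _)
  exact hle (θ s) (P.det_mul_adjugate_ne_zero_iff.1 hg).1
    (half_le_norm_of_norm_sub_le ((min_le_left _ _).trans (hdet_le s hs))
      ((JumpState.norm_det_le _).trans hρ'))
    (half_le_norm_of_norm_sub_le ((min_le_right _ _).trans (hlead_le s hs))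
      ((JumpState.norm_leadingCoeff_le _).trans hρ'))

end JumpPattern

end FisherHartwig

namespace FisherHartwig

open Filter Topology Set

section Chord

variable {ι : Type*} {θ : ι → ℝ} {k i : ι}

lemma jumpPoint_sub_jumpPoint (θ : ι → ℝ) (k i : ι) : jumpPoint θ k - jumpPoint θ i =
    2 * Complex.I * Real.sin ((θ k - θ i) / 2) * Complex.exp (Complex.I * ((θ k + θ i) / 2)) := by
  have two_sin : 2 * Complex.I * Complex.sin ((θ k - θ i) / 2) =
      Complex.exp ((θ k - θ i) / 2 * Complex.I) - Complex.exp (-((θ k - θ i) / 2) * Complex.I) := by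
    rw [← Complex.cos_add_sin_I, Complex.exp_mul_I, Complex.cos_neg, Complex.sin_neg]
    ring
  rw [jumpPoint, jumpPoint]
  push_cast
  rw [two_sin, sub_mul, ← Complex.exp_add, ← Complex.exp_add]
  congr 2 <;> ring

lemma jumpPoint_eq_iff : jumpPoint θ k = jumpPoint θ i ↔ Real.sin ((θ k - θ i) / 2) = 0 := by
  rw [← sub_eq_zero, jumpPoint_sub_jumpPoint]
  simp [Complex.exp_ne_zero, -Complex.ofReal_sin]

lemma interaction_eq (h : jumpPoint θ k ≠ jumpPoint θ i) :
    interaction θ k i = -(1 / 2) - Complex.I / 2 * Real.cot ((θ k - θ i) / 2) := by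
  have hsin : (Real.sin ((θ k - θ i) / 2) : ℂ) ≠ 0 := by
    exact_mod_cast mt jumpPoint_eq_iff.2 h
  have hexp := Complex.exp_ne_zero (Complex.I * ((θ k + θ i) / 2))
  have jumpPoint_eq : jumpPoint θ i = (Real.cos ((θ k - θ i) / 2)
      - Complex.I * Real.sin ((θ k - θ i) / 2)) * Complex.exp (Complex.I * ((θ k + θ i) / 2)) := by
    have h := Complex.exp_mul_I (-((θ k - θ i) / 2 : ℝ))
    rw [Complex.cos_neg, Complex.sin_neg] at h
    push_cast at h ⊢
    rw [show Complex.cos ((θ k - θ i) / 2) - Complex.I * Complex.sin ((θ k - θ i) / 2) =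
      Complex.exp (-((θ k - θ i) / 2) * Complex.I) by rw [h]; ring, ← Complex.exp_add, jumpPoint]
    congr 1
    ring
  rw [interaction, jumpPoint_sub_jumpPoint, Real.cot_eq_cos_div_sin, jumpPoint_eq,
    mul_div_mul_right _ _ hexp]
  push_cast at hsin ⊢
  field_simp
  linear_combination Complex.cos ((θ k - θ i) / 2) * Complex.I_sq

lemma interaction_mul_interaction_swap (h : jumpPoint θ k ≠ jumpPoint θ i) :
    interaction θ k i * interaction θ i k = 1 / (4 * Real.sin ((θ k - θ i) / 2) ^ 2) := by
  have hsin : (Real.sin ((θ k - θ i) / 2) : ℂ) ≠ 0 := by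
    exact_mod_cast mt jumpPoint_eq_iff.2 h
  have hsq : (Real.cos ((θ k - θ i) / 2) : ℂ) ^ 2 + (Real.sin ((θ k - θ i) / 2) : ℂ) ^ 2 = 1 := by
    exact_mod_cast Real.cos_sq_add_sin_sq _
  rw [show interaction θ i k = -1 - interaction θ k i by
    rw [← interaction_add_interaction_swap h]; ring, interaction_eq h, Real.cot_eq_cos_div_sin]
  push_cast at hsin hsq ⊢
  field_simp
  linear_combination 4 * hsq - 4 * Complex.cos ((θ k - θ i) / 2) ^ 2 * Complex.I_sq

end Chord

section Interaction

variable {ι : Type*} {θ δ : ι → ℝ} (hz : Function.Injective (jumpPoint θ))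
include hz

lemma sin_half_sub_ne_zero {k j : ι} (hkj : k ≠ j) : Real.sin ((θ k - θ j) / 2) ≠ 0 :=
  mt jumpPoint_eq_iff.2 (hz.ne hkj)

variable [Fintype ι]

lemma sum_sub_mul_two_mul_interaction {ν : ℤ} (hν : (Fintype.card ι : ℂ) = 2 * ν) (k : ι) :
    ∑ i, ((δ i : ℂ) - δ k) * (2 * interaction (θ) k i * (Complex.I / 2)) =
      Complex.I * ν * δ k - Complex.I / 2 * (∑ i, (δ i : ℂ))
        - ∑ j, ((δ k : ℂ) - δ j) / 2 * Real.cot ((θ k - θ j) / 2) := by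
  have summand_eq (i : ι) : ((δ i : ℂ) - δ k) * (2 * interaction (θ) k i * (Complex.I / 2)) =
      Complex.I / 2 * δ k - Complex.I / 2 * δ i
        - ((δ k : ℂ) - δ i) / 2 * Real.cot ((θ k - θ i) / 2) := by
    rcases eq_or_ne k i with rfl | hki
    · simp
    · rw [interaction_eq (hz.ne hki)]
      linear_combination -(((δ i : ℂ) - δ k) / 2 * Real.cot ((θ k - θ i) / 2)) * Complex.I_sq
  simp_rw [summand_eq, Finset.sum_sub_distrib, ← Finset.mul_sum]
  rw [Finset.sum_const, Finset.card_univ, nsmul_eq_mul, hν]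
  ring

lemma sum_sub_mul_two_mul_interaction_swap {ν : ℤ} (hν : (Fintype.card ι : ℂ) = 2 * ν) (k : ι) :
    ∑ i, ((δ i : ℂ) - δ k) * (2 * interaction (θ) i k * (Complex.I / 2)) =
      Complex.I * ν * δ k - Complex.I / 2 * (∑ i, (δ i : ℂ))
        + ∑ j, ((δ k : ℂ) - δ j) / 2 * Real.cot ((θ k - θ j) / 2) := by
  have summand_eq (i : ι) : ((δ i : ℂ) - δ k) * (2 * interaction (θ) i k * (Complex.I / 2)) =
      Complex.I * δ k - Complex.I * δ i
        - (δ i - δ k) * (2 * interaction (θ) k i * (Complex.I / 2)) := by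
    rcases eq_or_ne k i with rfl | hki
    · simp
    · linear_combination Complex.I * ((δ i : ℂ) - δ k) *
        interaction_add_interaction_swap (hz.ne hki)
  simp_rw [summand_eq, Finset.sum_sub_distrib]
  rw [sum_sub_mul_two_mul_interaction hz hν, ← Finset.mul_sum, ← Finset.mul_sum, Finset.sum_const,
    Finset.card_univ, nsmul_eq_mul, hν]
  ring

end Interaction

section AveragedState

variable {ι : Type*} [Fintype ι]

/-- The logarithm of the product of the distances between the `k`-th jump and the others (the
`k`-th factor contributes the junk value `Real.log 0 = 0`). -/
def logChord (θ : ι → ℝ) (k : ι) : ℝ := ∑ j, Real.log (2 * Real.sin ((θ k - θ j) / 2))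

/-- The explicit solution of the averaged equation of motion. -/
def averagedState (c : ℂ) (θ : ι → ℝ) : JumpState ι :=
  let lead := Complex.exp (-Complex.I / 2 * ∑ k, (θ k : ℂ))
  let amp k := Complex.I * lead * Complex.exp (-logChord θ k)
  (amp, fun k => (-4 * amp k)⁻¹, fun _ => Complex.I / 2,
    fun k => ∑ j, (Real.cot ((θ k - θ j) / 2) : ℂ) / 4,
    c * Complex.exp (∑ k, (logChord θ k : ℂ) / 4), lead)

variable {θ : ℝ → ι → ℝ} {δ : ι → ℝ} {s : ℝ}

lemma hasDerivAt_log_two_mul_sin_half {f : ℝ → ℝ} {f' : ℝ} (hf : HasDerivAt f f' s)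
    (h : Real.sin (f s / 2) ≠ 0) :
    HasDerivAt (fun t => Real.log (2 * Real.sin (f t / 2))) (f' / 2 * Real.cot (f s / 2)) s := by
  refine (((hf.div_const 2).sin.const_mul 2).log (by simpa using h)).congr_deriv ?_
  rw [Real.cot_eq_cos_div_sin]
  ring

lemma hasDerivAt_cot_half {f : ℝ → ℝ} {f' : ℝ} (hf : HasDerivAt f f' s)
    (h : Real.sin (f s / 2) ≠ 0) :
    HasDerivAt (fun t => Real.cot (f t / 2)) (-f' / (2 * Real.sin (f s / 2) ^ 2)) s := by
  simp_rw [Real.cot_eq_cos_div_sin]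
  refine ((hf.div_const 2).cos.div (hf.div_const 2).sin h).congr_deriv ?_
  field_simp
  linear_combination (-f') * Real.cos_sq_add_sin_sq (f s / 2)

variable (hθ : ∀ k, HasDerivAt (fun t => θ t k) (δ k) s)
include hθ

lemma hasDerivAt_exp_sum : HasDerivAt (fun t => Complex.exp (-Complex.I / 2 * ∑ k, (θ t k : ℂ)))
    (-Complex.I / 2 * (∑ k, (δ k : ℂ)) * Complex.exp (-Complex.I / 2 * ∑ k, (θ s k : ℂ))) s := by
  refine ((HasDerivAt.fun_sum fun k _ =>
    (hθ k).ofReal_comp).const_mul (-Complex.I / 2)).cexp.congr_deriv ?_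
  ring

variable (hz : Function.Injective (jumpPoint (θ s)))
include hz

lemma hasDerivAt_logChord (k : ι) : HasDerivAt (fun t => logChord (θ t) k)
    (∑ j, (δ k - δ j) / 2 * Real.cot ((θ s k - θ s j) / 2)) s := by
  refine HasDerivAt.fun_sum fun j _ => ?_
  rcases eq_or_ne k j with rfl | hkj
  · simpa using hasDerivAt_const s (Real.log 0)
  · exact hasDerivAt_log_two_mul_sin_half ((hθ k).sub (hθ j)) (sin_half_sub_ne_zero hz hkj)

lemma hasDerivAt_sum_logChord : HasDerivAt (fun t => ∑ k, (logChord (θ t) k : ℂ) / 4)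
    (∑ k, δ k * ∑ j, (Real.cot ((θ s k - θ s j) / 2) : ℂ) / 4) s := by
  refine (HasDerivAt.fun_sum fun k _ =>
    (hasDerivAt_logChord hθ hz k).ofReal_comp.div_const (4 : ℂ)).congr_deriv ?_
  have cot_swap (k j : ι) : (Real.cot ((θ s j - θ s k) / 2) : ℂ) =
      -Real.cot ((θ s k - θ s j) / 2) := by
    rw [← Complex.ofReal_neg, Real.cot_eq_cos_div_sin, Real.cot_eq_cos_div_sin,
      show (θ s j - θ s k) / 2 = -((θ s k - θ s j) / 2) by ring, Real.cos_neg, Real.sin_neg,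
      div_neg]
  have sum_swap : ∑ k, ∑ j, (δ j : ℂ) * Real.cot ((θ s k - θ s j) / 2) =
      -∑ k, ∑ j, (δ k : ℂ) * Real.cot ((θ s k - θ s j) / 2) := by
    rw [Finset.sum_comm, ← Finset.sum_neg_distrib]
    refine Finset.sum_congr rfl fun k _ => ?_
    rw [← Finset.sum_neg_distrib]
    exact Finset.sum_congr rfl fun j _ => by rw [cot_swap]; ring
  push_cast at sum_swap ⊢
  simp only [← Finset.sum_div, Finset.mul_sum, sub_mul, Finset.sum_sub_distrib,
    div_mul_eq_mul_div, ← mul_div_assoc]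
  linear_combination -1 / 8 * sum_swap

lemma hasDerivAt_averagedState_amp (c : ℂ) (k : ι) :
    HasDerivAt (fun t => (averagedState c (θ t)).amp k)
      ((-Complex.I / 2 * (∑ j, (δ j : ℂ)) - ∑ j, ((δ k : ℂ) - δ j) / 2 *
        Real.cot ((θ s k - θ s j) / 2)) * (averagedState c (θ s)).amp k) s := by
  have hlog := (hasDerivAt_logChord hθ hz k).ofReal_comp
  refine (((hasDerivAt_exp_sum hθ).const_mul Complex.I).mul hlog.fun_neg.cexp).congr_deriv ?_
  simp only [averagedState, JumpState.amp]
  push_cast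
  ring

lemma hasDerivAt_averagedState_dualAmp (c : ℂ) (k : ι) :
    HasDerivAt (fun t => (averagedState c (θ t)).dualAmp k)
      ((Complex.I / 2 * (∑ j, (δ j : ℂ)) + ∑ j, ((δ k : ℂ) - δ j) / 2 *
        Real.cot ((θ s k - θ s j) / 2)) * (averagedState c (θ s)).dualAmp k) s := by
  have amp_ne : (averagedState c (θ s)).amp k ≠ 0 := by
    simp [averagedState, JumpState.amp]
  have dualAmp_eq : (averagedState c (θ s)).dualAmp k = (-4 * (averagedState c (θ s)).amp k)⁻¹ :=
    rfl
  refine (((hasDerivAt_averagedState_amp hθ hz c k).const_mul (-4)).inv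
    (mul_ne_zero (by norm_num) amp_ne)).congr_deriv ?_
  rw [dualAmp_eq]
  field_simp
  ring

lemma hasDerivAt_averagedState_diagKernel (ν : ℤ) (c : ℂ) (k : ι) :
    HasDerivAt (fun t => (averagedState c (θ t)).diagKernel k)
      ((averagedVelocity ν (θ s) δ (averagedState c (θ s))).diagKernel k) s := by
  simp only [averagedVelocity, averagedState, ← Finset.sum_neg_distrib]
  refine HasDerivAt.fun_sum fun j _ => ?_
  rcases eq_or_ne k j with rfl | hkj
  · simpa using hasDerivAt_const s ((Real.cot 0 : ℂ) / 4)
  · have hsin : (Real.sin ((θ s k - θ s j) / 2) : ℂ) ≠ 0 := by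
      exact_mod_cast sin_half_sub_ne_zero hz hkj
    refine ((hasDerivAt_cot_half ((hθ k).fun_sub (hθ j))
      (sin_half_sub_ne_zero hz hkj)).ofReal_comp.div_const (4 : ℂ)).congr_deriv ?_
    rw [interaction_mul_interaction_swap (hz.ne hkj)]
    push_cast at hsin ⊢
    field_simp
    linear_combination ((δ j : ℂ) - δ k) * Complex.I_sq

lemma hasDerivAt_averagedState {ν : ℤ} (hν : (Fintype.card ι : ℂ) = 2 * ν) (c : ℂ) :
    HasDerivAt (fun t => averagedState c (θ t))
      (averagedVelocity ν (θ s) δ (averagedState c (θ s))) s := by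
  have mixedAmp_eq (k : ι) : (averagedState c (θ s)).mixedAmp k = Complex.I / 2 := rfl
  refine (hasDerivAt_pi.2 fun k => ?_).prodMk <| (hasDerivAt_pi.2 fun k => ?_).prodMk <|
    (hasDerivAt_const s _).prodMk <|
    (hasDerivAt_pi.2 (hasDerivAt_averagedState_diagKernel hθ hz ν c)).prodMk <|
    HasDerivAt.prodMk ?_ ?_
  · refine (hasDerivAt_averagedState_amp hθ hz c k).congr_deriv ?_
    simp only [mixedAmp_eq, sum_sub_mul_two_mul_interaction hz hν]
    ring
  · refine (hasDerivAt_averagedState_dualAmp hθ hz c k).congr_deriv ?_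
    simp only [mixedAmp_eq, sum_sub_mul_two_mul_interaction_swap hz hν, ← Finset.sum_mul]
    ring
  · refine ((hasDerivAt_sum_logChord hθ hz).cexp.const_mul c).congr_deriv ?_
    simp only [averagedState]
    ring
  · refine (hasDerivAt_exp_sum hθ).congr_deriv ?_
    simp only [averagedState, ← Finset.sum_mul]
    ring

end AveragedState

section Path

variable {ι : Type*} [LinearOrder ι]

/-- The angles are those of pairwise distinct points listed counterclockwise in a single turn of
the unit circle. -/
def IsCyclicallyOrdered (θ : ι → ℝ) : Prop :=
  StrictMono θ ∧ ∀ k i, θ k < θ i + 2 * Real.pi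

lemma IsCyclicallyOrdered.injective_jumpPoint {θ : ι → ℝ} (h : IsCyclicallyOrdered θ) :
    Function.Injective (jumpPoint θ) := by
  intro k i hki
  have hsin := jumpPoint_eq_iff.1 hki
  rw [Real.sin_eq_zero_iff_of_lt_of_lt (by linarith [h.2 i k]) (by linarith [h.2 k i])] at hsin
  exact h.1.injective (by linarith)

lemma convex_setOf_isCyclicallyOrdered : Convex ℝ {θ : ι → ℝ | IsCyclicallyOrdered θ} := by
  refine convex_iff_forall_pos.2 fun θ hθ τ hτ a b ha hb hab => ⟨fun k i hki => ?_, fun k i => ?_⟩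
  · exact add_lt_add (mul_lt_mul_of_pos_left (hθ.1 hki) ha) (mul_lt_mul_of_pos_left (hτ.1 hki) hb)
  · have hpi : a * (2 * Real.pi) + b * (2 * Real.pi) = 2 * Real.pi := by
      rw [← add_mul, hab, one_mul]
    have h₁ := mul_lt_mul_of_pos_left (hθ.2 k i) ha
    have h₂ := mul_lt_mul_of_pos_left (hτ.2 k i) hb
    simp only [Pi.add_apply, Pi.smul_apply, smul_eq_mul]
    linarith

/-- A motion of the jumps from the angles `θ` to the angles `τ` in unit time. It oscillates between
the two so as to be smooth and defined for all times. -/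
def jumpPath (θ τ : ι → ℝ) (s : ℝ) : ι → ℝ :=
  AffineMap.lineMap θ τ ((1 - Real.cos (Real.pi * s)) / 2)

omit [LinearOrder ι] in
lemma jumpPath_zero (θ τ : ι → ℝ) : jumpPath θ τ 0 = θ := by simp [jumpPath]

omit [LinearOrder ι] in
lemma jumpPath_one (θ τ : ι → ℝ) : jumpPath θ τ 1 = τ := by
  simp only [jumpPath, mul_one, Real.cos_pi]
  norm_num

lemma isCyclicallyOrdered_jumpPath {θ τ : ι → ℝ} (hθ : IsCyclicallyOrdered θ)
    (hτ : IsCyclicallyOrdered τ) (s : ℝ) : IsCyclicallyOrdered (jumpPath θ τ s) :=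
  convex_setOf_isCyclicallyOrdered.lineMap_mem hθ hτ
    ⟨by linarith [Real.cos_le_one (Real.pi * s)], by linarith [Real.neg_one_le_cos (Real.pi * s)]⟩

omit [LinearOrder ι] in
lemma hasDerivAt_jumpPath (θ τ : ι → ℝ) (s : ℝ) (k : ι) :
    HasDerivAt (fun t => jumpPath θ τ t k)
      (Real.pi / 2 * Real.sin (Real.pi * s) * (τ k - θ k)) s := by
  have hcos := (((hasDerivAt_id s).const_mul Real.pi).cos.const_sub 1).div_const 2
  refine ((hcos.mul_const (τ k - θ k)).add_const (θ k)).congr_deriv ?_ |>.congr_of_eventuallyEq ?_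
  · simp only [id_eq]
    ring
  · simp [jumpPath, AffineMap.lineMap_apply]

end Path

theorem JumpPattern.tendsto_averagedState {ι : Type*} [Fintype ι] [LinearOrder ι]
    (P : JumpPattern ι) (hP : (Fintype.card ι : ℤ) = 2 * P.winding) {θ τ : ι → ℝ}
    (hθ : IsCyclicallyOrdered θ) (hτ : IsCyclicallyOrdered τ) {κ : ℕ → ℂ} (hκ : ∀ N, κ N ≠ 0)
    {c : ℂ} (hc : c ≠ 0)
    (h : Tendsto (fun N => P.state κ N θ) atTop (𝓝 (averagedState c θ))) :
    Tendsto (fun N => P.state κ N τ) atTop (𝓝 (averagedState c τ)) := by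
  have hz (s : ℝ) := (isCyclicallyOrdered_jumpPath hθ hτ s).injective_jumpPoint
  have hpath (s : ℝ) := hasDerivAt_jumpPath θ τ s
  simpa only [jumpPath_one] using P.tendsto_state κ hpath hz hκ (fun k => by fun_prop)
    (ub := fun s => averagedState c (jumpPath θ τ s))
    (fun s => hasDerivAt_averagedState (hpath s) (hz s) (by exact_mod_cast hP) c)
    (fun s => mul_ne_zero hc (Complex.exp_ne_zero _)) (fun s => Complex.exp_ne_zero _)
    (by simpa only [jumpPath_zero] using h)

end FisherHartwig

/-! ### The square configuration -/

namespace FisherHartwig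

open Polynomial

section Cauchy

variable {K : Type*} [Field K] [CharZero K]

/-- The weights of the partial fraction expansion of `∏_{i<m} (x - i - 1/2) / ∏_{i≤m} (x - i)`. -/
def cauchyWeight (K : Type*) [Field K] (m b : ℕ) : K :=
  Lagrange.nodalWeight (Finset.range (m + 1)) Nat.cast b *
    (Lagrange.nodal (Finset.range m) fun i => (i : K) + 1 / 2).eval (b : K)

/-- The quotient `(2m choose m) / 4 ^ m`, as a product. -/
def centralRatio (K : Type*) [Field K] (m : ℕ) : K :=
  ∏ i ∈ Finset.range m, ((i : K) + 1 / 2) / (i + 1)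

lemma natCast_add_half_ne_zero (n : ℕ) : (n : K) + 1 / 2 ≠ 0 := by
  have h : (2 * (n : K) + 1) ≠ 0 := by exact_mod_cast (2 * n).succ_ne_zero
  intro hn
  exact h (by linear_combination 2 * hn)

lemma centralRatio_ne_zero (m : ℕ) : centralRatio K m ≠ 0 :=
  Finset.prod_ne_zero_iff.2 fun i _ =>
    div_ne_zero (natCast_add_half_ne_zero i) (Nat.cast_add_one_ne_zero i)

lemma sum_cauchyWeight (m : ℕ) : ∑ b ∈ Finset.range (m + 1), cauchyWeight K m b = 1 := by
  have h := Lagrange.leadingCoeff_eq_sum (s := Finset.range (m + 1)) (v := (Nat.cast : ℕ → K))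
    Nat.cast_injective.injOn
    (P := Lagrange.nodal (Finset.range m) fun i => (i : K) + 1 / 2)
    (by simp [Lagrange.degree_nodal])
  rw [(Lagrange.nodal_monic : Monic (Lagrange.nodal (Finset.range m) _))] at h
  rw [h]
  refine Finset.sum_congr rfl fun b _ => ?_
  rw [cauchyWeight, Lagrange.nodalWeight, Finset.prod_inv_distrib, mul_comm, ← div_eq_mul_inv]

lemma sum_cauchyWeight_div (m : ℕ) {x : K} (hx : ∀ b ≤ m, x ≠ b) :
    ∑ b ∈ Finset.range (m + 1), cauchyWeight K m b / (x - b) =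
      (∏ i ∈ Finset.range m, (x - (i + 1 / 2))) / ∏ i ∈ Finset.range (m + 1), (x - i) := by
  set p : K[X] := Lagrange.nodal (Finset.range m) fun i => (i : K) + 1 / 2
  have degree_lt : p.degree < (Finset.range (m + 1)).card := by
    rw [Lagrange.degree_nodal]
    exact_mod_cast (by simp : (Finset.range m).card < (Finset.range (m + 1)).card)
  have node_ne : ∀ b ∈ Finset.range (m + 1), x ≠ b := fun b hb =>
    hx b (Nat.lt_succ_iff.1 (Finset.mem_range.1 hb))
  have interpolation := Lagrange.eval_interpolate_not_at_node (fun i : ℕ => p.eval (i : K)) node_ne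
  rw [← Lagrange.eq_interpolate Nat.cast_injective.injOn degree_lt, Lagrange.eval_nodal,
    Lagrange.eval_nodal] at interpolation
  rw [interpolation, mul_div_cancel_left₀ _
    (Finset.prod_ne_zero_iff.2 fun b hb => sub_ne_zero.2 (node_ne b hb))]
  refine Finset.sum_congr rfl fun b _ => ?_
  rw [cauchyWeight]
  ring

lemma sub_half_ne_natCast (a b : ℕ) : (a : K) - 1 / 2 ≠ b := by
  intro h
  have parity : ((2 * a : ℕ) : K) = ((2 * b + 1 : ℕ) : K) := by
    push_cast
    linear_combination 2 * h
  have nat_parity := Nat.cast_injective parity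
  omega

lemma sum_cauchyWeight_div_sub_add_half (m a : ℕ) (ha : a ≤ m) :
    ∑ b ∈ Finset.range (m + 1), cauchyWeight K m b / (b - a + 1 / 2) =
      if a = 0 then (centralRatio K m * (m + 1 / 2))⁻¹ else 0 := by
  have h := sum_cauchyWeight_div m (x := (a : K) - 1 / 2) fun b _ => sub_half_ne_natCast a b
  have sum_eq : ∑ b ∈ Finset.range (m + 1), cauchyWeight K m b / (b - a + 1 / 2) =
      -∑ b ∈ Finset.range (m + 1), cauchyWeight K m b / (a - 1 / 2 - b) := by
    rw [← Finset.sum_neg_distrib]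
    refine Finset.sum_congr rfl fun b _ => ?_
    rw [← div_neg]
    congr 1
    ring
  rw [sum_eq, h]
  split_ifs with h0
  · subst h0
    rw [Finset.prod_range_succ, centralRatio, ← div_div, ← Finset.prod_div_distrib, mul_inv,
      ← Finset.prod_inv_distrib]
    have factor (i : ℕ) : (((0 : ℕ) : K) - 1 / 2 - (i + 1 / 2)) / (((0 : ℕ) : K) - 1 / 2 - i) =
        (((i : K) + 1 / 2) / (i + 1))⁻¹ := by
      rw [inv_div, ← neg_div_neg_eq]
      congr 1 <;> push_cast <;> ring
    simp only [factor]
    rw [div_eq_mul_inv, ← mul_neg, ← inv_neg]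
    congr 2
    push_cast
    ring
  · have root : ∏ i ∈ Finset.range m, ((a : K) - 1 / 2 - (i + 1 / 2)) = 0 := by
      obtain ⟨i, rfl⟩ := Nat.exists_eq_succ_of_ne_zero h0
      refine Finset.prod_eq_zero (i := i) (Finset.mem_range.2 ha) ?_
      push_cast
      ring
    rw [root, zero_div, neg_zero]

omit [CharZero K] in
lemma cauchyWeight_zero (m : ℕ) : cauchyWeight K m 0 = centralRatio K m := by
  have erase_zero : (Finset.range (m + 1)).erase 0 =
      (Finset.range m).map ⟨Nat.succ, Nat.succ_injective⟩ := by
    rw [Finset.range_add_one', Finset.erase_insert (by simp)]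
  rw [cauchyWeight, centralRatio, Lagrange.nodalWeight, erase_zero, Finset.prod_map,
    Lagrange.eval_nodal, ← Finset.prod_mul_distrib]
  refine Finset.prod_congr rfl fun i _ => ?_
  simp only [Function.Embedding.coeFn_mk, Nat.cast_zero, Nat.cast_succ, zero_sub, inv_neg,
    neg_mul_neg, div_eq_inv_mul]

end Cauchy

/-- The partial Wallis product divided by its limit. -/
def wallisQuotient (m : ℕ) : ℝ := 2 / Real.pi * Real.Wallis.W m

lemma wallisQuotient_pos (m : ℕ) : 0 < wallisQuotient m :=
  mul_pos (div_pos two_pos Real.pi_pos) (Real.Wallis.W_pos m)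

lemma pi_mul_centralRatio_sq (m : ℕ) :
    Real.pi * ((m : ℂ) + 1 / 2) * centralRatio ℂ m ^ 2 = (wallisQuotient m : ℂ)⁻¹ := by
  have real_identity : ((m : ℝ) + 1 / 2) * centralRatio ℝ m ^ 2 = (2 * Real.Wallis.W m)⁻¹ := by
    induction m with
    | zero => simp [centralRatio, Real.Wallis.W]
    | succ m ih =>
      have hW := (Real.Wallis.W_pos m).ne'
      rw [Real.Wallis.W_succ, centralRatio, Finset.prod_range_succ, ← centralRatio]
      push_cast
      field_simp at ih ⊢
      linear_combination (2 * (m : ℝ) + 3) * ih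
  have cast_ratio : centralRatio ℂ m = (centralRatio ℝ m : ℂ) := by
    simp [centralRatio]
  rw [cast_ratio, mul_assoc, wallisQuotient]
  have complex_identity := congrArg (fun x : ℝ => ((Real.pi * x : ℝ) : ℂ)) real_identity
  push_cast at complex_identity ⊢
  rw [complex_identity]
  field_simp

/-- The first column of the inverse of the Cauchy-like matrix `(π (b - a + 1/2))⁻¹`, `a, b ≤ m`. -/
def cauchySolution (m b : ℕ) : ℂ :=
  Real.pi * ((m : ℂ) + 1 / 2) * centralRatio ℂ m * cauchyWeight ℂ m b

lemma sum_cauchySolution_div (m a : ℕ) (ha : a ≤ m) :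
    ∑ b ∈ Finset.range (m + 1), cauchySolution m b / (Real.pi * ((b : ℂ) - a + 1 / 2)) =
      if a = 0 then 1 else 0 := by
  have hpi : (Real.pi : ℂ) ≠ 0 := by exact_mod_cast Real.pi_ne_zero
  have summand (b : ℕ) : cauchySolution m b / (Real.pi * ((b : ℂ) - a + 1 / 2)) =
      centralRatio ℂ m * (m + 1 / 2) * (cauchyWeight ℂ m b / (b - a + 1 / 2)) := by
    rw [cauchySolution, mul_div_mul_comm]
    field_simp
  simp only [summand, ← Finset.mul_sum, sum_cauchyWeight_div_sub_add_half m a ha, mul_ite, mul_zero,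
    mul_inv_cancel₀ (mul_ne_zero (centralRatio_ne_zero (K := ℂ) m) (natCast_add_half_ne_zero m))]

lemma cauchySolution_zero (m : ℕ) : cauchySolution m 0 = (wallisQuotient m : ℂ)⁻¹ := by
  rw [cauchySolution, cauchyWeight_zero, ← pi_mul_centralRatio_sq]
  ring

lemma sum_cauchySolution_sq (m : ℕ) : (∑ b ∈ Finset.range (m + 1), cauchySolution m b) ^ 2 =
    Real.pi * ((m : ℂ) + 1 / 2) * (wallisQuotient m : ℂ)⁻¹ := by
  simp_rw [cauchySolution, ← Finset.mul_sum]
  rw [sum_cauchyWeight, ← pi_mul_centralRatio_sq]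
  ring

end FisherHartwig

namespace FisherHartwig

open Matrix

namespace JumpPattern

variable {ι : Type*} [Fintype ι] (P : JumpPattern ι) {θ : ι → ℝ} {N : ℕ}

lemma sum_weight_mul_kernel (hA : (P.matrix θ N).det ≠ 0) :
    ∑ k, P.weight θ k * P.kernel θ N k k = Complex.I * P.winding * ((N : ℂ) + 1) := by
  have h : ∑ k, Complex.I * P.weight θ k * P.kernel θ N k k = -(P.winding * (N + 1 : ℕ)) :=
    sum_invForm_powVec_powVec_inv _ (jumpPoint θ) _ _ (jumpPoint_ne_zero θ)
      (P.sub_winding_mul_coeff θ) hA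
  simp only [mul_assoc, ← Finset.mul_sum] at h
  push_cast at h
  linear_combination -Complex.I * h + (∑ k, P.weight θ k * P.kernel θ N k k) * Complex.I_sq

lemma adjugate_succ_zero_zero : (P.matrix θ (N + 1)).adjugate 0 0 = (P.matrix θ N).det := by
  rw [adjugate_fin_succ_eq_det_submatrix]
  simp only [Fin.val_zero, add_zero, pow_zero, one_mul]
  congr 1
  ext i j
  simp [matrix, toeplitz]

section Rotation

variable (hA : (P.matrix θ N).det ≠ 0) {ζ : ℂ} (hζ : ζ ≠ 0)
  (hrot : ∀ n, P.coeff θ (n - P.winding) ≠ 0 → ζ ^ n = 1) {k i : ι}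
  (hki : jumpPoint θ k = ζ * jumpPoint θ i)
include hA hζ hrot

lemma form_rotation (p q : Fin (N + 1) → ℂ) :
    P.form θ N (powVec (N + 1) ζ * p) q = P.form θ N p (powVec (N + 1) ζ * q) :=
  invForm_toeplitz_rotation _ hζ hrot hA p q

include hki

lemma value_rotation : P.value θ N k = P.value θ N i := by
  rw [value, hki, powVec_mul, P.form_rotation hA hζ hrot, powVec_mul_single_zero, value]

lemma dualValue_rotation : P.dualValue θ N k = P.dualValue θ N i := by
  rw [dualValue, hki, mul_inv, powVec_mul, ← P.form_rotation hA (inv_ne_zero hζ)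
    (fun n hn => by rw [_root_.inv_zpow, hrot n hn, inv_one]), powVec_mul_single_zero, dualValue]

lemma kernel_rotation : P.kernel θ N k k = P.kernel θ N i i := by
  rw [kernel, hki, powVec_mul, P.form_rotation hA hζ hrot, ← powVec_mul, mul_inv,
    mul_inv_cancel_left₀ hζ, kernel]

end Rotation

end JumpPattern

/-- Jumps at the vertices of a square. -/
def squareAngle (k : Fin 4) : ℝ := k * Real.pi / 2 - 3 * Real.pi / 4

/-- The symbol `z ^ 2` times a function which takes the values `1` and `-1` alternately on the arcs
between four jumps. -/
def alternatingPattern : JumpPattern (Fin 4) where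
  sign k := (-1) ^ (k : ℕ)
  baseValue := 1
  winding := 2
  sum_sign := by simp [Fin.sum_univ_four, pow_succ]

lemma jumpPoint_squareAngle (k : Fin 4) :
    jumpPoint squareAngle k = Complex.I ^ (k : ℕ) * jumpPoint squareAngle 0 := by
  nth_rw 1 [← Complex.exp_pi_div_two_mul_I]
  rw [jumpPoint, jumpPoint, ← Complex.exp_nat_mul, ← Complex.exp_add]
  congr 1
  simp only [squareAngle, Complex.ofReal_sub, Complex.ofReal_div, Complex.ofReal_mul,
    Complex.ofReal_natCast, Complex.ofReal_ofNat, Fin.isValue, Fin.coe_ofNat_eq_mod, Nat.zero_mod,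
    CharP.cast_eq_zero, zero_mul, zero_div, zero_sub, Complex.ofReal_neg, mul_neg]
  ring

lemma jumpPoint_squareAngle_sq (k : Fin 4) :
    jumpPoint squareAngle k ^ 2 = (-1) ^ (k : ℕ) * Complex.I := by
  have sq_zero : jumpPoint squareAngle 0 ^ 2 = Complex.I := by
    rw [← Complex.exp_pi_div_two_mul_I, jumpPoint, ← Complex.exp_nat_mul]
    refine Eq.trans ?_ (Complex.exp_periodic.sub_eq _)
    congr 1
    simp only [Nat.cast_ofNat, squareAngle, Fin.isValue, Fin.coe_ofNat_eq_mod, Nat.zero_mod,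
      CharP.cast_eq_zero, zero_mul, zero_div, zero_sub, Complex.ofReal_neg, Complex.ofReal_div,
      Complex.ofReal_mul, Complex.ofReal_ofNat, mul_neg]
    ring
  rw [jumpPoint_squareAngle, mul_pow, sq_zero, ← pow_mul, mul_comm _ 2, pow_mul, Complex.I_sq]

lemma jumpPoint_squareAngle_pow_four (k : Fin 4) : jumpPoint squareAngle k ^ 4 = -1 := by
  calc jumpPoint squareAngle k ^ 4 = (jumpPoint squareAngle k ^ 2) ^ 2 := by ring
    _ = -1 := by
      rw [jumpPoint_squareAngle_sq, mul_pow, Complex.I_sq, ← pow_mul,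
        mul_comm (k : ℕ), pow_mul]
      simp

lemma weight_squareAngle (k : Fin 4) :
    alternatingPattern.weight squareAngle k = Complex.I / Real.pi := by
  have h : jumpPoint squareAngle k ^ (2 : ℤ) = (-1) ^ (k : ℕ) * Complex.I := by
    exact_mod_cast jumpPoint_squareAngle_sq k
  simp only [JumpPattern.weight, alternatingPattern, h]
  rw [← mul_assoc, ← mul_pow]
  simp

lemma sum_jumpPoint_squareAngle_zpow {n : ℤ} (h : ¬ (4 : ℤ) ∣ n) :
    ∑ k, jumpPoint squareAngle k ^ n = 0 := by
  have I_ne : Complex.I ^ n ≠ 1 := by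
    rwa [Ne, Complex.isPrimitiveRoot_I.zpow_eq_one_iff_dvd]
  have I_pow : (Complex.I ^ n) ^ 4 = 1 := by
    rw [← zpow_natCast, zpow_comm, zpow_natCast, Complex.I_pow_four, _root_.one_zpow]
  have summand (k : Fin 4) : jumpPoint squareAngle k ^ n =
      (Complex.I ^ n) ^ (k : ℕ) * jumpPoint squareAngle 0 ^ n := by
    rw [jumpPoint_squareAngle, mul_zpow, ← zpow_natCast, ← zpow_natCast, zpow_comm]
  rw [Finset.sum_congr rfl fun k _ => summand k, ← Finset.sum_mul,
    Fin.sum_univ_eq_sum_range (fun k => (Complex.I ^ n) ^ k) 4, geom_sum_eq I_ne, I_pow, sub_self,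
    zero_div, zero_mul]

lemma sub_two_mul_coeff_squareAngle (n : ℤ) :
    ((n : ℂ) - 2) * alternatingPattern.coeff squareAngle (n - 2) =
      -(∑ k, jumpPoint squareAngle k ^ (-n)) / Real.pi := by
  have h := alternatingPattern.sub_winding_mul_coeff squareAngle n
  simp only [weight_squareAngle, ← Finset.mul_sum] at h
  simp only [alternatingPattern, Int.cast_ofNat] at h ⊢
  rw [h]
  linear_combination (∑ k, jumpPoint squareAngle k ^ (-n)) / Real.pi * Complex.I_sq

lemma coeff_squareAngle_eq_zero {n : ℤ} (h : ¬ (4 : ℤ) ∣ n) :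
    alternatingPattern.coeff squareAngle (n - 2) = 0 := by
  rcases eq_or_ne n 2 with rfl | h2
  · have hpi : (Real.pi : ℂ) ≠ 0 := by exact_mod_cast Real.pi_ne_zero
    simp only [JumpPattern.coeff, sub_self, ↓reduceIte, alternatingPattern, squareAngle,
      Complex.ofReal_sub, Complex.ofReal_div, Complex.ofReal_mul, Complex.ofReal_natCast,
      Complex.ofReal_ofNat, Fin.sum_univ_four, Fin.isValue, Fin.coe_ofNat_eq_mod, Nat.zero_mod,
      pow_zero, CharP.cast_eq_zero, zero_mul, zero_div, zero_sub, mul_neg, one_mul, Nat.one_mod,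
      pow_one, Nat.cast_one, neg_mul, neg_sub, Nat.reduceMod, even_two, Even.neg_pow, one_pow,
      Nat.cast_ofNat, ne_eq, OfNat.ofNat_ne_zero, not_false_eq_true, mul_div_cancel_left₀,
      Nat.mod_succ]
    field_simp
    norm_num
  · have hn := sub_two_mul_coeff_squareAngle n
    rw [sum_jumpPoint_squareAngle_zpow (by rwa [dvd_neg]), neg_zero, zero_div] at hn
    exact (mul_eq_zero.1 hn).resolve_left (sub_ne_zero.2 (by exact_mod_cast h2))

lemma coeff_squareAngle_four_mul (l : ℤ) :
    alternatingPattern.coeff squareAngle (4 * l - 2) = (-1) ^ l / (Real.pi * (-l + 1 / 2)) := by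
  have hpi : (Real.pi : ℂ) ≠ 0 := by exact_mod_cast Real.pi_ne_zero
  have hl : (-l + 1 / 2 : ℂ) ≠ 0 := by
    intro h
    have parity : (1 : ℂ) = ((2 * l : ℤ) : ℂ) := by
      push_cast
      linear_combination 2 * h
    have int_parity : (1 : ℤ) = 2 * l := by exact_mod_cast parity
    omega
  have zpow_eq (k : Fin 4) : jumpPoint squareAngle k ^ (-(4 * l)) = (-1) ^ l := by
    have h4 : jumpPoint squareAngle k ^ (4 : ℤ) = -1 := by
      exact_mod_cast jumpPoint_squareAngle_pow_four k
    rw [← mul_neg, _root_.zpow_mul, h4, _root_.zpow_neg, ← _root_.inv_zpow, inv_neg, inv_one]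
  have h := sub_two_mul_coeff_squareAngle (4 * l)
  simp only [zpow_eq, Finset.sum_const, Finset.card_univ, Fintype.card_fin] at h
  rw [eq_div_iff hpi] at h
  rw [eq_div_iff (mul_ne_zero hpi hl)]
  push_cast [nsmul_eq_mul] at h
  linear_combination (-1 / 4) * h

lemma coeff_squareAngle_mul_neg_one_pow (a b : ℕ) (x : ℂ) :
    alternatingPattern.coeff squareAngle (4 * ((a : ℤ) - b) - 2) * ((-1) ^ b * x) =
      (-1) ^ a * (x / (Real.pi * ((b : ℂ) - a + 1 / 2))) := by
  have neg_one_pow_ne : (-1 : ℂ) ^ b ≠ 0 := pow_ne_zero _ (by norm_num)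
  rw [coeff_squareAngle_four_mul, _root_.zpow_sub₀ (by norm_num), zpow_natCast, zpow_natCast]
  push_cast
  rw [neg_sub]
  field_simp

lemma sum_fin_ite_four_dvd {M : Type*} [AddCommMonoid M] (N : ℕ) (f : ℕ → M) :
    ∑ k : Fin (N + 1), (if 4 ∣ (k : ℕ) then f (k / 4) else 0) =
      ∑ b ∈ Finset.range (N / 4 + 1), f b := by
  rw [Fin.sum_univ_eq_sum_range (fun k => if 4 ∣ k then f (k / 4) else 0) (N + 1),
    ← Finset.sum_filter]
  refine (Finset.sum_nbij' (4 * ·) (· / 4) ?_ ?_ ?_ ?_ ?_).symm <;>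
    intro b hb <;> simp only [Finset.mem_filter, Finset.mem_range] at hb ⊢ <;> grind

/-- The first column of the inverse of the Toeplitz matrix, for jumps at the vertices of a square.
Only indices divisible by four interact, by a Cauchy-like matrix. -/
def squareSolution (N : ℕ) (j : Fin (N + 1)) : ℂ :=
  if 4 ∣ (j : ℕ) then (-1) ^ ((j : ℕ) / 4) * cauchySolution (N / 4) (j / 4) else 0

lemma matrix_mulVec_squareSolution (N : ℕ) :
    alternatingPattern.matrix squareAngle N *ᵥ squareSolution N = Pi.single 0 1 := by
  ext j
  have entry (k : Fin (N + 1)) : alternatingPattern.matrix squareAngle N j k =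
    alternatingPattern.coeff squareAngle ((j : ℤ) - k - 2) := rfl
  simp only [mulVec, dotProduct, entry, squareSolution]
  by_cases hj : 4 ∣ (j : ℕ)
  · obtain ⟨a, ha⟩ := hj
    have summand (k : Fin (N + 1)) : alternatingPattern.coeff squareAngle ((j : ℤ) - k - 2) *
        (if 4 ∣ (k : ℕ) then (-1) ^ ((k : ℕ) / 4) * cauchySolution (N / 4) (k / 4) else 0) =
        if 4 ∣ (k : ℕ) then (-1) ^ a * (cauchySolution (N / 4) (k / 4) /
          (Real.pi * (((k / 4 : ℕ) : ℂ) - a + 1 / 2))) else 0 := by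
      split_ifs with hk
      · rw [← coeff_squareAngle_mul_neg_one_pow]
        congr 2
        omega
      · exact mul_zero _
    simp only [summand]
    rw [sum_fin_ite_four_dvd N fun b => (-1) ^ a *
      (cauchySolution (N / 4) b / (Real.pi * ((b : ℂ) - a + 1 / 2))), ← Finset.mul_sum,
      sum_cauchySolution_div _ a (by omega)]
    have zero_iff : a = 0 ↔ j = 0 := by rw [Fin.ext_iff, Fin.val_zero]; omega
    by_cases h0 : a = 0
    · simp [h0, zero_iff.1 h0]
    · simp [h0, mt zero_iff.2 h0]
  · have hj0 : j ≠ 0 := by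
      rintro rfl
      simp at hj
    rw [Pi.single_eq_of_ne hj0]
    refine Finset.sum_eq_zero fun k _ => ?_
    split_ifs with hk
    · rw [coeff_squareAngle_eq_zero (by omega), zero_mul]
    · exact mul_zero _

lemma powVec_dotProduct_squareSolution (N : ℕ) (k : Fin 4) :
    powVec (N + 1) (jumpPoint squareAngle k) ⬝ᵥ squareSolution N =
      ∑ b ∈ Finset.range (N / 4 + 1), cauchySolution (N / 4) b := by
  rw [← sum_fin_ite_four_dvd N]
  refine Finset.sum_congr rfl fun j _ => ?_
  simp only [squareSolution, powVec, mul_ite, mul_zero]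
  split_ifs with h
  · obtain ⟨b, hb⟩ := h
    rw [hb, Nat.mul_div_cancel_left b (by norm_num), pow_mul, jumpPoint_squareAngle_pow_four,
      ← mul_assoc, ← mul_pow]
    simp
  · rfl

end FisherHartwig

namespace FisherHartwig

open Matrix Filter Topology

lemma adjugate_squareAngle (N : ℕ) : (alternatingPattern.matrix squareAngle N).adjugate 0 0 =
    (alternatingPattern.matrix squareAngle N).det * (wallisQuotient (N / 4) : ℂ)⁻¹ := by
  set A := alternatingPattern.matrix squareAngle N
  have solution : A.adjugate *ᵥ Pi.single 0 1 = A.det • squareSolution N := by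
    rw [← matrix_mulVec_squareSolution, mulVec_mulVec, adjugate_mul, smul_mulVec, one_mulVec]
  have h := congrFun solution 0
  rwa [mulVec_single_one, col_apply, Pi.smul_apply, smul_eq_mul, squareSolution, Fin.val_zero,
    if_pos (dvd_zero 4), Nat.zero_div, pow_zero, one_mul, cauchySolution_zero] at h

lemma ofReal_wallisQuotient_ne_zero (m : ℕ) : (wallisQuotient m : ℂ) ≠ 0 := by
  exact_mod_cast (wallisQuotient_pos m).ne'

lemma det_squareAngle (N : ℕ) : (alternatingPattern.matrix squareAngle N).det =
    ∏ j ∈ Finset.range (N + 1), (wallisQuotient (j / 4) : ℂ) := by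
  have h := adjugate_squareAngle N
  rw [← div_eq_mul_inv, eq_div_iff (ofReal_wallisQuotient_ne_zero _)] at h
  induction N with
  | zero => simpa [adjugate_fin_one] using h.symm
  | succ N ih =>
    have hN := adjugate_squareAngle N
    rw [← div_eq_mul_inv, eq_div_iff (ofReal_wallisQuotient_ne_zero _)] at hN
    rw [← h, alternatingPattern.adjugate_succ_zero_zero, ih hN, Finset.prod_range_succ _ (N + 1)]

lemma det_squareAngle_ne_zero (N : ℕ) : (alternatingPattern.matrix squareAngle N).det ≠ 0 := by
  rw [det_squareAngle]
  exact Finset.prod_ne_zero_iff.2 fun j _ => ofReal_wallisQuotient_ne_zero _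

lemma leadingCoeff_squareAngle (N : ℕ) :
    alternatingPattern.leadingCoeff squareAngle N = (wallisQuotient (N / 4) : ℂ)⁻¹ := by
  have h := alternatingPattern.adjugate_zero_zero (det_squareAngle_ne_zero N)
  rw [adjugate_squareAngle, mul_comm] at h
  exact (mul_right_cancel₀ (det_squareAngle_ne_zero N) h).symm

lemma leadingCoeff_squareAngle_ne_zero (N : ℕ) :
    alternatingPattern.leadingCoeff squareAngle N ≠ 0 := by
  rw [leadingCoeff_squareAngle]
  exact inv_ne_zero (ofReal_wallisQuotient_ne_zero _)

lemma value_squareAngle_sq (N : ℕ) (k : Fin 4) : alternatingPattern.value squareAngle N k ^ 2 =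
    Real.pi * (((N / 4 : ℕ) : ℂ) + 1 / 2) * (wallisQuotient (N / 4) : ℂ)⁻¹ := by
  rw [JumpPattern.value, JumpPattern.form, invForm_apply, ← matrix_mulVec_squareSolution,
    mulVec_mulVec, nonsing_inv_mul _ (det_squareAngle_ne_zero N).isUnit, one_mulVec,
    powVec_dotProduct_squareSolution, sum_cauchySolution_sq]

lemma I_pow_zpow_eq_one (k : Fin 4) (n : ℤ)
    (hn : alternatingPattern.coeff squareAngle (n - alternatingPattern.winding) ≠ 0) :
    (Complex.I ^ (k : ℕ)) ^ n = 1 := by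
  have four_dvd : (4 : ℤ) ∣ n := not_not.1 (mt coeff_squareAngle_eq_zero hn)
  rw [← zpow_natCast, zpow_comm, (Complex.isPrimitiveRoot_I.zpow_eq_one_iff_dvd n).2 four_dvd,
    _root_.one_zpow]

lemma mixedAmp_squareAngle (N : ℕ) (k : Fin 4) :
    alternatingPattern.mixedAmp squareAngle N k = Complex.I / 2 := by
  have mixedAmp_eq (k : Fin 4) : alternatingPattern.mixedAmp squareAngle N k =
      alternatingPattern.mixedAmp squareAngle N 0 := by
    rw [JumpPattern.mixedAmp, JumpPattern.mixedAmp, weight_squareAngle, weight_squareAngle,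
      alternatingPattern.value_rotation (det_squareAngle_ne_zero N)
        (pow_ne_zero _ Complex.I_ne_zero) (I_pow_zpow_eq_one k) (jumpPoint_squareAngle k),
      alternatingPattern.dualValue_rotation (det_squareAngle_ne_zero N)
        (pow_ne_zero _ Complex.I_ne_zero) (I_pow_zpow_eq_one k) (jumpPoint_squareAngle k)]
  have h := alternatingPattern.sum_mixedAmp (det_squareAngle_ne_zero N)
    (leadingCoeff_squareAngle_ne_zero N)
  simp only [mixedAmp_eq, Finset.sum_const, Finset.card_univ, Fintype.card_fin, nsmul_eq_mul]
    at h
  rw [mixedAmp_eq]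
  push_cast [show alternatingPattern.winding = 2 from rfl] at h
  linear_combination h / 4

lemma diagKernel_squareAngle (N : ℕ) (k : Fin 4) :
    alternatingPattern.diagKernel squareAngle N k = 0 := by
  have kernel_eq (k : Fin 4) : alternatingPattern.kernel squareAngle N k k =
      alternatingPattern.kernel squareAngle N 0 0 :=
    alternatingPattern.kernel_rotation (det_squareAngle_ne_zero N)
      (pow_ne_zero _ Complex.I_ne_zero) (I_pow_zpow_eq_one k) (jumpPoint_squareAngle k)
  have h := alternatingPattern.sum_weight_mul_kernel (det_squareAngle_ne_zero N)
  simp only [kernel_eq, weight_squareAngle, Finset.sum_const, Finset.card_univ, Fintype.card_fin,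
    nsmul_eq_mul] at h
  rw [JumpPattern.diagKernel, kernel_eq, weight_squareAngle]
  push_cast [alternatingPattern] at h ⊢
  linear_combination h / 4

lemma amp_squareAngle (N : ℕ) (k : Fin 4) : alternatingPattern.amp squareAngle N k =
    Complex.I * (((((N / 4 : ℕ) : ℝ) + 1 / 2) / (N + 1) : ℝ) : ℂ) *
      (wallisQuotient (N / 4) : ℂ)⁻¹ := by
  have hpi : (Real.pi : ℂ) ≠ 0 := by exact_mod_cast Real.pi_ne_zero
  rw [JumpPattern.amp, value_squareAngle_sq, weight_squareAngle]
  push_cast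
  field_simp

lemma dualAmp_squareAngle (N : ℕ) (k : Fin 4) : alternatingPattern.dualAmp squareAngle N k =
    (-4 * alternatingPattern.amp squareAngle N k)⁻¹ := by
  have hN : (N : ℂ) + 1 ≠ 0 := Nat.cast_add_one_ne_zero N
  have product : alternatingPattern.amp squareAngle N k * alternatingPattern.dualAmp squareAngle N k
      = alternatingPattern.mixedAmp squareAngle N k ^ 2 := by
    rw [JumpPattern.amp, JumpPattern.dualAmp, JumpPattern.mixedAmp]
    field_simp
  rw [mixedAmp_squareAngle, div_pow, Complex.I_sq] at product
  exact eq_inv_of_mul_eq_one_right (by linear_combination -4 * product)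

lemma tendsto_wallisQuotient : Tendsto wallisQuotient atTop (𝓝 1) := by
  have h := Real.Wallis.tendsto_W_nhds_pi_div_two.const_mul (2 / Real.pi)
  rwa [div_mul_div_cancel₀ Real.pi_ne_zero, div_self two_ne_zero] at h

lemma tendsto_inv_wallisQuotient_div_four :
    Tendsto (fun N : ℕ => (wallisQuotient (N / 4) : ℂ)⁻¹) atTop (𝓝 1) := by
  have h := (Complex.continuous_ofReal.tendsto 1).comp
    (tendsto_wallisQuotient.comp (Nat.tendsto_div_const_atTop four_ne_zero))
  simpa using h.inv₀ (by simp)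

lemma tendsto_natCast_div_div (d : ℕ) :
    Tendsto (fun N : ℕ => ((N / d : ℕ) : ℝ) / N) atTop (𝓝 (d : ℝ)⁻¹) := by
  have h := (tendsto_nat_floor_mul_div_atTop (inv_nonneg.2 (d.cast_nonneg (α := ℝ)))).comp
    tendsto_natCast_atTop_atTop
  refine h.congr fun N => ?_
  rw [Function.comp, mul_comm, ← div_eq_mul_inv, Nat.floor_div_eq_div]

lemma tendsto_div_four_add_half_div :
    Tendsto (fun N : ℕ => (((N / 4 : ℕ) : ℝ) + 1 / 2) / (N + 1)) atTop (𝓝 (1 / 4)) := by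
  have h := ((tendsto_natCast_div_div 4).mul (tendsto_natCast_div_add_atTop (1 : ℝ))).add
    (tendsto_one_div_add_atTop_nhds_zero_nat.const_mul (1 / 2))
  rw [mul_one, mul_zero, add_zero, Nat.cast_ofNat, ← one_div] at h
  refine h.congr fun N => ?_
  rcases N.eq_zero_or_pos with rfl | hN
  · simp
  · have hN : (N : ℝ) ≠ 0 := by exact_mod_cast hN.ne'
    field_simp

lemma tendsto_amp_squareAngle (k : Fin 4) :
    Tendsto (fun N => alternatingPattern.amp squareAngle N k) atTop (𝓝 (Complex.I / 4)) := by
  simp_rw [amp_squareAngle]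
  have h := (((Complex.continuous_ofReal.tendsto _).comp tendsto_div_four_add_half_div).const_mul
    Complex.I).mul tendsto_inv_wallisQuotient_div_four
  simpa [div_eq_mul_inv] using h

lemma isCyclicallyOrdered_squareAngle : IsCyclicallyOrdered squareAngle := by
  have hpi := Real.pi_pos
  constructor
  · intro i j hij
    have hij' : ((i : ℕ) : ℝ) < (j : ℕ) := by exact_mod_cast hij
    simp only [squareAngle]
    nlinarith
  · intro k i
    have hk : ((k : ℕ) : ℝ) ≤ 3 := by exact_mod_cast Nat.le_of_lt_succ k.2
    simp only [squareAngle]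
    nlinarith [(i : ℕ).cast_nonneg (α := ℝ)]

lemma sum_squareAngle : ∑ k, (squareAngle k : ℂ) = 0 := by
  simp only [squareAngle, Complex.ofReal_sub, Complex.ofReal_div, Complex.ofReal_mul,
    Complex.ofReal_natCast, Complex.ofReal_ofNat, Finset.sum_sub_distrib, Fin.sum_univ_four,
    Fin.isValue, Fin.coe_ofNat_eq_mod, Nat.zero_mod, CharP.cast_eq_zero, zero_mul, zero_div,
    Nat.one_mod, Nat.cast_one, one_mul, zero_add, Nat.reduceMod, Nat.cast_ofNat, ne_eq,
    OfNat.ofNat_ne_zero, not_false_eq_true, mul_div_cancel_left₀, Finset.sum_const,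
    Finset.card_univ, Fintype.card_fin, nsmul_eq_mul, Nat.mod_succ]
  ring

lemma squareAngle_sub_div_two (k j : Fin 4) :
    (squareAngle k - squareAngle j) / 2 = ((k : ℝ) - j) * (Real.pi / 4) := by
  simp only [squareAngle]
  ring

lemma sin_three_mul_pi_div_four : Real.sin (3 * (Real.pi / 4)) = √2 / 2 := by
  rw [← Real.sin_pi_div_four, ← Real.sin_pi_sub]
  ring_nf

lemma cos_three_mul_pi_div_four : Real.cos (3 * (Real.pi / 4)) = -(√2 / 2) := by
  rw [← Real.cos_pi_div_four, ← Real.cos_pi_sub]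
  ring_nf

lemma logChord_squareAngle (k : Fin 4) : logChord squareAngle k = Real.log 4 := by
  have two_mul_quarter : 2 * (Real.pi / 4) = Real.pi / 2 := by ring
  have log_sqrt : Real.log (√2) = Real.log 2 / 2 := Real.log_sqrt two_pos.le
  have log_four : Real.log 4 = 2 * Real.log 2 := by
    rw [← Real.log_rpow two_pos]
    norm_num
  rw [logChord, log_four]
  simp only [squareAngle_sub_div_two, Fin.sum_univ_four]
  fin_cases k <;> norm_num [two_mul_quarter, sin_three_mul_pi_div_four, log_sqrt,
    mul_div_cancel₀] <;> ring

lemma sum_cot_squareAngle (k : Fin 4) :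
    ∑ j, (Real.cot ((squareAngle k - squareAngle j) / 2) : ℂ) / 4 = 0 := by
  have two_mul_quarter : 2 * (Real.pi / 4) = Real.pi / 2 := by ring
  have sum_eq_zero : ∑ j, Real.cot ((squareAngle k - squareAngle j) / 2) = 0 := by
    simp only [squareAngle_sub_div_two, Fin.sum_univ_four, Real.cot_eq_cos_div_sin]
    fin_cases k <;> norm_num [two_mul_quarter, sin_three_mul_pi_div_four,
      cos_three_mul_pi_div_four]
  rw [← Finset.sum_div, ← Complex.ofReal_sum, sum_eq_zero, Complex.ofReal_zero, zero_div]

theorem tendsto_state_squareAngle {c : ℂ} (h : Tendsto (fun N : ℕ => ((N : ℂ) + 1) *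
    (alternatingPattern.matrix squareAngle N).det) atTop (𝓝 (4 * c))) :
    Tendsto (fun N => alternatingPattern.state (fun N => (N : ℂ) + 1) N squareAngle) atTop
      (𝓝 (averagedState c squareAngle)) := by
  have amp_eq (k : Fin 4) : Complex.I * Complex.exp (-Complex.I / 2 * ∑ k, (squareAngle k : ℂ)) *
      Complex.exp (-logChord squareAngle k) = Complex.I / 4 := by
    rw [sum_squareAngle, logChord_squareAngle, ← Complex.ofReal_neg, ← Complex.ofReal_exp,
      Real.exp_neg, Real.exp_log four_pos]
    simp [div_eq_mul_inv]
  unfold averagedState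
  refine .prodMk_nhds (tendsto_pi_nhds.2 fun k => ?_) (.prodMk_nhds (tendsto_pi_nhds.2 fun k => ?_)
    (.prodMk_nhds ?_ (.prodMk_nhds ?_ (.prodMk_nhds ?_ ?_))))
  · simp only [amp_eq]
    exact tendsto_amp_squareAngle k
  · simp only [amp_eq, dualAmp_squareAngle]
    exact ((tendsto_amp_squareAngle k).const_mul (-4)).inv₀ (by simp)
  · exact tendsto_const_nhds.congr fun N => funext fun k => (mixedAmp_squareAngle N k).symm
  · simp only [sum_cot_squareAngle]
    exact tendsto_const_nhds.congr fun N => funext fun k => (diagKernel_squareAngle N k).symm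
  · have exp_sum : Complex.exp (∑ k, (logChord squareAngle k : ℂ) / 4) = 4 := by
      simp only [logChord_squareAngle, Finset.sum_const, Finset.card_univ, Fintype.card_fin,
        nsmul_eq_mul]
      rw [Nat.cast_ofNat, mul_div_cancel₀ _ (by norm_num : (4 : ℂ) ≠ 0), ← Complex.ofReal_exp,
        Real.exp_log four_pos, Complex.ofReal_ofNat]
    rw [exp_sum, mul_comm c]
    simpa [JumpPattern.phasedDet, sum_squareAngle] using h
  · rw [sum_squareAngle, mul_zero, Complex.exp_zero]
    exact tendsto_inv_wallisQuotient_div_four.congr fun N => (leadingCoeff_squareAngle N).symm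

end FisherHartwig

/-! ### The Dirichlet eta function and the Wallis products -/

namespace FisherHartwig

section Eta

open Filter Topology

/-- The `m`-th term of the alternating series `∑ (-1) ^ m * q m` after three rounds of averaging
of consecutive partial sums. -/
def acceleratedTerm (q : ℕ → ℂ) (m : ℕ) : ℂ :=
  (-1) ^ m / 8 * (q m - 3 * q (m + 1) + 3 * q (m + 2) - q (m + 3))

/-- The correction which turns the partial sum of length `n` of the alternating series
`∑ (-1) ^ m * q m` into an accelerated partial sum. -/
def accelerationCorrection (q : ℕ → ℂ) (n : ℕ) : ℂ :=
  (-1) ^ n * (7 / 8 * q n - 1 / 2 * q (n + 1) + 1 / 8 * q (n + 2))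

lemma accelerationCorrection_add_sum (q : ℕ → ℂ) (n : ℕ) :
    accelerationCorrection q 0 + ∑ m ∈ Finset.range n, acceleratedTerm q m =
      ∑ m ∈ Finset.range n, (-1) ^ m * q m + accelerationCorrection q n := by
  induction n with
  | zero => simp
  | succ n ih =>
    rw [Finset.sum_range_succ, Finset.sum_range_succ, ← add_assoc, ih]
    simp only [acceleratedTerm, accelerationCorrection, pow_succ]
    ring

lemma tendsto_accelerationCorrection {q : ℕ → ℂ} (hq : Tendsto q atTop (𝓝 0)) :
    Tendsto (accelerationCorrection q) atTop (𝓝 0) := by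
  have h := ((hq.const_mul (7 / 8)).sub ((hq.comp (tendsto_add_atTop_nat 1)).const_mul (1 / 2))).add
    ((hq.comp (tendsto_add_atTop_nat 2)).const_mul (1 / 8))
  simp only [mul_zero, sub_zero, add_zero] at h
  rw [tendsto_zero_iff_norm_tendsto_zero] at h ⊢
  refine h.congr fun n => ?_
  simp [accelerationCorrection]

lemma norm_forwardDiff_le {E : Type*} [NormedAddCommGroup E] [NormedSpace ℝ E] {f f' : ℝ → E}
    {a B : ℝ} (hf : ∀ x, a ≤ x → HasDerivAt f (f' x) x) (hB : ∀ x, a ≤ x → ‖f' x‖ ≤ B)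
    (x : ℝ) (hx : a ≤ x) : ‖f (x + 1) - f x‖ ≤ B := by
  simpa using norm_image_sub_le_of_norm_deriv_le_segment'
    (fun y hy => (hf y (hx.trans hy.1)).hasDerivWithinAt) (fun y hy => hB y (hx.trans hy.1)) (x + 1)
    ⟨by linarith, le_rfl⟩

lemma hasDerivAt_forwardDiff {E : Type*} [NormedAddCommGroup E] [NormedSpace ℝ E] {f f' : ℝ → E}
    {a : ℝ} (hf : ∀ x, a ≤ x → HasDerivAt f (f' x) x) (x : ℝ) (hx : a ≤ x) :
    HasDerivAt (fun y => f (y + 1) - f y) (f' (x + 1) - f' x) x :=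
  ((hf (x + 1) (by linarith)).comp_add_const x 1).sub (hf x hx)

lemma norm_third_forwardDiff_le {E : Type*} [NormedAddCommGroup E] [NormedSpace ℝ E]
    {f f₁ f₂ f₃ : ℝ → E} {a B : ℝ} (h₀ : ∀ x, a ≤ x → HasDerivAt f (f₁ x) x)
    (h₁ : ∀ x, a ≤ x → HasDerivAt f₁ (f₂ x) x) (h₂ : ∀ x, a ≤ x → HasDerivAt f₂ (f₃ x) x)
    (hB : ∀ x, a ≤ x → ‖f₃ x‖ ≤ B) :
    ‖f (a + 3) - (3 : ℝ) • f (a + 2) + (3 : ℝ) • f (a + 1) - f a‖ ≤ B := by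
  have h := norm_forwardDiff_le (hasDerivAt_forwardDiff (hasDerivAt_forwardDiff h₀))
    (norm_forwardDiff_le (hasDerivAt_forwardDiff h₁) (norm_forwardDiff_le h₂ hB)) a le_rfl
  convert h using 2
  rw [show a + 1 + 1 + 1 = a + 3 by ring, show a + 1 + 1 = a + 2 by ring]
  module

lemma hasDerivAt_ofReal_cpow_neg (s : ℂ) {x : ℝ} (hx : 0 < x) :
    HasDerivAt (fun y : ℝ => (y : ℂ) ^ (-s)) (-s * (x : ℂ) ^ (-(s + 1))) x := by
  have h := ((hasDerivAt_id (x : ℂ)).cpow_const (c := -s)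
    (Or.inl (by simpa using hx))).comp_ofReal
  refine h.congr_deriv ?_
  rw [id, mul_one, neg_add']

/-- The `m`-th term of the Dirichlet eta series at `s`, up to sign. -/
def etaTerm (s : ℂ) (m : ℕ) : ℂ := ((m : ℂ) + 1) ^ (-s)

/-- The derivative of `etaTerm` in `s`. -/
def etaTermDeriv (s : ℂ) (m : ℕ) : ℂ := -Complex.log ((m : ℂ) + 1) * etaTerm s m

lemma norm_acceleratedTerm_etaTerm_le {s : ℂ} (hs : -3 ≤ s.re) (m : ℕ) :
    ‖acceleratedTerm (etaTerm s) m‖ ≤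
      ‖s‖ * ‖s + 1‖ * ‖s + 1 + 1‖ / 8 * ((m : ℝ) + 1) ^ (-(s.re + 3)) := by
  have hm : (0 : ℝ) < (m : ℝ) + 1 := by positivity
  have h₀ (s : ℂ) (x : ℝ) (hx : (m : ℝ) + 1 ≤ x) := hasDerivAt_ofReal_cpow_neg s (hm.trans_le hx)
  have norm_le (x : ℝ) (hx : (m : ℝ) + 1 ≤ x) :
      ‖-s * (-(s + 1) * (-(s + 1 + 1) * (x : ℂ) ^ (-(s + 1 + 1 + 1))))‖ ≤
        ‖s‖ * ‖s + 1‖ * ‖s + 1 + 1‖ * ((m : ℝ) + 1) ^ (-(s.re + 3)) := by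
    have re_eq : (-(s + 1 + 1 + 1)).re = -(s.re + 3) := by
      simp only [Complex.neg_re, Complex.add_re, Complex.one_re]
      ring
    rw [norm_mul, norm_mul, norm_mul, norm_neg, norm_neg, norm_neg, ← mul_assoc, ← mul_assoc,
      Complex.norm_cpow_eq_rpow_re_of_pos (hm.trans_le hx), re_eq]
    exact mul_le_mul_of_nonneg_left (Real.rpow_le_rpow_of_nonpos hm hx (by linarith))
      (by positivity)
  have h := norm_third_forwardDiff_le (h₀ s) (fun x hx => (h₀ (s + 1) x hx).const_mul _)
    (fun x hx => ((h₀ (s + 1 + 1) x hx).const_mul _).const_mul _) norm_le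
  have term_eq : acceleratedTerm (etaTerm s) m = -((-1) ^ m / 8) *
      ((((m : ℝ) + 1 + 3 : ℝ) : ℂ) ^ (-s) - (3 : ℝ) • (((m : ℝ) + 1 + 2 : ℝ) : ℂ) ^ (-s) +
        (3 : ℝ) • (((m : ℝ) + 1 + 1 : ℝ) : ℂ) ^ (-s) - (((m : ℝ) + 1 : ℝ) : ℂ) ^ (-s)) := by
    simp only [acceleratedTerm, etaTerm, Complex.real_smul]
    push_cast
    rw [add_right_comm (m : ℂ) 3 1, add_right_comm (m : ℂ) 2 1]
    ring
  rw [term_eq, norm_mul, norm_neg, norm_div, norm_pow, norm_neg, norm_one, one_pow,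
    Complex.norm_ofNat]
  linarith

/-- A disc which contains `-1`, does not contain the pole `1` of the zeta function, and meets the
half-plane of absolute convergence. -/
def etaDisc : Set ℂ := Metric.ball ⟨-1 / 8, 1⟩ (11 / 8)

lemma mem_etaDisc {s : ℂ} : s ∈ etaDisc ↔ (s.re + 1 / 8) ^ 2 + (s.im - 1) ^ 2 < (11 / 8) ^ 2 := by
  rw [etaDisc, Metric.mem_ball, Complex.dist_eq, ← sq_lt_sq₀ (norm_nonneg _) (by norm_num),
    Complex.sq_norm, Complex.normSq_apply]
  simp only [Complex.sub_re, Complex.sub_im]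
  ring_nf

lemma neg_one_mem_etaDisc : (-1 : ℂ) ∈ etaDisc := by
  rw [mem_etaDisc]
  norm_num

lemma ne_one_of_mem_etaDisc {s : ℂ} (hs : s ∈ etaDisc) : s ≠ 1 := by
  rintro rfl
  rw [mem_etaDisc] at hs
  norm_num at hs

lemma isOpen_etaDisc : IsOpen etaDisc := Metric.isOpen_ball

lemma neg_three_div_two_lt_re_of_mem_etaDisc {s : ℂ} (hs : s ∈ etaDisc) : -(3 / 2) < s.re := by
  rw [mem_etaDisc] at hs
  nlinarith [sq_nonneg (s.im - 1)]

lemma norm_le_three_of_mem_etaDisc {s : ℂ} (hs : s ∈ etaDisc) : ‖s‖ ≤ 3 := by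
  rw [mem_etaDisc] at hs
  rw [← sq_le_sq₀ (norm_nonneg _) (by norm_num), Complex.sq_norm, Complex.normSq_apply]
  nlinarith [sq_nonneg (s.im - 5 / 2), sq_nonneg (s.re - 1)]

lemma norm_acceleratedTerm_le (m : ℕ) (s : ℂ) (hs : s ∈ etaDisc) :
    ‖acceleratedTerm (etaTerm s) m‖ ≤ 15 / 2 * ((m : ℝ) + 1) ^ (-(3 / 2) : ℝ) := by
  have re_lt := neg_three_div_two_lt_re_of_mem_etaDisc hs
  have norm_le := norm_le_three_of_mem_etaDisc hs
  have norm_add_one_le : ‖s + 1‖ ≤ 4 := (norm_add_le _ _).trans (by norm_num; linarith)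
  have norm_add_two_le : ‖s + 1 + 1‖ ≤ 5 := (norm_add_le _ _).trans (by norm_num; linarith)
  calc ‖acceleratedTerm (etaTerm s) m‖
      ≤ ‖s‖ * ‖s + 1‖ * ‖s + 1 + 1‖ / 8 * ((m : ℝ) + 1) ^ (-(s.re + 3)) :=
        norm_acceleratedTerm_etaTerm_le (by linarith) m
    _ ≤ 3 * 4 * 5 / 8 * ((m : ℝ) + 1) ^ (-(3 / 2) : ℝ) := by
        gcongr
        · linarith [m.cast_nonneg (α := ℝ)]
        · linarith
    _ = 15 / 2 * ((m : ℝ) + 1) ^ (-(3 / 2) : ℝ) := by norm_num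

lemma summable_add_one_rpow {p : ℝ} (hp : p < -1) (C : ℝ) :
    Summable fun m : ℕ => C * ((m : ℝ) + 1) ^ p := by
  refine Summable.mul_left C (((summable_nat_add_iff 1).2 (Real.summable_nat_rpow.2 hp)).congr ?_)
  simp

lemma summable_acceleratedTerm_bound :
    Summable fun m : ℕ => (15 / 2 * ((m : ℝ) + 1) ^ (-(3 / 2) : ℝ) : ℝ) :=
  summable_add_one_rpow (by norm_num) _

lemma hasDerivAt_etaTerm (m : ℕ) (s : ℂ) :
    HasDerivAt (fun s => etaTerm s m) (etaTermDeriv s m) s := by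
  refine ((hasDerivAt_neg s).const_cpow (c := (m : ℂ) + 1)
    (Or.inl (Nat.cast_add_one_ne_zero m))).congr_deriv ?_
  rw [etaTermDeriv, etaTerm]
  ring

lemma hasDerivAt_acceleratedTerm (m : ℕ) (s : ℂ) : HasDerivAt
    (fun s => acceleratedTerm (etaTerm s) m) (acceleratedTerm (etaTermDeriv s) m) s :=
  ((((hasDerivAt_etaTerm m s).sub ((hasDerivAt_etaTerm (m + 1) s).const_mul 3)).add
    ((hasDerivAt_etaTerm (m + 2) s).const_mul 3)).sub (hasDerivAt_etaTerm (m + 3) s)).const_mul _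

lemma hasDerivAt_accelerationCorrection (n : ℕ) (s : ℂ) : HasDerivAt
    (fun s => accelerationCorrection (etaTerm s) n) (accelerationCorrection (etaTermDeriv s) n) s :=
  ((((hasDerivAt_etaTerm n s).const_mul (7 / 8)).sub
    ((hasDerivAt_etaTerm (n + 1) s).const_mul (1 / 2))).add
      ((hasDerivAt_etaTerm (n + 2) s).const_mul (1 / 8))).const_mul _

/-- The Dirichlet eta function `∑ (-1) ^ m * (m + 1) ^ (-s)`, as an accelerated series; this
converges for `-2 < re s`. -/
def dirichletEta (s : ℂ) : ℂ :=
  accelerationCorrection (etaTerm s) 0 + ∑' m, acceleratedTerm (etaTerm s) m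

lemma differentiableOn_tsum_acceleratedTerm :
    DifferentiableOn ℂ (fun s => ∑' m, acceleratedTerm (etaTerm s) m) etaDisc :=
  Complex.differentiableOn_tsum_of_summable_norm summable_acceleratedTerm_bound
    (fun m s _ => (hasDerivAt_acceleratedTerm m s).differentiableAt.differentiableWithinAt)
    isOpen_etaDisc norm_acceleratedTerm_le

lemma differentiableOn_dirichletEta : DifferentiableOn ℂ dirichletEta etaDisc :=
  .add (fun s _ => (hasDerivAt_accelerationCorrection 0 s).differentiableAt.differentiableWithinAt)
    differentiableOn_tsum_acceleratedTerm

lemma tendsto_alternating_sum_etaTermDeriv {s : ℂ} (hs : s ∈ etaDisc) :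
    Tendsto (fun n => ∑ m ∈ Finset.range n, (-1) ^ m * etaTermDeriv s m +
      accelerationCorrection (etaTermDeriv s) n) atTop (𝓝 (deriv dirichletEta s)) := by
  have hasSum_deriv := Complex.hasSum_deriv_of_summable_norm summable_acceleratedTerm_bound
    (fun m s _ => (hasDerivAt_acceleratedTerm m s).differentiableAt.differentiableWithinAt)
    isOpen_etaDisc norm_acceleratedTerm_le hs
  have deriv_eq : deriv dirichletEta s = accelerationCorrection (etaTermDeriv s) 0 +
      deriv (fun s => ∑' m, acceleratedTerm (etaTerm s) m) s :=
    ((hasDerivAt_accelerationCorrection 0 s).add (differentiableOn_tsum_acceleratedTerm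
      |>.differentiableAt (isOpen_etaDisc.mem_nhds hs)).hasDerivAt).deriv
  rw [deriv_eq]
  refine (hasSum_deriv.tendsto_sum_nat.const_add _).congr fun n => ?_
  rw [← accelerationCorrection_add_sum]
  simp only [(hasDerivAt_acceleratedTerm _ s).deriv]

lemma etaTerm_two_mul_add_one (s : ℂ) (m : ℕ) :
    etaTerm s (2 * m + 1) = 2 ^ (-s) * etaTerm s m := by
  have h := Complex.natCast_mul_natCast_cpow 2 (m + 1) (-s)
  rw [etaTerm, etaTerm]
  push_cast at h ⊢
  rw [← h]
  ring_nf

lemma alternating_sum_etaTerm (s : ℂ) (M : ℕ) :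
    ∑ m ∈ Finset.range (2 * M), (-1) ^ m * etaTerm s m =
      ∑ m ∈ Finset.range (2 * M), etaTerm s m -
        2 * 2 ^ (-s) * ∑ m ∈ Finset.range M, etaTerm s m := by
  induction M with
  | zero => simp
  | succ M ih =>
    rw [show 2 * (M + 1) = 2 * M + 1 + 1 by ring]
    simp only [Finset.sum_range_succ, ih, etaTerm_two_mul_add_one, pow_succ,
      (even_two_mul M).neg_one_pow]
    ring

lemma hasSum_etaTerm {s : ℂ} (hs : 1 < s.re) : HasSum (etaTerm s) (riemannZeta s) := by
  have term_eq : (fun n : ℕ => 1 / ((n : ℂ) + 1) ^ s) = etaTerm s := by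
    funext n
    rw [etaTerm, Complex.cpow_neg, one_div]
  have summable : Summable (etaTerm s) := by
    rw [← term_eq]
    simpa using (summable_nat_add_iff 1).2 (Complex.summable_one_div_nat_cpow.2 hs)
  rw [zeta_eq_tsum_one_div_nat_add_one_cpow hs, term_eq]
  exact summable.hasSum

lemma dirichletEta_eq_of_one_lt_re {s : ℂ} (hs : s ∈ etaDisc) (hre : 1 < s.re) :
    dirichletEta s = (1 - 2 * 2 ^ (-s)) * riemannZeta s := by
  have two_mul_tendsto : Tendsto (fun M : ℕ => 2 * M) atTop atTop :=
    tendsto_id.const_mul_atTop' two_pos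
  have zeta_sum := (hasSum_etaTerm hre).tendsto_sum_nat
  have eta_sum := (Summable.of_norm_bounded summable_acceleratedTerm_bound
    fun m => norm_acceleratedTerm_le m s hs).hasSum.tendsto_sum_nat.const_add
      (accelerationCorrection (etaTerm s) 0)
  refine tendsto_nhds_unique (eta_sum.comp two_mul_tendsto) ?_
  have h := ((zeta_sum.comp two_mul_tendsto).sub (zeta_sum.const_mul (2 * 2 ^ (-s)))).add
    ((tendsto_accelerationCorrection (hasSum_etaTerm hre).summable.tendsto_atTop_zero).comp
      two_mul_tendsto)
  rw [add_zero, ← one_sub_mul] at h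
  refine h.congr fun M => ?_
  simp only [Function.comp, accelerationCorrection_add_sum, alternating_sum_etaTerm]

lemma hasDerivAt_one_sub_mul_riemannZeta {s : ℂ} (hs : s ≠ 1) :
    HasDerivAt (fun s => (1 - 2 * 2 ^ (-s)) * riemannZeta s)
      (2 * 2 ^ (-s) * Complex.log 2 * riemannZeta s +
        (1 - 2 * 2 ^ (-s)) * deriv riemannZeta s) s := by
  have h := (((hasDerivAt_neg s).const_cpow (c := (2 : ℂ)) (Or.inl two_ne_zero)).const_mul
    2).const_sub 1
  exact (h.mul (differentiableAt_riemannZeta hs).hasDerivAt).congr_deriv (by ring)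

lemma dirichletEta_eqOn :
    Set.EqOn dirichletEta (fun s => (1 - 2 * 2 ^ (-s)) * riemannZeta s) etaDisc := by
  have analytic_zeta : AnalyticOnNhd ℂ (fun s => (1 - 2 * 2 ^ (-s)) * riemannZeta s) etaDisc :=
    DifferentiableOn.analyticOnNhd (fun s hs => (hasDerivAt_one_sub_mul_riemannZeta
      (ne_one_of_mem_etaDisc hs)).differentiableAt.differentiableWithinAt) isOpen_etaDisc
  have mem : (⟨9 / 8, 1⟩ : ℂ) ∈ etaDisc ∩ {s | 1 < s.re} := by
    refine ⟨mem_etaDisc.2 (by norm_num), ?_⟩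
    change (1 : ℝ) < 9 / 8
    norm_num
  refine (differentiableOn_dirichletEta.analyticOnNhd isOpen_etaDisc)
    |>.eqOn_of_preconnected_of_eventuallyEq analytic_zeta
      (convex_ball _ _).isPreconnected mem.1 ?_
  filter_upwards [(isOpen_etaDisc.inter (isOpen_lt continuous_const Complex.continuous_re)).mem_nhds
    mem] with s hs
  exact dirichletEta_eq_of_one_lt_re hs.1 hs.2

lemma riemannZeta_neg_one : riemannZeta (-1) = -1 / 12 := by
  have h := riemannZeta_neg_nat_eq_bernoulli' 1
  rw [bernoulli'_two] at h
  push_cast at h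
  rw [h]
  norm_num

theorem deriv_dirichletEta_neg_one : deriv dirichletEta (-1) =
    -(1 / 3) * Complex.log 2 - 3 * deriv riemannZeta (-1) := by
  have eventually_eq := dirichletEta_eqOn.eventuallyEq_of_mem
    (isOpen_etaDisc.mem_nhds neg_one_mem_etaDisc)
  rw [eventually_eq.deriv_eq, (hasDerivAt_one_sub_mul_riemannZeta (by norm_num)).deriv,
    riemannZeta_neg_one, neg_neg, Complex.cpow_one]
  ring

end Eta

end FisherHartwig

namespace FisherHartwig

open Filter Topology

lemma prod_range_natDiv {M : Type*} [CommMonoid M] (f : ℕ → M) {d : ℕ} (hd : 0 < d) (N : ℕ) :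
    ∏ n ∈ Finset.range N, f (n / d) =
      (∏ m ∈ Finset.range (N / d), f m) ^ d * f (N / d) ^ (N % d) := by
  have prod_block (m k : ℕ) (hk : k ≤ d) :
      ∏ n ∈ Finset.range k, f ((d * m + n) / d) = f m ^ k := by
    rw [Finset.prod_congr rfl fun n hn => ?_, Finset.prod_const, Finset.card_range]
    rw [Nat.mul_add_div hd, Nat.div_eq_of_lt ((Finset.mem_range.1 hn).trans_le hk), add_zero]
  have prod_mul (m : ℕ) :
      ∏ n ∈ Finset.range (d * m), f (n / d) = (∏ m ∈ Finset.range m, f m) ^ d := by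
    induction m with
    | zero => simp
    | succ m ih =>
      rw [mul_add_one, Finset.prod_range_add, ih, prod_block m d le_rfl, Finset.prod_range_succ,
        mul_pow]
  conv_lhs => rw [← Nat.div_add_mod N d]
  rw [Finset.prod_range_add, prod_mul, prod_block _ _ (Nat.mod_lt N hd).le]

lemma wallisQuotient_succ (m : ℕ) : wallisQuotient (m + 1) =
    wallisQuotient m * ((2 * m + 2) / (2 * m + 1) * ((2 * m + 2) / (2 * m + 3))) := by
  rw [wallisQuotient, Real.Wallis.W_succ, ← mul_assoc, wallisQuotient]

lemma tendsto_four_mul_add_div (a b : ℝ) :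
    Tendsto (fun m : ℕ => (4 * (m : ℝ) + a) / (4 * m + b)) atTop (𝓝 1) := by
  have h := tendsto_add_mul_div_add_mul_atTop_nhds a b 4 (four_ne_zero' ℝ)
  rw [div_self (four_ne_zero' ℝ)] at h
  refine h.congr fun m => ?_
  rw [add_comm a, add_comm b]

lemma wallisQuotient_le (m : ℕ) : wallisQuotient m ≤ (4 * m + 2) / (4 * m + 3) := by
  have monotone : Monotone fun m : ℕ => wallisQuotient m * ((4 * (m : ℝ) + 3) / (4 * m + 2)) := by
    refine monotone_nat_of_le_succ fun m => ?_
    rw [wallisQuotient_succ, mul_assoc]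
    refine mul_le_mul_of_nonneg_left ?_ (wallisQuotient_pos m).le
    push_cast
    rw [div_mul_div_comm, div_mul_div_comm, div_le_div_iff₀ (by positivity) (by positivity)]
    nlinarith [m.cast_nonneg (α := ℝ)]
  have h := monotone.ge_of_tendsto (tendsto_wallisQuotient.mul (tendsto_four_mul_add_div 3 2)) m
  rw [mul_one, mul_div_assoc', div_le_one (by positivity)] at h
  rwa [le_div_iff₀ (by positivity)]

lemma le_wallisQuotient (m : ℕ) : (4 * m + 1) / (4 * m + 2) ≤ wallisQuotient m := by
  have antitone : Antitone fun m : ℕ => wallisQuotient m * ((4 * (m : ℝ) + 2) / (4 * m + 1)) := by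
    refine antitone_nat_of_succ_le fun m => ?_
    rw [wallisQuotient_succ, mul_assoc]
    refine mul_le_mul_of_nonneg_left ?_ (wallisQuotient_pos m).le
    push_cast
    rw [div_mul_div_comm, div_mul_div_comm, div_le_div_iff₀ (by positivity) (by positivity)]
    nlinarith [m.cast_nonneg (α := ℝ)]
  have h := antitone.le_of_tendsto (tendsto_wallisQuotient.mul (tendsto_four_mul_add_div 2 1)) m
  rw [mul_one, mul_div_assoc', one_le_div (by positivity)] at h
  rwa [div_le_iff₀ (by positivity)]

lemma tendsto_mul_log_wallisQuotient :
    Tendsto (fun m : ℕ => m * Real.log (wallisQuotient m)) atTop (𝓝 (-(1 / 4))) := by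
  have limit (a : ℝ) : Tendsto (fun m : ℕ => (m : ℝ) * -(1 / (4 * m + a))) atTop
      (𝓝 (-(1 / 4))) := by
    have h := ((tendsto_four_mul_add_div 0 a).const_mul (1 / 4)).neg
    rw [mul_one] at h
    exact h.congr fun m => by ring
  refine tendsto_of_tendsto_of_tendsto_of_le_of_le (limit 1) (limit 3) (fun m => ?_) (fun m => ?_)
  · refine mul_le_mul_of_nonneg_left ?_ m.cast_nonneg
    calc -(1 / (4 * (m : ℝ) + 1)) = 1 - ((4 * (m : ℝ) + 1) / (4 * m + 2))⁻¹ := by field_simp; ring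
      _ ≤ 1 - (wallisQuotient m)⁻¹ :=
        sub_le_sub_left (inv_anti₀ (by positivity) (le_wallisQuotient m)) 1
      _ ≤ Real.log (wallisQuotient m) := Real.one_sub_inv_le_log_of_pos (wallisQuotient_pos m)
  · refine mul_le_mul_of_nonneg_left ?_ m.cast_nonneg
    calc Real.log (wallisQuotient m) ≤ wallisQuotient m - 1 :=
        Real.log_le_sub_one_of_pos (wallisQuotient_pos m)
      _ ≤ (4 * m + 2) / (4 * m + 3) - 1 := sub_le_sub_right (wallisQuotient_le m) 1
      _ = -(1 / (4 * (m : ℝ) + 3)) := by field_simp; ring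

lemma sum_log_wallisQuotient (M : ℕ) :
    ∑ m ∈ Finset.range M, Real.log (wallisQuotient m) =
      M * Real.log (wallisQuotient M) + M * Real.log (2 * M + 1) -
        ∑ m ∈ Finset.range (2 * M), (-1) ^ m * Real.negMulLog (m + 1) := by
  induction M with
  | zero => simp
  | succ M ih =>
    rw [Finset.sum_range_succ, ih, wallisQuotient_succ, show 2 * (M + 1) = 2 * M + 1 + 1 by ring,
      Finset.sum_range_succ, Finset.sum_range_succ, pow_succ, (even_two_mul M).neg_one_pow,
      Real.log_mul (wallisQuotient_pos M).ne' (by positivity),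
      Real.log_mul (by positivity) (by positivity), Real.log_div (by positivity) (by positivity),
      Real.log_div (by positivity) (by positivity), Real.negMulLog, Real.negMulLog]
    push_cast
    rw [show 2 * ((M : ℝ) + 1) + 1 = 2 * M + 3 by ring,
      show 2 * (M : ℝ) + 1 + 1 = 2 * M + 2 by ring]
    ring

lemma etaTermDeriv_neg_one (m : ℕ) :
    etaTermDeriv (-1) m = (Real.negMulLog ((m : ℝ) + 1) : ℂ) := by
  rw [etaTermDeriv, etaTerm, Real.negMulLog, neg_neg, Complex.cpow_one, Complex.ofReal_mul,
    Complex.ofReal_log (by positivity)]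
  push_cast
  ring

lemma tendsto_boundary_terms : Tendsto (fun M : ℕ => M * Real.log (2 * M + 1) +
    1 / 4 * Real.log M + (7 / 8 * Real.negMulLog (2 * M + 1) - 1 / 2 * Real.negMulLog (2 * M + 2) +
      1 / 8 * Real.negMulLog (2 * M + 3))) atTop (𝓝 (1 / 4 - 1 / 4 * Real.log 2)) := by
  have two_mul_tendsto : Tendsto (fun M : ℕ => 2 * (M : ℝ)) atTop atTop :=
    tendsto_natCast_atTop_atTop.const_mul_atTop two_pos
  have mul_log (a : ℝ) : Tendsto (fun M : ℕ => 2 * (M : ℝ) * Real.log (1 + a / (2 * M))) atTop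
      (𝓝 a) := (Real.tendsto_mul_log_one_add_div_atTop a).comp two_mul_tendsto
  have log (a : ℝ) : Tendsto (fun M : ℕ => Real.log (1 + a / (2 * (M : ℝ)))) atTop (𝓝 0) := by
    have h := (two_mul_tendsto.const_div_atTop a).const_add 1
    rw [add_zero] at h
    simpa using h.log one_ne_zero
  have h := ((((mul_log 1).const_mul (-(3 / 8))).add ((mul_log 2).const_mul (1 / 2))).add
    ((mul_log 3).const_mul (-(1 / 8)))).add ((((log 1).const_mul (-(7 / 8))).add (log 2)).add
      ((log 3).const_mul (-(3 / 8)))) |>.sub_const (1 / 4 * Real.log 2)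
  refine (h.congr' ?_).trans_eq (by norm_num)
  filter_upwards [eventually_gt_atTop 0] with M hM
  have hM : (0 : ℝ) < M := by exact_mod_cast hM
  have log_add (a : ℝ) (ha : 0 < a) : Real.log (2 * M + a) =
      Real.log 2 + Real.log M + Real.log (1 + a / (2 * M)) := by
    rw [← Real.log_mul two_ne_zero hM.ne', ← Real.log_mul (by positivity) (by positivity),
      mul_add, mul_one, mul_div_cancel₀ _ (by positivity)]
  rw [Real.negMulLog, Real.negMulLog, Real.negMulLog, log_add 1 one_pos, log_add 2 two_pos,
    log_add 3 three_pos]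
  ring

lemma tendsto_alternating_sum_negMulLog : Tendsto (fun M : ℕ =>
    ((∑ m ∈ Finset.range (2 * M), (-1) ^ m * Real.negMulLog (m + 1) +
      (7 / 8 * Real.negMulLog (2 * M + 1) - 1 / 2 * Real.negMulLog (2 * M + 2) +
        1 / 8 * Real.negMulLog (2 * M + 3)) : ℝ) : ℂ)) atTop
    (𝓝 (-(1 / 3) * Complex.log 2 - 3 * deriv riemannZeta (-1))) := by
  rw [← deriv_dirichletEta_neg_one]
  refine ((tendsto_alternating_sum_etaTermDeriv neg_one_mem_etaDisc).comp
    (tendsto_id.const_mul_atTop' two_pos)).congr fun M => ?_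
  simp only [Function.comp, id, accelerationCorrection, etaTermDeriv_neg_one,
    (even_two_mul M).neg_one_pow]
  push_cast
  rw [show 2 * (M : ℝ) + 1 + 1 = 2 * M + 2 by ring, show 2 * (M : ℝ) + 2 + 1 = 2 * M + 3 by ring,
    one_mul]

lemma tendsto_sum_log_wallisQuotient : Tendsto (fun M : ℕ =>
    ((∑ m ∈ Finset.range M, Real.log (wallisQuotient m) + 1 / 4 * Real.log M : ℝ) : ℂ)) atTop
    (𝓝 (1 / 12 * Complex.log 2 + 3 * deriv riemannZeta (-1))) := by
  have h := ((Complex.continuous_ofReal.tendsto _).comp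
    (tendsto_mul_log_wallisQuotient.add tendsto_boundary_terms)).sub
      tendsto_alternating_sum_negMulLog
  refine (h.congr fun M => ?_).trans_eq ?_
  · rw [Function.comp, ← Complex.ofReal_sub, sum_log_wallisQuotient]
    ring_nf
  · congr 1
    push_cast [Complex.ofReal_log two_pos.le]
    ring

/-- The constant `(G(1/2) G(3/2)) ^ 4` of the asymptotics, `G` being the Barnes function. -/
def jumpConstant : ℂ := (2 : ℂ) ^ ((1 : ℂ) / 3) * Complex.exp (12 * deriv riemannZeta (-1))

lemma tendsto_mul_prod_wallisQuotient : Tendsto (fun M : ℕ =>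
    ((M * (∏ m ∈ Finset.range M, wallisQuotient m) ^ 4 : ℝ) : ℂ)) atTop (𝓝 jumpConstant) := by
  have exp_limit : Complex.exp (4 * (1 / 12 * Complex.log 2 + 3 * deriv riemannZeta (-1))) =
      jumpConstant := by
    rw [jumpConstant, Complex.cpow_def_of_ne_zero two_ne_zero, ← Complex.exp_add]
    ring_nf
  rw [← exp_limit]
  refine (tendsto_sum_log_wallisQuotient.const_mul 4).cexp.congr' ?_
  filter_upwards [eventually_gt_atTop 0] with M hM
  have exp_sum : Real.exp (∑ m ∈ Finset.range M, Real.log (wallisQuotient m)) =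
      ∏ m ∈ Finset.range M, wallisQuotient m := by
    rw [Real.exp_sum]
    exact Finset.prod_congr rfl fun m _ => Real.exp_log (wallisQuotient_pos m)
  rw [← Complex.ofReal_ofNat, ← Complex.ofReal_mul, ← Complex.ofReal_exp, mul_add, ← mul_assoc,
    mul_one_div_cancel four_ne_zero, one_mul, Real.exp_add, Real.exp_log (by exact_mod_cast hM),
    mul_comm, ← exp_sum, ← Real.exp_nat_mul, Nat.cast_ofNat]

lemma tendsto_wallisQuotient_div_four_pow_mod :
    Tendsto (fun N : ℕ => wallisQuotient (N / 4) ^ (N % 4)) atTop (𝓝 1) := by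
  have le_one (m : ℕ) : wallisQuotient m ≤ 1 :=
    (wallisQuotient_le m).trans ((div_le_one (by positivity)).2 (by linarith))
  have h := (tendsto_wallisQuotient.comp (Nat.tendsto_div_const_atTop four_ne_zero)).pow 4
  rw [one_pow] at h
  exact tendsto_of_tendsto_of_tendsto_of_le_of_le h tendsto_const_nhds
    (fun N => pow_le_pow_of_le_one (wallisQuotient_pos _).le (le_one _) (Nat.mod_lt N four_pos).le)
    (fun N => pow_le_one₀ (wallisQuotient_pos _).le (le_one _))

theorem tendsto_det_squareAngle : Tendsto (fun N : ℕ =>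
    ((N : ℂ) + 1) * (alternatingPattern.matrix squareAngle N).det) atTop
      (𝓝 (4 * jumpConstant)) := by
  have div_tendsto := Nat.tendsto_div_const_atTop four_ne_zero
  have ratio := ((tendsto_natCast_div_div 4).inv₀ (by norm_num)).mul
    tendsto_wallisQuotient_div_four_pow_mod
  have h := ((Complex.continuous_ofReal.tendsto _).comp ratio).mul
    (tendsto_mul_prod_wallisQuotient.comp div_tendsto)
  rw [mul_one, inv_inv, Nat.cast_ofNat, Complex.ofReal_ofNat] at h
  have h' : Tendsto (fun N : ℕ => (N : ℂ) * ∏ j ∈ Finset.range N, (wallisQuotient (j / 4) : ℂ))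
      atTop (𝓝 (4 * jumpConstant)) := by
    refine h.congr' ?_
    filter_upwards [div_tendsto.eventually_gt_atTop 0] with N hN
    have hN : (((N / 4 : ℕ) : ℝ) : ℂ) ≠ 0 := by exact_mod_cast hN.ne'
    rw [prod_range_natDiv (fun m => (wallisQuotient m : ℂ)) four_pos]
    simp only [Function.comp]
    push_cast at hN ⊢
    field_simp
  refine (h'.comp (tendsto_add_atTop_nat 1)).congr fun N => ?_
  rw [det_squareAngle, Function.comp, Nat.cast_add_one]

end FisherHartwig

/-! ### The correlator -/

namespace FisherHartwig

open Filter Topology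

section FourierCoefficients

open Set

lemma intervalIntegrable_and_integral_mul_of_eqOn_Ioo {f : ℝ → ℝ} {g : ℝ → ℂ}
    (hg : Continuous g) {a b c : ℝ} (hab : a ≤ b) (h : ∀ t ∈ Ioo a b, f t = c) :
    IntervalIntegrable (fun t => (f t : ℂ) * g t) MeasureTheory.volume a b ∧
      ∫ t in a..b, (f t : ℂ) * g t = c * ∫ t in a..b, g t := by
  have heq : EqOn (fun t => (c : ℂ) * g t) (fun t => (f t : ℂ) * g t) (Ioo a b) :=
    fun t ht => by simp only [h t ht]
  refine ⟨((hg.const_mul _).intervalIntegrable _ _).congr_uIoo (by rwa [uIoo_of_le hab]), ?_⟩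
  rw [← intervalIntegral.integral_congr_Ioo_of_le hab heq, intervalIntegral.integral_const_mul]

lemma integral_exp_neg_I_mul {n : ℤ} (hn : n ≠ 0) (a b : ℝ) :
    ∫ t in a..b, Complex.exp (-Complex.I * n * t) = Complex.I / n *
      (Complex.exp (-Complex.I * n * b) - Complex.exp (-Complex.I * n * a)) := by
  have hn' : (n : ℂ) ≠ 0 := by exact_mod_cast hn
  rw [integral_exp_mul_complex (mul_ne_zero (neg_ne_zero.2 Complex.I_ne_zero) hn')]
  field_simp [Complex.I_ne_zero]
  rw [Complex.I_sq]
  ring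

lemma periodic_exp_neg_I_mul (n : ℤ) :
    Function.Periodic (fun t : ℝ => Complex.exp (-Complex.I * n * t)) (2 * Real.pi) := by
  intro t
  refine Eq.trans ?_ (Complex.exp_periodic.sub_int_mul_eq n)
  push_cast
  ring_nf

lemma jumpPoint_zpow_neg {ι : Type*} (θ : ι → ℝ) (k : ι) (n : ℤ) :
    jumpPoint θ k ^ (-n) = Complex.exp (-Complex.I * n * θ k) := by
  rw [jumpPoint, ← Complex.exp_int_mul]
  congr 1
  push_cast
  ring

variable {f : ℝ → ℝ} {θ : Fin 4 → ℝ}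

lemma integral_mul_eq_of_alternating (hθ : IsCyclicallyOrdered θ)
    (h₀₁ : ∀ t ∈ Ioo (θ 0) (θ 1), f t = -1) (h₁₂ : ∀ t ∈ Ioo (θ 1) (θ 2), f t = 1)
    (h₂₃ : ∀ t ∈ Ioo (θ 2) (θ 3), f t = -1)
    (h₃₀ : ∀ t ∈ Ioo (θ 3) (θ 0 + 2 * Real.pi), f t = 1) {g : ℝ → ℂ} (hg : Continuous g) :
    ∫ t in θ 0..(θ 0 + 2 * Real.pi), (f t : ℂ) * g t =
      -(∫ t in θ 0..θ 1, g t) + (∫ t in θ 1..θ 2, g t) - (∫ t in θ 2..θ 3, g t)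
        + ∫ t in θ 3..(θ 0 + 2 * Real.pi), g t := by
  have le_of_lt {k i : Fin 4} (h : k < i) : θ k ≤ θ i := (hθ.1 h).le
  obtain ⟨i₀₁, e₀₁⟩ := intervalIntegrable_and_integral_mul_of_eqOn_Ioo hg
    (le_of_lt (by decide)) h₀₁
  obtain ⟨i₁₂, e₁₂⟩ := intervalIntegrable_and_integral_mul_of_eqOn_Ioo hg
    (le_of_lt (by decide)) h₁₂
  obtain ⟨i₂₃, e₂₃⟩ := intervalIntegrable_and_integral_mul_of_eqOn_Ioo hg
    (le_of_lt (by decide)) h₂₃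
  obtain ⟨i₃₀, e₃₀⟩ := intervalIntegrable_and_integral_mul_of_eqOn_Ioo hg (hθ.2 3 0).le h₃₀
  rw [← intervalIntegral.integral_add_adjacent_intervals (i₀₁.trans (i₁₂.trans i₂₃)) i₃₀,
    ← intervalIntegral.integral_add_adjacent_intervals (i₀₁.trans i₁₂) i₂₃,
    ← intervalIntegral.integral_add_adjacent_intervals i₀₁ i₁₂, e₀₁, e₁₂, e₂₃, e₃₀]
  push_cast
  ring

lemma fourierCoef_eq_coeff_alternatingPattern (hf : Function.Periodic f (2 * Real.pi))
    (hθ : IsCyclicallyOrdered θ)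
    (h₀₁ : ∀ t ∈ Ioo (θ 0) (θ 1), f t = -1) (h₁₂ : ∀ t ∈ Ioo (θ 1) (θ 2), f t = 1)
    (h₂₃ : ∀ t ∈ Ioo (θ 2) (θ 3), f t = -1)
    (h₃₀ : ∀ t ∈ Ioo (θ 3) (θ 0 + 2 * Real.pi), f t = 1) (n : ℤ) :
    fourierCoef f n = alternatingPattern.coeff θ n := by
  have hpi : (Real.pi : ℂ) ≠ 0 := by exact_mod_cast Real.pi_ne_zero
  have hper : Function.Periodic
      (fun t : ℝ => (f t : ℂ) * Complex.exp (-Complex.I * n * t)) (2 * Real.pi) :=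
    (hf.comp Complex.ofReal).mul (periodic_exp_neg_I_mul n)
  have hshift := hper.intervalIntegral_add_eq 0 (θ 0)
  rw [zero_add] at hshift
  rw [fourierCoef, hshift, integral_mul_eq_of_alternating hθ h₀₁ h₁₂ h₂₃ h₃₀ (by fun_prop)]
  rcases eq_or_ne n 0 with rfl | hn
  · simp only [Int.cast_zero, mul_zero, zero_mul, Complex.exp_zero, intervalIntegral.integral_const,
      Complex.real_smul, JumpPattern.coeff, alternatingPattern, Fin.sum_univ_four, if_true]
    push_cast
    field_simp
    simp only [Fin.isValue, neg_sub, Fin.coe_ofNat_eq_mod, Nat.zero_mod, pow_zero, mul_one,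
      Nat.one_mod, pow_succ, mul_neg, Nat.reduceMod, neg_neg, Nat.mod_succ]
    ring
  · have hn' : (n : ℂ) ≠ 0 := by exact_mod_cast hn
    have hexp := periodic_exp_neg_I_mul n (θ 0)
    simp only at hexp
    simp only [integral_exp_neg_I_mul hn, hexp, JumpPattern.coeff, if_neg hn, jumpPoint_zpow_neg,
      alternatingPattern, Fin.sum_univ_four]
    field_simp
    simp only [Fin.isValue, neg_sub, Fin.coe_ofNat_eq_mod, Nat.zero_mod, pow_zero, mul_one,
      Nat.one_mod, pow_succ, mul_neg, Nat.reduceMod, neg_neg, Nat.mod_succ]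
    ring

end FourierCoefficients

section Corner

open Matrix

lemma toeplitz_inv_last_zero_mul_det {K : Type*} [Field K] (a : ℤ → K) {N : ℕ}
    (hA : (toeplitz a (N + 1)).det ≠ 0) :
    (toeplitz a (N + 1))⁻¹ (Fin.last N) 0 * (toeplitz a (N + 1)).det =
      (-1) ^ N * (toeplitz (fun n => a (n + 1)) N).det := by
  have submatrix_eq : (toeplitz a (N + 1)).submatrix (Fin.succAbove 0) (Fin.last N).succAbove =
      toeplitz (fun n => a (n + 1)) N := by
    ext j k
    simp only [submatrix_apply, toeplitz, of_apply, Fin.succAbove_zero, Fin.succAbove_last,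
      Fin.val_succ, Fin.val_castSucc]
    congr 1
    push_cast
    ring
  rw [inv_def, Matrix.smul_apply, Ring.inverse_eq_inv', smul_eq_mul, mul_comm, ← mul_assoc,
    mul_inv_cancel₀ hA, one_mul, adjugate_fin_succ_eq_det_submatrix, submatrix_eq]
  simp

end Corner

namespace JumpPattern

variable {ι : Type*} [Fintype ι] (P : JumpPattern ι) {θ : ι → ℝ}

lemma add_winding_mul_det_minor (hsum : ∑ k, θ k = 0) {N : ℕ} (hA : (P.matrix θ N).det ≠ 0) :
    ((N : ℂ) + P.winding) * (toeplitz (fun n => P.coeff θ (n + 1 - P.winding)) N).det =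
      (-1) ^ N * (-Complex.I * (((N : ℂ) + 1) * P.phasedDet θ N) *
        ∑ k, P.amp θ N k * (jumpPoint θ k ^ N)⁻¹) := by
  have hsum' : ∑ k, (θ k : ℂ) = 0 := by exact_mod_cast hsum
  have phasedDet_eq : P.phasedDet θ N = (P.matrix θ N).det := by
    rw [phasedDet, hsum', mul_zero, zero_div, Complex.exp_zero, mul_one]
  have amp_eq (k : ι) : P.weight θ k * (jumpPoint θ k ^ N)⁻¹ * P.value θ N k ^ 2 =
      ((N : ℂ) + 1) * (P.amp θ N k * (jumpPoint θ k ^ N)⁻¹) := by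
    rw [amp]
    field_simp [N.cast_add_one_ne_zero (R := ℂ)]
  have sign_sq : ((-1 : ℂ) ^ N) * (-1) ^ N = 1 := by rw [← mul_pow]; simp
  have corner := P.add_winding_mul_inv_last_zero hA
  have minor := toeplitz_inv_last_zero_mul_det (fun n => P.coeff θ (n - P.winding)) hA
  rw [← matrix] at minor
  simp only [amp_eq, ← Finset.mul_sum] at corner
  rw [phasedDet_eq]
  linear_combination (-1) ^ N * (P.matrix θ N).det * corner
    - (-1) ^ N * ((N : ℂ) + P.winding) * minor
    - ((N : ℂ) + P.winding) * (toeplitz (fun n => P.coeff θ (n + 1 - P.winding)) N).det * sign_sq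

lemma tendsto_add_winding_mul_det_minor_sub (hsum : ∑ k, θ k = 0) {c : ℂ} (hc : c ≠ 0)
    (h : Tendsto (fun N => P.state (fun N => (N : ℂ) + 1) N θ) atTop (𝓝 (averagedState c θ))) :
    Tendsto (fun N : ℕ =>
      ((N : ℂ) + P.winding) * (toeplitz (fun n => P.coeff θ (n + 1 - P.winding)) N).det
        - (-1) ^ N * (c * ∑ k, Complex.exp ((∑ j, logChord θ j) / 4 - logChord θ k : ℝ)
          * (jumpPoint θ k ^ N)⁻¹)) atTop (𝓝 0) := by
  have hsum' : ∑ k, (θ k : ℂ) = 0 := by exact_mod_cast hsum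
  set v := averagedState c θ with hv
  have hamp (k : ι) : Tendsto (fun N => P.amp θ N k) atTop (𝓝 (v.amp k)) :=
    tendsto_pi_nhds.1 (Tendsto.fst_nhds h) k
  have hdet : Tendsto (fun N : ℕ => ((N : ℂ) + 1) * P.phasedDet θ N) atTop (𝓝 v.det) :=
    h.snd_nhds.snd_nhds.snd_nhds.snd_nhds.fst_nhds
  have limit_eq (k : ι) : -Complex.I * v.det * v.amp k =
      c * Complex.exp ((∑ j, logChord θ j) / 4 - logChord θ k : ℝ) := by
    simp only [hv, averagedState, JumpState.det, JumpState.amp, hsum', mul_zero, Complex.exp_zero]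
    push_cast
    rw [Complex.exp_sub, Complex.exp_neg, Finset.sum_div]
    linear_combination -c * Complex.exp (∑ k, (logChord θ k : ℂ) / 4)
      * (Complex.exp (logChord θ k))⁻¹ * Complex.I_sq
  have hterm (k : ι) : Tendsto (fun N : ℕ => (-1) ^ N * (jumpPoint θ k ^ N)⁻¹ *
      (-Complex.I * (((N : ℂ) + 1) * P.phasedDet θ N) * P.amp θ N k
        - -Complex.I * v.det * v.amp k)) atTop (𝓝 0) := by
    refine isBoundedUnder_le_mul_tendsto_zero ?_ ?_
    · exact isBoundedUnder_of ⟨1, fun N => by simp [norm_jumpPoint]⟩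
    · simpa only [sub_self] using ((hdet.const_mul (-Complex.I)).mul (hamp k)).sub_const
        (-Complex.I * v.det * v.amp k)
  have hne : ∀ᶠ N in atTop, (P.matrix θ N).det ≠ 0 := by
    filter_upwards [hdet.eventually_ne (mul_ne_zero hc (Complex.exp_ne_zero _))] with N hN hA
    exact hN (by rw [phasedDet, hA, zero_mul, mul_zero])
  have hterms := tendsto_finsetSum Finset.univ fun k _ => hterm k
  rw [Finset.sum_const_zero] at hterms
  refine hterms.congr' ?_
  filter_upwards [hne] with N hA
  rw [P.add_winding_mul_det_minor hsum hA, Finset.mul_sum, Finset.mul_sum, Finset.mul_sum,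
    Finset.mul_sum, ← Finset.sum_sub_distrib]
  refine Finset.sum_congr rfl fun k _ => ?_
  rw [limit_eq]
  ring

end JumpPattern

lemma isLittleO_sub_inv_mul_of_tendsto {x y : ℕ → ℂ} (c : ℂ)
    (h : Tendsto (fun N : ℕ => ((N : ℂ) + c) * x N - y N) atTop (𝓝 0))
    (hy : y =O[atTop] (1 : ℕ → ℝ)) :
    (fun N : ℕ => x N - (N : ℂ)⁻¹ * y N) =o[atTop] (fun N : ℕ => (N : ℝ)⁻¹) := by
  have hquot := tendsto_natCast_div_add_atTop c
  have hfirst := hquot.mul h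
  have hsecond : Tendsto (fun N : ℕ => (1 - (N : ℂ) / (N + c)) * y N) atTop (𝓝 0) := by
    refine (Asymptotics.isLittleO_one_iff ℝ).1 ?_
    have h' := (Asymptotics.isLittleO_one_iff ℝ).2 (sub_self (1 : ℂ) ▸ hquot.const_sub 1)
    simpa using h'.mul_isBigO hy
  have hlim := hfirst.sub hsecond
  rw [mul_zero, sub_zero] at hlim
  have hcongr : (fun N : ℕ => (N : ℂ)⁻¹) =O[atTop] (fun N : ℕ => (N : ℝ)⁻¹) :=
    Asymptotics.isBigO_of_le _ fun N => by simp
  refine Asymptotics.IsLittleO.trans_isBigO (Asymptotics.isLittleO_of_tendsto' ?_ ?_) hcongr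
  · filter_upwards [eventually_ne_atTop 0] with N hN h'
    exact absurd (inv_eq_zero.1 h') (by exact_mod_cast hN)
  · refine hlim.congr' ?_
    filter_upwards [hquot.eventually_ne one_ne_zero] with N hN
    obtain ⟨hN₀, hNc⟩ := div_ne_zero_iff.1 hN
    field_simp
    ring

section FermiPoints

variable {a b : ℝ}

/-- The jumps, at `±a` and `±b`, of the symbol with the Fermi points `a` and `b`. -/
def fermiAngle (a b : ℝ) : Fin 4 → ℝ := ![-b, -a, a, b]

lemma isCyclicallyOrdered_fermiAngle (ha : 0 < a) (hab : a < b) (hb : b < Real.pi) :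
    IsCyclicallyOrdered (fermiAngle a b) := by
  refine ⟨Fin.strictMono_iff_lt_succ.2 fun k => ?_, fun k i => ?_⟩
  · fin_cases k <;> simp [fermiAngle] <;> linarith
  · fin_cases k <;> fin_cases i <;> simp [fermiAngle] <;> linarith

lemma sum_fermiAngle (a b : ℝ) : ∑ k, fermiAngle a b k = 0 := by
  simp [fermiAngle, Fin.sum_univ_four]

lemma logChord_fermiAngle (a b : ℝ) (k : Fin 4) : logChord (fermiAngle a b) k =
    Real.log (2 * Real.sin ((b - a) / 2)) + Real.log (2 * Real.sin ((b + a) / 2))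
      + Real.log (2 * Real.sin (fermiAngle a b k)) := by
  have log_sin_neg (x : ℝ) : Real.log (2 * Real.sin (-x)) = Real.log (2 * Real.sin x) := by
    rw [Real.sin_neg, mul_neg, Real.log_neg_eq_log]
  have log_sin_sub : Real.log (2 * Real.sin ((a - b) / 2)) =
      Real.log (2 * Real.sin ((b - a) / 2)) := by
    rw [← log_sin_neg, ← neg_div, neg_sub]
  fin_cases k <;>
    simp only [logChord, fermiAngle, Fin.sum_univ_four, Fin.zero_eta, Fin.mk_one, Fin.reduceFinMk,
      Matrix.cons_val, sub_neg_eq_add, ← neg_add', ← sub_eq_add_neg, neg_div, log_sin_neg,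
      add_self_div_two, add_comm a b, log_sin_sub, sub_self, zero_div, Real.sin_zero, mul_zero,
      Real.log_zero] <;>
    ring

/-- The oscillating factor of the correlator with the Fermi points `a` and `b`. -/
def fermiAmplitude (a b : ℝ) (N : ℕ) : ℝ :=
  √(Real.sin b / Real.sin a) * (2 * Real.cos (N * a))
    + √(Real.sin a / Real.sin b) * (2 * Real.cos (N * b))

lemma exp_log_two_mul_sub_div_two {x y : ℝ} (hx : 0 < x) (hy : 0 < y) :
    Real.exp ((Real.log (2 * y) - Real.log (2 * x)) / 2) = √(y / x) := by
  rw [← Real.log_div (by positivity) (by positivity), mul_div_mul_left _ _ two_ne_zero,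
    ← Real.log_sqrt (by positivity), Real.exp_log (by positivity)]

lemma inv_jumpPoint_pow_add_inv {ι : Type*} {θ : ι → ℝ} {k i : ι} (h : θ i = -θ k) (N : ℕ) :
    (jumpPoint θ k ^ N)⁻¹ + (jumpPoint θ i ^ N)⁻¹ = (2 * Real.cos (N * θ k) : ℝ) := by
  simp only [jumpPoint, h, ← Complex.exp_nat_mul, ← Complex.exp_neg]
  push_cast
  rw [Complex.two_cos, add_comm]
  ring_nf

lemma sum_exp_logChord_fermiAngle (ha : 0 < Real.sin a) (hb : 0 < Real.sin b) (N : ℕ) :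
    ∑ k, (Complex.exp ((∑ j, logChord (fermiAngle a b) j) / 4 - logChord (fermiAngle a b) k : ℝ))
      * (jumpPoint (fermiAngle a b) k ^ N)⁻¹ = fermiAmplitude a b N := by
  have outer := exp_log_two_mul_sub_div_two hb ha
  have inner := exp_log_two_mul_sub_div_two ha hb
  have h₀₃ := inv_jumpPoint_pow_add_inv (θ := fermiAngle a b) (k := 3) (i := 0) rfl N
  have h₁₂ := inv_jumpPoint_pow_add_inv (θ := fermiAngle a b) (k := 2) (i := 1) rfl N
  have hexp (k : Fin 4) : Real.exp ((∑ j, logChord (fermiAngle a b) j) / 4 -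
      logChord (fermiAngle a b) k) =
        ![√(Real.sin a / Real.sin b), √(Real.sin b / Real.sin a), √(Real.sin b / Real.sin a),
          √(Real.sin a / Real.sin b)] k := by
    simp only [logChord_fermiAngle, Fin.sum_univ_four]
    fin_cases k <;>
      simp only [fermiAngle, Fin.zero_eta, Fin.mk_one, Fin.reduceFinMk, Matrix.cons_val,
        Real.sin_neg, mul_neg, Real.log_neg_eq_log] <;>
      [rw [← outer]; rw [← inner]; rw [← inner]; rw [← outer]] <;>
      ring_nf
  simp only [← Complex.ofReal_exp, hexp]
  simp only [Fin.sum_univ_four, Matrix.cons_val, fermiAmplitude]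
  simp only [fermiAngle, Matrix.cons_val] at h₀₃ h₁₂ ⊢
  push_cast at h₀₃ h₁₂ ⊢
  linear_combination (√(Real.sin a / Real.sin b) : ℂ) * h₀₃ + (√(Real.sin b / Real.sin a) : ℂ) * h₁₂

lemma fourierCoef_eq_coeff_fermiAngle (ha : 0 < a) (hab : a < b) (hb : b < Real.pi) {f : ℝ → ℝ}
    (hper : ∀ t, f (t + 2 * Real.pi) = f t) (heven : ∀ t, f (-t) = f t)
    (h₁ : ∀ t, 0 ≤ t → t < a → f t = 1) (h₂ : ∀ t, a < t → t < b → f t = -1)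
    (h₃ : ∀ t, b < t → t ≤ Real.pi → f t = 1) (n : ℤ) :
    fourierCoef f n = alternatingPattern.coeff (fermiAngle a b) n := by
  have reflect (t : ℝ) : f (2 * Real.pi - t) = f t := by
    rw [← heven t, ← hper (-t), neg_add_eq_sub]
  refine fourierCoef_eq_coeff_alternatingPattern hper (isCyclicallyOrdered_fermiAngle ha hab hb)
    ?_ ?_ ?_ ?_ n <;>
    simp only [fermiAngle, Matrix.cons_val]
  · exact fun t ht => heven t ▸ h₂ _ (by linarith [ht.2]) (by linarith [ht.1])
  · intro t ht
    rcases le_total 0 t with h | h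
    · exact h₁ t h ht.2
    · exact heven t ▸ h₁ _ (by linarith) (by linarith [ht.1])
  · exact fun t ht => h₂ t ht.1 ht.2
  · intro t ht
    rcases le_total t Real.pi with h | h
    · exact h₃ t ht.1 h
    · exact reflect t ▸ h₃ _ (by linarith [ht.2]) (by linarith)

lemma jumpConstant_ne_zero : jumpConstant ≠ 0 :=
  mul_ne_zero (by simp [Complex.cpow_eq_zero_iff]) (Complex.exp_ne_zero _)

theorem tendsto_det_coeff_fermiAngle (ha : 0 < a) (hab : a < b) (hb : b < Real.pi) :
    Tendsto (fun N : ℕ => ((N : ℂ) + 2) *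
        (toeplitz (fun n => alternatingPattern.coeff (fermiAngle a b) (n - 1)) N).det
      - (-1) ^ N * (jumpConstant * fermiAmplitude a b N)) atTop (𝓝 0) := by
  have hlim := alternatingPattern.tendsto_averagedState (by simp [alternatingPattern])
    isCyclicallyOrdered_squareAngle (isCyclicallyOrdered_fermiAngle ha hab hb)
    Nat.cast_add_one_ne_zero jumpConstant_ne_zero
    (tendsto_state_squareAngle tendsto_det_squareAngle)
  have hsin_a := Real.sin_pos_of_pos_of_lt_pi ha (hab.trans hb)
  have hsin_b := Real.sin_pos_of_pos_of_lt_pi (ha.trans hab) hb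
  have shift (n : ℤ) : n + 1 - 2 = n - 1 := by ring
  have winding_eq : alternatingPattern.winding = 2 := rfl
  refine (alternatingPattern.tendsto_add_winding_mul_det_minor_sub (sum_fermiAngle a b)
    jumpConstant_ne_zero hlim).congr fun N => ?_
  simp only [winding_eq, shift, sum_exp_logChord_fermiAngle hsin_a hsin_b, Int.cast_ofNat]

lemma isBigO_fermiAmplitude (a b : ℝ) :
    (fun N => (-1) ^ N * (jumpConstant * fermiAmplitude a b N)) =O[atTop] (1 : ℕ → ℝ) := by
  have hcos (c x : ℝ) : (fun N : ℕ => c * (2 * Real.cos (N * x))) =O[atTop] (1 : ℕ → ℝ) :=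
    .of_bound (|c| * 2) <| .of_forall fun N => by
      simpa [abs_mul, mul_assoc] using
        mul_le_mul_of_nonneg_left (Real.abs_cos_le_one (N * x)) (by positivity : 0 ≤ |c| * 2)
  refine Asymptotics.IsBigO.trans (.of_bound ‖jumpConstant‖ <| .of_forall fun N => ?_)
    ((hcos (√(Real.sin b / Real.sin a)) a).add (hcos (√(Real.sin a / Real.sin b)) b))
  rw [norm_mul, norm_mul, Complex.norm_real, norm_pow, norm_neg, norm_one, one_pow, one_mul,
    fermiAmplitude]

end FermiPoints

end FisherHartwig

/-- Let `0 < θ_1 < θ_2 < π` and let `f` be the even, 2π-periodic function equal to `+1`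
on `[0, θ_1)`, `−1` on `(θ_1, θ_2)`, and `+1` on `(θ_2, π]`.  Then, as `N → ∞`,
`det(f_{j−k−1})_{j,k=0}^{N−1}
  = (−1)^N N^{−1} 2^{1/3} e^{12ζ′(−1)}
    (√(sinθ_2/sinθ_1)·2cos(Nθ_1) + √(sinθ_1/sinθ_2)·2cos(Nθ_2)) + o(N^{−1})`. -/
theorem sigmaX_correlator_two_fermi_points (θ1 θ2 : ℝ)
    (h1 : 0 < θ1) (h12 : θ1 < θ2) (h2 : θ2 < Real.pi)
    (f : ℝ → ℝ) (hper : ∀ t, f (t + 2 * Real.pi) = f t) (heven : ∀ t, f (-t) = f t)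
    (hval1 : ∀ t, 0 ≤ t → t < θ1 → f t = 1)
    (hval2 : ∀ t, θ1 < t → t < θ2 → f t = -1)
    (hval3 : ∀ t, θ2 < t → t ≤ Real.pi → f t = 1) :
    (fun N : ℕ =>
        Matrix.det (Matrix.of fun j k : Fin N => fourierCoef f ((j : ℤ) - (k : ℤ) - 1))
      - (-1 : ℂ) ^ N * (((N : ℝ) ^ (-(1 : ℝ)) : ℝ) : ℂ)
          * ((2 : ℂ) ^ ((1 : ℂ) / 3) * Complex.exp (12 * deriv riemannZeta (-1)))
          * ((Real.sqrt (Real.sin θ2 / Real.sin θ1) * (2 * Real.cos ((N : ℝ) * θ1))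
              + Real.sqrt (Real.sin θ1 / Real.sin θ2) * (2 * Real.cos ((N : ℝ) * θ2)) : ℝ) : ℂ))
      =o[Filter.atTop] (fun N : ℕ => ((N : ℝ) ^ (-(1 : ℝ)) : ℝ)) := by
  open FisherHartwig in
  have hcoef := fourierCoef_eq_coeff_fermiAngle h1 h12 h2 hper heven hval1 hval2 hval3
  have hlim := isLittleO_sub_inv_mul_of_tendsto 2 (tendsto_det_coeff_fermiAngle h1 h12 h2)
    (isBigO_fermiAmplitude θ1 θ2)
  simp only [hcoef, Real.rpow_neg_one]
  refine hlim.congr_left fun N => ?_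
  simp only [toeplitz, jumpConstant, fermiAmplitude, Complex.ofReal_inv, Complex.ofReal_natCast]
  ring

end
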